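/- arXiv:2508.13420 — 2 statements merged into one kernel-verified Lean document; each statement's English description precedes it below -/
import Mathlib

section
/- If x : ℕ → Fin 2 is recurrent but not uniformly recurrent, then liminf_{n→∞} p*_x(n)/(n · ln n) > 0; in particular there exist c > 0 and N such that p*_x(n) ≥ c · n · ln n for all n ≥ N. -/
open Set

abbrev Seq2 := ℕ → Fin 2

def patLang (x : Seq2) (τ : Finset ℕ) : Set ((s : τ) → Fin 2) :=
  {w | ∃ m : ℕ, ∀ s : τ, w s = x (m + (s : ℕ))}

noncomputable def pstar (x : Seq2) (n : ℕ) : ℕ :=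
  sSup {c : ℕ | ∃ τ : Finset ℕ, τ.card = n ∧ (patLang x τ).ncard = c}

def Recurrent (x : Seq2) : Prop :=
  ∀ L : ℕ, ∃ M : ℕ, 1 ≤ M ∧ ∀ i < L, x i = x (M + i)

def Syndetic (S : Set ℕ) : Prop :=
  ∃ g : ℕ, ∀ n : ℕ, ∃ m ∈ S, n ≤ m ∧ m < n + g

def UniformlyRecurrent (x : Seq2) : Prop :=
  ∀ L : ℕ, Syndetic {M : ℕ | 1 ≤ M ∧ ∀ i < L, x i = x (M + i)}


/-! ### Patterns of a set of naturals along a window -/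

open Classical in
/-- Trace of `A - m` on the window `τ`. -/
noncomputable def trc (A : Set ℕ) (τ : Finset ℕ) (m : ℕ) : Finset ℕ :=
  τ.filter (fun s => m + s ∈ A)

theorem mem_trc {A : Set ℕ} {τ : Finset ℕ} {m s : ℕ} :
    s ∈ trc A τ m ↔ s ∈ τ ∧ m + s ∈ A := by
  classical
  simp [trc]

theorem trc_finite (A : Set ℕ) (τ : Finset ℕ) : (range (trc A τ)).Finite := by
  classical
  refine (τ.powerset.finite_toSet).subset ?_
  rintro _ ⟨m, rfl⟩
  simp only [Finset.coe_powerset, Set.mem_preimage, Set.mem_powerset_iff, Finset.coe_subset]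
  intro s hs
  exact (mem_trc.1 hs).1

theorem ncard_range_le_of_factor {ι α β : Type*} (f : ι → α) (g : ι → β)
    (hf : (range f).Finite) (h : ∀ m m', f m = f m' → g m = g m') :
    (range g).ncard ≤ (range f).ncard := by
  classical
  rcases isEmpty_or_nonempty ι with hι | hι
  · simp [Set.range_eq_empty]
  · have : range g = (fun a => g (Function.invFun f a)) '' range f := by
      ext b
      constructor
      · rintro ⟨m, rfl⟩
        refine ⟨f m, ⟨m, rfl⟩, ?_⟩
        exact h _ _ (Function.invFun_eq ⟨m, rfl⟩)
      · rintro ⟨_, ⟨m, rfl⟩, rfl⟩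
        exact ⟨_, rfl⟩
    rw [this]
    exact Set.ncard_image_le hf

/-- Abstract counting. -/
theorem count_pairs {α ι : Type*} [DecidableEq α] (Q : Finset (α × α)) (L : Finset α) (z : α)
    (hz : ∀ w ∈ L, (w, z) ∈ Q) (hs : ∀ w ∈ L, ∃ u, (u, w) ∈ Q)
    (τ : Finset ι) (wt : ι → α) (hinj : ∀ i ∈ τ, ∀ j ∈ τ, wt i = wt j → i = j)
    (hL : ∀ i ∈ τ, wt i ∈ L) (hne : ∀ i ∈ τ, wt i ≠ z)
    (h2 : ∀ i ∈ τ, ∃ u v, u ≠ v ∧ (u, wt i) ∈ Q ∧ (v, wt i) ∈ Q) :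
    2 * L.card + τ.card ≤ Q.card + 1 := by
  classical
  have hs' : ∀ w, ∃ u, w ∈ L → (u, w) ∈ Q := fun w => by
    by_cases hw : w ∈ L
    · obtain ⟨u, hu⟩ := hs w hw
      exact ⟨u, fun _ => hu⟩
    · exact ⟨z, fun h => absurd h hw⟩
  choose σ hσ using hs'
  have h3 : ∀ i, ∃ e, i ∈ τ → e ≠ σ (wt i) ∧ (e, wt i) ∈ Q := fun i => by
    by_cases hi : i ∈ τ
    · obtain ⟨u, v, huv, hu, hv⟩ := h2 i hi
      by_cases hh : u = σ (wt i)
      · exact ⟨v, fun _ => ⟨fun h => huv (hh.trans h.symm), hv⟩⟩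
      · exact ⟨u, fun _ => ⟨hh, hu⟩⟩
    · exact ⟨z, fun h => absurd h hi⟩
  choose e he using h3
  set S1 : Finset (α × α) := L.image (fun w => (w, z)) with hS1
  set S2 : Finset (α × α) := (L.erase z).image (fun w => (σ w, w)) with hS2
  set S3 : Finset (α × α) := τ.image (fun i => (e i, wt i)) with hS3
  have c1 : S1.card = L.card := Finset.card_image_of_injective _ (fun a b h => by simpa using h)
  have c2 : S2.card = (L.erase z).card :=
    Finset.card_image_of_injective _ (fun a b h => (Prod.ext_iff.1 h).2)
  have c3 : S3.card = τ.card :=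
    Finset.card_image_of_injOn (fun a ha b hb h => hinj a ha b hb (Prod.ext_iff.1 h).2)
  have c2' : L.card ≤ (L.erase z).card + 1 := by
    have := Finset.pred_card_le_card_erase (s := L) (a := z)
    omega
  have d12 : Disjoint S1 S2 := by
    rw [Finset.disjoint_left]
    intro p hp hp'
    simp only [hS1, hS2, Finset.mem_image, Finset.mem_erase] at hp hp'
    obtain ⟨w, hw, rfl⟩ := hp
    obtain ⟨w', ⟨hw', _⟩, h⟩ := hp'
    exact hw' (Prod.ext_iff.1 h).2
  have d123 : Disjoint (S1 ∪ S2) S3 := by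
    rw [Finset.disjoint_left]
    intro p hp hp'
    simp only [hS1, hS2, hS3, Finset.mem_union, Finset.mem_image, Finset.mem_erase] at hp hp'
    obtain ⟨i, hi, rfl⟩ := hp'
    rcases hp with ⟨w, hw, h⟩ | ⟨w, hw, h⟩
    · exact hne i hi (Prod.ext_iff.1 h).2.symm
    · have h2 := (Prod.ext_iff.1 h).2
      have h1 := (Prod.ext_iff.1 h).1
      simp only at h1 h2
      subst h2
      exact (he i hi).1 h1.symm
  have hsub : S1 ∪ S2 ∪ S3 ⊆ Q := by
    intro p hp
    simp only [hS1, hS2, hS3, Finset.mem_union, Finset.mem_image, Finset.mem_erase] at hp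
    rcases hp with (⟨w, hw, rfl⟩ | ⟨w, hw, rfl⟩) | ⟨i, hi, rfl⟩
    · exact hz w hw
    · exact hσ w hw.2
    · exact (he i hi).2
  have := Finset.card_le_card hsub
  rw [Finset.card_union_of_disjoint d123, Finset.card_union_of_disjoint d12, c1, c2, c3] at this
  omega

/-- Every factor of length `ℓ` occurs at a bounded position. -/
theorem bounded_occ (A : Set ℕ) (ℓ : ℕ) :
    ∃ B : ℕ, ∀ m, ∃ m' < B, ∀ i < ℓ, (m + i ∈ A ↔ m' + i ∈ A) := by
  classical
  have hfin := trc_finite A (Finset.range ℓ)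
  have : ∃ s : Finset ℕ, (trc A (Finset.range ℓ)) '' (s : Set ℕ) = range (trc A (Finset.range ℓ)) := by
    obtain ⟨s, -, hs⟩ := Set.Finite.exists_finset_coe hfin |>.elim fun t ht =>
      (⟨t.image (Function.invFun (trc A (Finset.range ℓ))), trivial, by
        ext b
        constructor
        · rintro ⟨a, _, rfl⟩
          exact ⟨a, rfl⟩
        · intro hb
          refine ⟨Function.invFun (trc A (Finset.range ℓ)) b, ?_, Function.invFun_eq hb⟩
          have hb' : b ∈ t := by
            rw [← Finset.mem_coe, ht]
            exact hb
          exact Finset.mem_coe.2 (Finset.mem_image_of_mem _ hb')⟩ :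
        ∃ s : Finset ℕ, True ∧
          (trc A (Finset.range ℓ)) '' (s : Set ℕ) = range (trc A (Finset.range ℓ)))
    exact ⟨s, hs⟩
  obtain ⟨s, hs⟩ := this
  refine ⟨s.sup id + 1, fun m => ?_⟩
  have hm : trc A (Finset.range ℓ) m ∈ trc A (Finset.range ℓ) '' (s : Set ℕ) := by
    rw [hs]
    exact ⟨m, rfl⟩
  obtain ⟨m', hm', h⟩ := hm
  refine ⟨m', Nat.lt_succ_of_le (Finset.le_sup (f := id) hm'), fun i hi => ?_⟩
  have := Finset.ext_iff.1 h i
  simp only [mem_trc, Finset.mem_range, hi, true_and] at this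
  exact this.symm

/-- The doubling step. -/
theorem doubling (A : Set ℕ)
    (hrec : ∀ ℓ S : ℕ, ∃ N : ℕ, S ≤ N ∧ ∀ i < ℓ, (i ∈ A ↔ N + i ∈ A))
    (hgap : ∀ V S : ℕ, ∃ g : ℕ, S ≤ g ∧ V ≤ g ∧ g ∈ A ∧ ∀ i, g ≤ i + V → i < g → i ∉ A)
    (τ : Finset ℕ) :
    ∃ τ' : Finset ℕ, τ'.card = 2 * τ.card ∧
      2 * (range (trc A τ)).ncard + τ.card ≤ (range (trc A τ')).ncard + 1 := by
  classical
  obtain ⟨T, hT⟩ : ∃ T, ∀ t ∈ τ, t ≤ T := ⟨τ.sup id, fun t ht => Finset.le_sup (f := id) ht⟩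
  obtain ⟨B, hB⟩ := bounded_occ A (2 * T + 1)
  obtain ⟨q, hq1, hq⟩ := hrec (B + (2 * T + 1)) 1
  obtain ⟨h0, hh0, hqh0, hh0A, hh0g⟩ := hgap q (B + T + 1 + q)
  have hh0q : h0 - q ∉ A := hh0g _ (by omega) (by omega)
  obtain ⟨g, hg, hgV, hgA, hgg⟩ := hgap (h0 + T + 1) (h0 + T + 1)
  obtain ⟨m', hm'B, hm'⟩ := hB (g - T)
  obtain ⟨N, hN, hNr⟩ := hrec (B + q + (2 * T + 1)) (g + T)
  -- occurrences of the factor around `g`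
  have occ1 : ∀ i < 2 * T + 1, (N + m' + i ∈ A ↔ g - T + i ∈ A) := by
    intro i hi
    rw [hm' i hi, hNr (m' + i) (by omega), Nat.add_assoc]
  have occ2 : ∀ i < 2 * T + 1, (N + m' + q + i ∈ A ↔ g - T + i ∈ A) := by
    intro i hi
    rw [hm' i hi, hq (m' + i) (by omega), hNr (q + (m' + i)) (by omega)]
    rw [show N + (q + (m' + i)) = N + m' + q + i by omega]
  -- choose the shift
  obtain ⟨M, c, hM1, hM2, hMT, hcM, hocc, hdiff⟩ : ∃ M c : ℕ, M + (B + T + 1) ≤ g ∧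
      g ≤ M + h0 ∧ T < M ∧ M + T ≤ c ∧
      (∀ i < 2 * T + 1, (c - T + i ∈ A ↔ g - T + i ∈ A)) ∧
      ¬ (g - M ∈ A ↔ c - M ∈ A) := by
    by_cases hv : N + m' + T - g + h0 ∈ A
    · refine ⟨g - h0 + q, N + m' + q + T, by omega, by omega, by omega, by omega, ?_, ?_⟩
      · intro i hi
        rw [← occ2 i hi]
        rw [show N + m' + q + T - T + i = N + m' + q + i by omega]
      · rw [show g - (g - h0 + q) = h0 - q by omega,
          show N + m' + q + T - (g - h0 + q) = N + m' + T - g + h0 by omega]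
        tauto
    · refine ⟨g - h0, N + m' + T, by omega, by omega, by omega, by omega, ?_, ?_⟩
      · intro i hi
        rw [← occ1 i hi]
        rw [show N + m' + T - T + i = N + m' + i by omega]
      · rw [show g - (g - h0) = h0 by omega,
          show N + m' + T - (g - h0) = N + m' + T - g + h0 by omega]
        tauto
  refine ⟨τ ∪ τ.image (fun t => M + t), ?_, ?_⟩
  · rw [Finset.card_union_of_disjoint, Finset.card_image_of_injective]
    · omega
    · intro a b h
      simpa using h
    · rw [Finset.disjoint_left]
      intro a ha ha'
      obtain ⟨b, hb, rfl⟩ := Finset.mem_image.1 ha'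
      have := hT _ ha
      omega
  · set P : ℕ → Finset ℕ × Finset ℕ := fun m => (trc A τ m, trc A τ (m + M)) with hP
    have hfac : (range P).ncard ≤ (range (trc A (τ ∪ τ.image (fun t => M + t)))).ncard := by
      apply ncard_range_le_of_factor _ _ (trc_finite _ _)
      intro m1 m2 h
      have h' := Finset.ext_iff.1 h
      simp only [hP, Prod.mk.injEq]
      constructor
      · ext s
        have := h' s
        simp only [mem_trc, Finset.mem_union] at this ⊢
        tauto
      · ext s
        have := h' (M + s)
        simp only [mem_trc, Finset.mem_union, Finset.mem_image, ← Nat.add_assoc] at this ⊢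
        constructor
        · rintro ⟨a, b⟩
          exact ⟨a, (this.1 ⟨Or.inr ⟨s, a, rfl⟩, b⟩).2⟩
        · rintro ⟨a, b⟩
          exact ⟨a, (this.2 ⟨Or.inr ⟨s, a, rfl⟩, b⟩).2⟩
    have hPfin : (range P).Finite := by
      refine ((trc_finite A τ).prod (trc_finite A τ)).subset ?_
      rintro _ ⟨m, rfl⟩
      exact ⟨⟨m, rfl⟩, ⟨m + M, rfl⟩⟩
    have key := count_pairs hPfin.toFinset (trc_finite A τ).toFinset ∅ ?_ ?_ τ
      (fun t => trc A τ (g - t)) ?_ ?_ ?_ ?_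
    · rw [← Set.ncard_eq_toFinset_card _ hPfin, ← Set.ncard_eq_toFinset_card _ (trc_finite A τ)]
        at key
      omega
    · intro w hw
      rw [Set.Finite.mem_toFinset] at hw ⊢
      obtain ⟨m, rfl⟩ := hw
      obtain ⟨m1, hm1, hmm⟩ := hB m
      refine ⟨m1, ?_⟩
      simp only [hP, Prod.mk.injEq]
      constructor
      · ext s
        simp only [mem_trc]
        constructor
        · rintro ⟨a, b⟩
          have := hT s a
          exact ⟨a, (hmm s (by omega)).2 b⟩
        · rintro ⟨a, b⟩
          have := hT s a
          exact ⟨a, (hmm s (by omega)).1 b⟩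
      · ext s
        simp only [mem_trc, Finset.notMem_empty, iff_false, not_and]
        intro hs
        have := hT s hs
        exact hgg _ (by omega) (by omega)
    · intro w hw
      rw [Set.Finite.mem_toFinset] at hw
      obtain ⟨m, rfl⟩ := hw
      obtain ⟨K, hK, hKr⟩ := hrec (m + T + 1) M
      refine ⟨trc A τ (K + m - M), ?_⟩
      rw [Set.Finite.mem_toFinset]
      refine ⟨K + m - M, ?_⟩
      simp only [hP, Prod.mk.injEq, true_and]
      rw [show K + m - M + M = K + m by omega]
      ext s
      simp only [mem_trc]
      refine and_congr_right fun hs => ?_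
      have := hT s hs
      rw [hKr (m + s) (by omega), Nat.add_assoc]
    · have aux : ∀ i ∈ τ, ∀ j ∈ τ, trc A τ (g - i) = trc A τ (g - j) → ¬ i < j := by
        intro i hi j hj h hij
        have h1 := (Finset.ext_iff.1 h i).1 (mem_trc.2 ⟨hi, by
          have := hT i hi
          rw [show g - i + i = g by omega]
          exact hgA⟩)
        have := hT j hj
        exact hgg _ (by omega) (by omega) (mem_trc.1 h1).2
      intro i hi j hj h
      have h1 := aux i hi j hj h
      have h2 := aux j hj i hi h.symm
      omega
    · intro i hi
      rw [Set.Finite.mem_toFinset]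
      exact ⟨_, rfl⟩
    · intro i hi h
      have : i ∈ trc A τ (g - i) := mem_trc.2 ⟨hi, by
          have := hT i hi
          rw [show g - i + i = g by omega]
          exact hgA⟩
      rw [h] at this
      simp at this
    · intro i hi
      have hiT := hT i hi
      refine ⟨trc A τ (g - i - M), trc A τ (c - i - M), ?_, ?_, ?_⟩
      · intro h
        have := Finset.ext_iff.1 h i
        simp only [mem_trc, hi, true_and] at this
        rw [show g - i - M + i = g - M by omega, show c - i - M + i = c - M by omega] at this
        exact hdiff this
      · rw [Set.Finite.mem_toFinset]
        refine ⟨g - i - M, ?_⟩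
        simp only [hP, Prod.mk.injEq, true_and]
        rw [show g - i - M + M = g - i by omega]
      · rw [Set.Finite.mem_toFinset]
        refine ⟨c - i - M, ?_⟩
        simp only [hP, Prod.mk.injEq, true_and]
        rw [show c - i - M + M = c - i by omega]
        ext s
        simp only [mem_trc]
        refine and_congr_right fun hs => ?_
        have hsT := hT s hs
        have := hocc (T + s - i) (by omega)
        rw [show c - T + (T + s - i) = c - i + s by omega,
          show g - T + (T + s - i) = g - i + s by omega] at this
        exact this

theorem exists_windows (A : Set ℕ)
    (hrec : ∀ ℓ S : ℕ, ∃ N : ℕ, S ≤ N ∧ ∀ i < ℓ, (i ∈ A ↔ N + i ∈ A))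
    (hgap : ∀ V S : ℕ, ∃ g : ℕ, S ≤ g ∧ V ≤ g ∧ g ∈ A ∧ ∀ i, g ≤ i + V → i < g → i ∉ A)
    (k : ℕ) :
    ∃ τ : Finset ℕ, τ.card = 2 ^ k ∧ k * 2 ^ k + 2 ≤ 2 * (range (trc A τ)).ncard := by
  induction k with
  | zero =>
    refine ⟨{0}, by simp, ?_⟩
    have : 0 < (range (trc A {0})).ncard :=
      (Set.ncard_pos (trc_finite A {0})).2 ⟨_, 0, rfl⟩
    omega
  | succ k ih =>
    obtain ⟨τ, hc, hF⟩ := ih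
    obtain ⟨τ', hc', hF'⟩ := doubling A hrec hgap τ
    refine ⟨τ', by rw [hc', hc, pow_succ]; ring, ?_⟩
    rw [hc] at hF'
    rw [pow_succ]
    nlinarith

theorem le_pstar (x : Seq2) (τ : Finset ℕ) (n : ℕ) (h : τ.card ≤ n) :
    (patLang x τ).ncard ≤ pstar x n := by
  classical
  obtain ⟨τ', hsub, hcard⟩ := Infinite.exists_superset_card_eq τ n h
  have h1 : (patLang x τ).ncard ≤ (patLang x τ').ncard := by
    have e : ∀ σ : Finset ℕ, patLang x σ = range (fun m (s : σ) => x (m + (s : ℕ))) := by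
      intro σ
      ext w
      constructor
      · rintro ⟨m, hm⟩
        exact ⟨m, (funext hm).symm⟩
      · rintro ⟨m, rfl⟩
        exact ⟨m, fun s => rfl⟩
    rw [e, e]
    apply ncard_range_le_of_factor _ _ (Set.toFinite _)
    intro m m' hmm
    funext s
    exact congrFun hmm ⟨s, hsub s.2⟩
  refine h1.trans (le_csSup ⟨2 ^ n, ?_⟩ ⟨τ', hcard, rfl⟩)
  rintro _ ⟨σ, hσ, rfl⟩
  refine (Set.ncard_le_card _).trans ?_
  simp [hσ]

/-- if `x` is recurrent but not uniformly recurrent, then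
`liminf pstar x n / (n log n) > 0`, i.e. there are `c > 0` and `N` with
`pstar x n ≥ c * n * log n` for all `n ≥ N`. -/
theorem stmt2 (x : Seq2) (hrec : Recurrent x) (hnur : ¬ UniformlyRecurrent x) :
    ∃ c : ℝ, 0 < c ∧ ∃ N : ℕ, ∀ n : ℕ, N ≤ n →
      c * (n : ℝ) * Real.log n ≤ (pstar x n : ℝ) := by
  classical
  unfold UniformlyRecurrent at hnur
  push Not at hnur
  obtain ⟨L, hL⟩ := hnur
  have hgaps : ∀ g : ℕ, ∃ n : ℕ, ∀ m, 1 ≤ m → n ≤ m → m < n + g → ¬ ∀ i < L, x i = x (m + i) := by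
    intro g
    by_contra hcon
    push Not at hcon
    apply hL
    refine ⟨g, fun n => ?_⟩
    obtain ⟨m, h1, h2, h3, h4⟩ := hcon n
    exact ⟨m, ⟨h1, h4⟩, h2, h3⟩
  set A : Set ℕ := {m | ∀ i < L, x i = x (m + i)} with hA
  have h0A : 0 ∈ A := fun i _ => by simp
  -- recurrence of A with arbitrarily large return times
  have hrecA : ∀ ℓ S : ℕ, ∃ N : ℕ, S ≤ N ∧ ∀ i < ℓ, x i = x (N + i) := by
    intro ℓ S
    induction S with
    | zero =>
      obtain ⟨M, _, h⟩ := hrec ℓ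
      exact ⟨M, Nat.zero_le _, h⟩
    | succ S ih =>
      obtain ⟨N, hN, h⟩ := ih
      obtain ⟨M, hM, h'⟩ := hrec (N + ℓ)
      refine ⟨M + N, by omega, fun i hi => ?_⟩
      rw [h i hi, h' (N + i) (by omega), Nat.add_assoc]
  have hrec' : ∀ ℓ S : ℕ, ∃ N : ℕ, S ≤ N ∧ ∀ i < ℓ, (i ∈ A ↔ N + i ∈ A) := by
    intro ℓ S
    obtain ⟨N, hN, h⟩ := hrecA (ℓ + L) S
    refine ⟨N, hN, fun i hi => ?_⟩
    simp only [hA, Set.mem_ofPred_eq]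
    refine forall₂_congr fun j hj => ?_
    rw [h (i + j) (by omega), Nat.add_assoc]
  have hgap : ∀ V S : ℕ, ∃ g : ℕ, S ≤ g ∧ V ≤ g ∧ g ∈ A ∧
      ∀ i, g ≤ i + V → i < g → i ∉ A := by
    intro V S
    obtain ⟨n, hn⟩ := hgaps (S + V + 1)
    have hex : ∃ g, n + (S + V + 1) ≤ g ∧ g ∈ A := by
      obtain ⟨N, hN, h⟩ := hrec' 1 (n + (S + V + 1))
      exact ⟨N, hN, by simpa using (h 0 (by omega)).1 h0A⟩
    obtain ⟨h1, h2⟩ := Nat.find_spec hex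
    refine ⟨Nat.find hex, by omega, by omega, h2, fun i hi hlt hiA => ?_⟩
    by_cases hc : n + (S + V + 1) ≤ i
    · exact Nat.find_min hex hlt ⟨hc, hiA⟩
    · exact hn i (by omega) (by omega) (by omega) hiA
  have hLpos : 0 < L := by
    rcases Nat.eq_zero_or_pos L with h | h
    · exfalso
      obtain ⟨n, hn⟩ := hgaps 2
      exact hn (n + 1) (by omega) (by omega) (by omega) (fun i hi => by omega)
    · exact h
  -- lower bound along powers of two
  have hpow : ∀ k n : ℕ, L * 2 ^ k ≤ n → k * 2 ^ k ≤ 2 * pstar x n := by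
    intro k n hn
    obtain ⟨τ, hc, hF⟩ := exists_windows A hrec' hgap k
    set σ : Finset ℕ := (τ ×ˢ Finset.range L).image (fun p => p.1 + p.2) with hσ
    have hσc : σ.card ≤ n := by
      refine Finset.card_image_le.trans ?_
      rw [Finset.card_product, hc, Finset.card_range]
      linarith
    have h1 := le_pstar x σ n hσc
    have h2 : (range (trc A τ)).ncard ≤ (patLang x σ).ncard := by
      have e : patLang x σ = range (fun m (s : σ) => x (m + (s : ℕ))) := by
        ext w
        constructor
        · rintro ⟨m, hm⟩
          exact ⟨m, (funext hm).symm⟩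
        · rintro ⟨m, rfl⟩
          exact ⟨m, fun s => rfl⟩
      rw [e]
      apply ncard_range_le_of_factor _ _ (Set.toFinite _)
      intro m m' hmm
      ext s
      simp only [mem_trc]
      refine and_congr_right fun hs => ?_
      simp only [hA, Set.mem_ofPred_eq]
      refine forall₂_congr fun j hj => ?_
      have hmem : s + j ∈ σ :=
        Finset.mem_image.2 ⟨(s, j), Finset.mem_product.2 ⟨hs, Finset.mem_range.2 hj⟩, rfl⟩
      have := congrFun hmm ⟨s + j, hmem⟩
      simp only [← Nat.add_assoc] at this
      rw [this]
    omega
  refine ⟨1 / (8 * L), by positivity, L * 2 ^ (L + 1), fun n hn => ?_⟩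
  set k := Nat.log 2 (n / L) with hk
  have hLn : 2 ^ (L + 1) ≤ n / L := (Nat.le_div_iff_mul_le hLpos).2 (by linarith)
  have hnL0 : n / L ≠ 0 := by
    have : 0 < 2 ^ (L + 1) := by positivity
    omega
  have hkL : L + 1 ≤ k := Nat.le_log_of_pow_le (by norm_num) hLn
  have hk1 : 2 ^ k ≤ n / L := Nat.pow_log_le_self 2 hnL0
  have hk2 : n / L < 2 ^ (k + 1) := Nat.lt_pow_succ_log_self (by norm_num) _
  have hk1' : L * 2 ^ k ≤ n := by
    have := (Nat.le_div_iff_mul_le hLpos).1 hk1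
    linarith
  have hk2' : n < L * 2 ^ (k + 1) := by
    have := (Nat.div_lt_iff_lt_mul hLpos).1 hk2
    linarith
  have hmain := hpow k n hk1'
  have hmainR : (k : ℝ) * 2 ^ k ≤ 2 * (pstar x n : ℝ) := by exact_mod_cast hmain
  have hnpos : 0 < n := lt_of_lt_of_le (by positivity) hn
  have hnR : (0 : ℝ) < n := by exact_mod_cast hnpos
  have hLR : (0 : ℝ) < L := by exact_mod_cast hLpos
  have hnub : (n : ℝ) ≤ L * 2 ^ (k + 1) := by exact_mod_cast hk2'.le
  have hkLR : (L : ℝ) + 1 ≤ k := by exact_mod_cast hkL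
  have hlog : Real.log n ≤ 2 * k := by
    have h1 : Real.log n ≤ Real.log (L * 2 ^ (k + 1)) := Real.log_le_log hnR hnub
    rw [Real.log_mul hLR.ne' (by positivity), Real.log_pow] at h1
    have h2 : Real.log L ≤ L - 1 := Real.log_le_sub_one_of_pos hLR
    have h3 : Real.log 2 ≤ 1 := by
      have := Real.log_le_sub_one_of_pos (show (0 : ℝ) < 2 by norm_num)
      linarith
    have h4 : ((k + 1 : ℕ) : ℝ) * Real.log 2 ≤ (k + 1 : ℕ) * 1 :=
      mul_le_mul_of_nonneg_left h3 (by positivity)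
    push_cast at h1 h4
    linarith
  have hprod : (n : ℝ) * Real.log n ≤ (L * 2 ^ (k + 1)) * (2 * k) :=
    mul_le_mul hnub hlog (Real.log_natCast_nonneg n) (by positivity)
  have hfin : (n : ℝ) * Real.log n ≤ 8 * L * (pstar x n : ℝ) := by
    calc (n : ℝ) * Real.log n ≤ (L * 2 ^ (k + 1)) * (2 * k) := hprod
      _ = 4 * L * (k * 2 ^ k) := by ring
      _ ≤ 4 * L * (2 * (pstar x n : ℝ)) := mul_le_mul_of_nonneg_left hmainR (by positivity)
      _ = 8 * L * (pstar x n : ℝ) := by ring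
  rw [mul_assoc, div_mul_eq_mul_div, one_mul, div_le_iff₀ (by positivity)]
  linarith
end

section
/- Suppose x : ℕ → Fin 2 is recurrent, not periodic, and has non-superlinear maximal pattern complexity, i.e. liminf_{n→∞} p*_x(n)/n < ∞. Then x is uniformly recurrent and at least one of the following holds: (1) there exist K ≥ 1 and an irrational β such that for every 0 ≤ j < K the sequence x⁽ʲ⁾ defined by x⁽ʲ⁾(n) = x(j + Kn) is either constant or a circle rotation interval coding sequence with rotation number β; or (2) there exist m ≥ 1 and an m-hole Toeplitz sequence z such that x lies in the orbit closure of z. -/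
open Set

def Periodic (x : Seq2) : Prop := ∃ t : ℕ, 1 ≤ t ∧ ∀ n : ℕ, x (n + t) = x n

def orbitClosure (x : Seq2) : Set Seq2 :=
  closure {y : Seq2 | ∃ m : ℕ, y = fun n => x (m + n)}

abbrev T1 := AddCircle (1 : ℝ)

def IsArc (I : Set T1) : Prop :=
  ∃ a b : ℝ, b - a ≤ 1 ∧
    (I = (fun r : ℝ => (r : T1)) '' Set.Icc a b ∨
     I = (fun r : ℝ => (r : T1)) '' Set.Ico a b ∨
     I = (fun r : ℝ => (r : T1)) '' Set.Ioc a b ∨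
     I = (fun r : ℝ => (r : T1)) '' Set.Ioo a b)

/-- A circle rotation interval coding sequence with (irrational) rotation number `β`:
a coding of the orbit of `0` under rotation by `β` by a partition of the circle into
finitely many intervals, with coding letters not all equal. -/
def CircleRotationCoding (β : ℝ) (y : Seq2) : Prop :=
  ∃ (k : ℕ), 1 ≤ k ∧ ∃ (I : Fin k → Set T1) (a : Fin k → Fin 2),
    (∀ i, IsArc (I i)) ∧
    (Pairwise fun i j => Disjoint (I i) (I j)) ∧
    (⋃ i, I i) = Set.univ ∧
    (¬ ∀ i j, a i = a j) ∧
    (∀ (n : ℕ) (i : Fin k), (((n : ℝ) * β : ℝ) : T1) ∈ I i → y n = a i)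

/-- Toeplitz sequence with period structure `nk` (indexed from 0). -/
def ToeplitzWith (nk : ℕ → ℕ) (z : Seq2) : Prop :=
  (∀ k, 1 ≤ nk k ∧ nk k ∣ nk (k + 1) ∧ nk k < nk (k + 1)) ∧
  (∀ n : ℕ, ∃ k : ℕ, ∀ m : ℕ, m % nk k = n % nk k → z m = z n)

/-- `m`-hole Toeplitz sequence: for every `k`, exactly `m` residue classes mod `nk k`
are nonconstant. -/
def MHoleToeplitz (m : ℕ) (z : Seq2) : Prop :=
  ∃ nk : ℕ → ℕ, ToeplitzWith nk z ∧
    ∀ k : ℕ,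
      {j : ℕ | j < nk k ∧ ∃ m₁ m₂ : ℕ, m₁ % nk k = j ∧ m₂ % nk k = j ∧ z m₁ ≠ z m₂}.ncard = m

section filePA
open Set

/-- two positions see the same pattern through the window `S`. -/
def Ag (x : Seq2) (S : Finset ℕ) (m k : ℕ) : Prop := ∀ s ∈ S, x (m + s) = x (k + s)

/-- `F` consists of positions with pairwise different `S`-patterns. -/
def SepW (x : Seq2) (S F : Finset ℕ) : Prop := ∀ m ∈ F, ∀ k ∈ F, m ≠ k → ¬ Ag x S m k

def ExtW (C : ℕ) (x : Seq2) : Prop :=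
  ∀ S0 : Finset ℕ, ∃ S : Finset ℕ, S0 ⊆ S ∧ ∀ (u : ℕ) (F : Finset ℕ),
    (∀ m ∈ F, ∃ m', Ag x S m m' ∧ x (m + u) ≠ x (m' + u)) → SepW x S F → F.card ≤ C

def Nsl (x : Seq2) : Prop :=
  ∃ C : ℕ, ∀ N : ℕ, ∃ n, N ≤ n ∧ ∀ S F : Finset ℕ, S.card ≤ n → SepW x S F → F.card ≤ C * n

theorem Ag.symm' {x : Seq2} {S : Finset ℕ} {m k : ℕ} (h : Ag x S m k) : Ag x S k m :=
  fun s hs => (h s hs).symm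

theorem Ag.trans' {x : Seq2} {S : Finset ℕ} {m k l : ℕ} (h : Ag x S m k) (h' : Ag x S k l) :
    Ag x S m l := fun s hs => (h s hs).trans (h' s hs)

theorem Ag.mono' {x : Seq2} {S S' : Finset ℕ} {m k : ℕ} (hS : S' ⊆ S) (h : Ag x S m k) :
    Ag x S' m k := fun s hs => h s (hS hs)

theorem Ag.refl' (x : Seq2) (S : Finset ℕ) (m : ℕ) : Ag x S m m := fun _ _ => rfl

theorem sep_card_le (x : Seq2) (S F : Finset ℕ) (h : SepW x S F) :
    F.card ≤ (patLang x S).ncard := by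
  classical
  let f : ℕ → ((s : S) → Fin 2) := fun m s => x (m + (s : ℕ))
  have hinj : Set.InjOn f (F : Set ℕ) := by
    intro m hm k hk hmk
    by_contra hne
    exact h m hm k hk hne (fun s hs => congrFun hmk ⟨s, hs⟩)
  calc F.card = (F : Set ℕ).ncard := (Set.ncard_coe_finset F).symm
    _ = (f '' (F : Set ℕ)).ncard := (Set.InjOn.ncard_image hinj).symm
    _ ≤ (patLang x S).ncard := by
      apply Set.ncard_le_ncard _ (Set.toFinite _)
      rintro _ ⟨m, _, rfl⟩
      exact ⟨m, fun s => rfl⟩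

theorem nsl_of_pstar (x : Seq2)
    (hnsl : ∃ C : ℝ, ∀ N : ℕ, ∃ n : ℕ, N ≤ n ∧ (pstar x n : ℝ) ≤ C * n) : Nsl x := by
  classical
  obtain ⟨C, hC⟩ := hnsl
  refine ⟨⌈C⌉₊, fun N => ?_⟩
  obtain ⟨n, hn, hp⟩ := hC N
  refine ⟨n, hn, fun S F hS hF => ?_⟩
  obtain ⟨S', hSS', hS'⟩ := Infinite.exists_superset_card_eq S n hS
  have hF' : SepW x S' F := fun m hm k hk hne hag => hF m hm k hk hne (hag.mono' hSS')
  have h1 := sep_card_le x S' F hF'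
  have h2 : (patLang x S').ncard ≤ pstar x n := by
    apply le_csSup
    · refine ⟨2 ^ n, ?_⟩
      rintro c ⟨τ, hτ, rfl⟩
      calc (patLang x τ).ncard ≤ (Set.univ : Set ((s : τ) → Fin 2)).ncard :=
            Set.ncard_le_ncard (Set.subset_univ _) (Set.toFinite _)
        _ = 2 ^ n := by
          rw [Set.ncard_univ, Nat.card_eq_fintype_card]
          simp [hτ]
    · exact ⟨S', hS', rfl⟩
  have h3 : (F.card : ℝ) ≤ (⌈C⌉₊ : ℝ) * n := by
    calc (F.card : ℝ) ≤ (pstar x n : ℝ) := by exact_mod_cast h1.trans h2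
      _ ≤ C * n := hp
      _ ≤ _ := by gcongr; exact Nat.le_ceil C
  exact_mod_cast h3

theorem ext_of_nsl (x : Seq2) (h : Nsl x) : ∃ C, ExtW C x := by
  classical
  obtain ⟨C, hC⟩ := h
  refine ⟨C, ?_⟩
  by_contra hcon
  unfold ExtW at hcon
  push Not at hcon
  obtain ⟨S0, hS0⟩ := hcon
  have key : ∀ k : ℕ, ∃ S F : Finset ℕ, S0 ⊆ S ∧ S.card ≤ S0.card + k ∧ SepW x S F ∧
      (C + 1) * k ≤ F.card := by
    intro k
    induction k with
    | zero => exact ⟨S0, ∅, subset_rfl, by simp, by simp [SepW], by simp⟩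
    | succ k ih =>
      obtain ⟨S, F, h1, h2, h3, h4⟩ := ih
      obtain ⟨u, Q, hQ, hQs, hQc⟩ := hS0 S h1
      -- choose a new representative in each special cell
      have hch : ∀ m, ∃ q, m ∈ Q → (Ag x S m q ∧ ∀ r ∈ F, Ag x S r m → x (r + u) ≠ x (q + u)) := by
        intro m
        by_cases hm : m ∈ Q
        · obtain ⟨m', hm', hne⟩ := hQ m hm
          by_cases hr : ∃ r ∈ F, Ag x S r m
          · obtain ⟨r, hr, hrm⟩ := hr
            have huniq : ∀ r' ∈ F, Ag x S r' m → r' = r := by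
              intro r' hr' hr'm
              by_contra hne
              exact h3 r' hr' r hr hne (hr'm.trans' hrm.symm')
            by_cases hx : x (r + u) = x (m + u)
            · refine ⟨m', fun _ => ⟨hm', fun r' hr' hr'm => ?_⟩⟩
              rw [huniq r' hr' hr'm, hx]; exact hne
            · refine ⟨m, fun _ => ⟨Ag.refl' _ _ _, fun r' hr' hr'm => ?_⟩⟩
              rw [huniq r' hr' hr'm]; exact hx
          · refine ⟨m, fun _ => ⟨Ag.refl' _ _ _, fun r' hr' hr'm => ?_⟩⟩
            exact absurd ⟨r', hr', hr'm⟩ hr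
        · exact ⟨m, fun h => absurd h hm⟩
      choose q hq using hch
      have hSin : S ⊆ insert u S := Finset.subset_insert _ _
      have hqF : ∀ m ∈ Q, ∀ r ∈ F, ¬ Ag x (insert u S) r (q m) := by
        intro m hm r hr hag
        obtain ⟨ha, hb⟩ := hq m hm
        exact hb r hr ((hag.mono' hSin).trans' ha.symm') (hag u (Finset.mem_insert_self _ _))
      have hqq : ∀ m ∈ Q, ∀ k ∈ Q, m ≠ k → ¬ Ag x (insert u S) (q m) (q k) := by
        intro m hm k hk hne hag
        exact hQs m hm k hk hne (((hq m hm).1.trans' (hag.mono' hSin)).trans' (hq k hk).1.symm')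
      have hinj : Set.InjOn q (Q : Set ℕ) := by
        intro m hm k hk hmk
        by_contra hne
        exact hqq m hm k hk hne (by rw [hmk]; exact Ag.refl' _ _ _)
      refine ⟨insert u S, F ∪ Q.image q, h1.trans hSin, ?_, ?_, ?_⟩
      · exact (Finset.card_insert_le _ _).trans (by omega)
      · intro a ha b hb hab hag
        rw [Finset.mem_union, Finset.mem_image] at ha hb
        rcases ha with ha | ⟨m, hm, rfl⟩ <;> rcases hb with hb | ⟨k, hk, rfl⟩
        · exact h3 a ha b hb hab (hag.mono' hSin)
        · exact hqF k hk a ha hag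
        · exact hqF m hm b hb hag.symm'
        · exact hqq m hm k hk (fun h => hab (by rw [h])) hag
      · rw [Finset.card_union_of_disjoint, Finset.card_image_of_injOn hinj]
        · nlinarith
        · rw [Finset.disjoint_left]
          intro a ha hb
          rw [Finset.mem_image] at hb
          obtain ⟨m, hm, rfl⟩ := hb
          exact hqF m hm _ ha (Ag.refl' _ _ _)
  obtain ⟨n, hn, hb⟩ := hC (S0.card + C * S0.card + 1)
  obtain ⟨S, F, h1, h2, h3, h4⟩ := key (n - S0.card)
  have hle : S0.card ≤ n := by omega
  have h5 := hb S F (by omega) h3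
  obtain ⟨k, rfl⟩ := Nat.exists_eq_add_of_le hle
  simp only [Nat.add_sub_cancel_left] at h4
  nlinarith

end filePA

section filePB
open Set

theorem rec_far {x : Seq2} (h : Recurrent x) (L N : ℕ) :
    ∃ M, N ≤ M ∧ ∀ i < L, x i = x (M + i) := by
  induction N with
  | zero => obtain ⟨M, _, h⟩ := h L; exact ⟨M, by omega, h⟩
  | succ N ih =>
    obtain ⟨M1, h1, h2⟩ := ih
    obtain ⟨M, h3, h4⟩ := h (L + M1)
    refine ⟨M + M1, by omega, fun i hi => ?_⟩
    rw [h2 i hi, h4 (M1 + i) (by omega)]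
    congr 1; omega

theorem fin2_ne_one {a : Fin 2} (h : a ≠ 1) : a = 0 := by omega

theorem sep_runs {b : Seq2} {S : Finset ℕ} {A e : ℕ} (hS : Finset.range (A + 1) ⊆ S) (heA : A ≤ e)
    (h0 : ∀ i, 1 ≤ i → i ≤ A → b (e - i) = 0) (h1 : b e = 1) (G : Finset ℕ)
    (hG : ∀ a ∈ G, a < A) :
    SepW b S (G.image fun a => e - A + a) ∧ (G.image fun a => e - A + a).card = G.card := by
  classical
  constructor
  · have key : ∀ a a', a < a' → a' < A → ¬ Ag b S (e - A + a) (e - A + a') := by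
      intro a a' haa ha' hag
      have := hag (A - a') (hS (by simp))
      have e1 : e - A + a + (A - a') = e - (a' - a) := by omega
      have e2 : e - A + a' + (A - a') = e := by omega
      rw [e1, e2, h1, h0 _ (by omega) (by omega)] at this
      exact absurd this (by decide)
    intro m hm k hk hne hag
    simp only [Finset.mem_image] at hm hk
    obtain ⟨a, ha, rfl⟩ := hm
    obtain ⟨a', ha', rfl⟩ := hk
    rcases lt_trichotomy a a' with h | h | h
    · exact key a a' h (hG _ ha') hag
    · subst h; exact hne rfl
    · exact key a' a h (hG _ ha) hag.symm'
  · apply Finset.card_image_of_injective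
    intro a a' h
    simpa using h

theorem no_gaps {b : Seq2} {C : ℕ} (hrec : Recurrent b) (h0 : b 0 = 1)
    (hgap : ∀ g, ∃ n, ∀ m, n ≤ m → m < n + g → b m = 0) (hext : ExtW C b) : False := by
  classical
  have hone : ∀ N, ∃ m, N ≤ m ∧ b m = 1 := by
    intro N
    obtain ⟨M, h1, h2⟩ := rec_far hrec 1 N
    exact ⟨M, h1, by have := h2 0 (by omega); rw [h0] at this; simpa using this.symm⟩
  have hrun : ∀ N, ∃ e, N ≤ e ∧ (∀ i, 1 ≤ i → i ≤ N → b (e - i) = 0) ∧ b e = 1 := by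
    intro N
    obtain ⟨n, hn⟩ := hgap N
    have hex : ∃ m, n + N ≤ m ∧ b m = 1 := hone _
    refine ⟨Nat.find hex, ?_, ?_, (Nat.find_spec hex).2⟩
    · have := (Nat.find_spec hex).1; omega
    · intro i hi hiN
      have h1 := (Nat.find_spec hex).1
      by_cases hlt : Nat.find hex - i < n + N
      · exact hn _ (by omega) hlt
      · apply fin2_ne_one
        intro hb
        exact Nat.find_min hex (m := Nat.find hex - i) (by omega) ⟨by omega, hb⟩
  by_cases hII : ∃ A, ∀ N, ∃ e, N ≤ e ∧ (∀ i, 1 ≤ i → i ≤ N → b (e - i) = 0) ∧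
      ∃ G : Finset ℕ, C + 1 ≤ G.card ∧ ∀ a ∈ G, a < A ∧ b (e + a) = 1
  · obtain ⟨A, hA⟩ := hII
    obtain ⟨S, hSs, hS⟩ := hext (Finset.range (A + 1))
    obtain ⟨o', ho1, ho2, ho3⟩ := hrun A
    obtain ⟨M, hM1, hM2⟩ := rec_far hrec (o' + S.sup id + 1) (A + 1)
    obtain ⟨s, hs1, hs2, G, hGc, hG⟩ := hA (o' + M + M + A + 1)
    have hr := sep_runs hSs ho1 ho2 ho3 G (fun a ha => (hG a ha).1)
    have := hS (s - (o' + M) + A) _ ?_ hr.1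
    · rw [hr.2] at this; omega
    intro m hm
    simp only [Finset.mem_image] at hm
    obtain ⟨a, ha, rfl⟩ := hm
    obtain ⟨ha1, ha2⟩ := hG a ha
    refine ⟨M + (o' - A + a), ?_, ?_⟩
    · intro t ht
      have : t ≤ S.sup id := Finset.le_sup (f := id) ht
      rw [hM2 _ (by omega)]
      congr 1; omega
    · have e1 : o' - A + a + (s - (o' + M) + A) = s - (M - a) := by omega
      have e2 : M + (o' - A + a) + (s - (o' + M) + A) = s + a := by omega
      rw [e1, e2, ha2, hs2 _ (by omega) (by omega)]
      decide
  · push Not at hII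
    have hinf : {a | b a = 1}.Infinite := by
      rw [Set.infinite_iff_exists_gt]
      intro N
      obtain ⟨m, h1, h2⟩ := hone (N + 1)
      exact ⟨m, h2, by omega⟩
    obtain ⟨G0, hG0s, hG0c⟩ := hinf.exists_subset_card_eq (C + 1)
    set A0 := G0.sup id + 1 with hA0
    have hG0 : ∀ a ∈ G0, a < A0 := fun a ha => by
      have : a ≤ G0.sup id := Finset.le_sup (f := id) ha
      omega
    obtain ⟨S, hSs, hS⟩ := hext (Finset.range (A0 + 1))
    choose e he1 he2 he3 using hrun
    let pat : ℕ → (Fin (A0 + S.sup id + 1) → Fin 2) := fun N i => b (e (N + A0) - A0 + i)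
    obtain ⟨ω, hω⟩ := Finite.exists_infinite_fiber pat
    have hω' : ∀ N, ∃ N', N ≤ N' ∧ pat N' = ω := by
      intro N
      have := Set.infinite_coe_iff.mp hω
      obtain ⟨N', h1, h2⟩ := this.exists_gt N
      exact ⟨N', h2.le, h1⟩
    obtain ⟨N1, -, hN1⟩ := hω' 0
    set o := e (N1 + A0) with ho
    have hret := fun N => rec_far hrec A0 N
    choose f hf1 hf2 using hret
    let s : ℕ → ℕ := fun k => Nat.rec (f o) (fun _ p => f (p + A0)) k
    have hs0 : s 0 = f o := rfl
    have hsS : ∀ k, s (k + 1) = f (s k + A0) := fun k => rfl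
    have hsr : ∀ k, ∀ i < A0, b i = b (s k + i) := by
      intro k
      cases k with
      | zero => exact hf2 _
      | succ k => rw [hsS]; exact hf2 _
    have hsmono : ∀ k, s k + A0 ≤ s (k + 1) := fun k => by rw [hsS]; exact hf1 _
    have hsmono' : ∀ k j, k < j → s k + A0 ≤ s j := by
      intro k j hkj
      induction j with
      | zero => omega
      | succ j ih =>
        rcases Nat.lt_succ_iff_lt_or_eq.mp hkj with h | h
        · have := ih h; have := hsmono j; omega
        · subst h; exact hsmono _
    have hso : ∀ k, o ≤ s k := by
      intro k
      have h0 : o ≤ s 0 := by rw [hs0]; exact hf1 _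
      rcases Nat.eq_zero_or_pos k with h | h
      · rw [h]; exact h0
      · have := hsmono' 0 k h; omega
    obtain ⟨N, hN⟩ := hII (s (C + 1) - o + A0 + 1)
    obtain ⟨N', hN', hpat⟩ := hω' N
    set o' := e (N' + A0) with ho'
    have hz : ∃ k, k < C + 1 ∧ ∀ i < A0, b (o' + (s k - o) + i) = 0 := by
      by_contra hcon
      push Not at hcon
      choose! c hc1 hc2 using hcon
      have hinj : Set.InjOn (fun k => s k - o + c k) (Finset.range (C + 1) : Set ℕ) := by
        intro k hk j hj hkj
        simp only [Finset.coe_range, Set.mem_Iio] at hk hj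
        simp only at hkj
        have := hc1 k hk
        have := hc1 j hj
        have := hso k
        have := hso j
        rcases lt_trichotomy k j with h | h | h
        · have := hsmono' k j h; omega
        · exact h
        · have := hsmono' j k h; omega
      obtain ⟨a, ha1, ha2⟩ := hN o' (by have := he1 (N' + A0); omega)
        (fun i hi hi' => he2 _ i hi (by omega))
        ((Finset.range (C + 1)).image (fun k => s k - o + c k))
        (by rw [Finset.card_image_of_injOn hinj]; simp)
      simp only [Finset.mem_image, Finset.mem_range] at ha1
      obtain ⟨k, hk, rfl⟩ := ha1
      have := hc1 k hk
      have := hsmono' k (C + 1) hk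
      have := hso k
      refine ha2 (by omega) ?_
      by_contra hb
      exact hc2 k hk (by rw [add_assoc]; exact fin2_ne_one hb)
    obtain ⟨k, hk, hz⟩ := hz
    have hoA : A0 ≤ o := by have := he1 (N1 + A0); omega
    have hoA' : A0 ≤ o' := by have := he1 (N' + A0); omega
    have hr := sep_runs (b := b) (e := o) hSs hoA (fun i h1 h2 => he2 (N1 + A0) i h1 (by omega))
      (he3 _) G0 hG0
    have := hS (s k - o + A0) _ ?_ hr.1
    · rw [hr.2, hG0c] at this; omega
    intro m hm
    simp only [Finset.mem_image] at hm
    obtain ⟨a, ha, rfl⟩ := hm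
    have haA := hG0 a ha
    have hko := hso k
    refine ⟨o' - A0 + a, ?_, ?_⟩
    · intro t ht
      have : t ≤ S.sup id := Finset.le_sup (f := id) ht
      have h3 := congrFun (hN1.trans hpat.symm) ⟨a + t, by omega⟩
      simp only [pat] at h3
      rw [add_assoc, add_assoc]; exact h3
    · have e1 : o - A0 + a + (s k - o + A0) = s k + a := by omega
      have e2 : o' - A0 + a + (s k - o + A0) = o' + (s k - o) + a := by omega
      rw [e1, e2, hz a haA, ← hsr k a haA]
      have : b a = 1 := hG0s ha
      rw [this]; decide

theorem unif_rec {x : Seq2} (hrec : Recurrent x) (hn : Nsl x) : UniformlyRecurrent x := by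
  classical
  intro L
  by_contra hL
  rcases Nat.eq_zero_or_pos L with h | hLpos
  · subst h
    exact hL ⟨2, fun n => ⟨n + 1, ⟨by omega, by omega⟩, by omega, by omega⟩⟩
  let b : Seq2 := fun m => if ∀ i < L, x i = x (m + i) then 1 else 0
  have hb1 : ∀ m, b m = 1 ↔ ∀ i < L, x i = x (m + i) := by
    intro m; simp only [b]; split_ifs with h
    · exact ⟨fun _ => h, fun _ => rfl⟩
    · exact ⟨fun h2 => absurd h2 (by decide), fun h2 => absurd h2 h⟩
  have hbN : Nsl b := by
    obtain ⟨C, hC⟩ := hn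
    refine ⟨C * (2 * L), fun N => ?_⟩
    obtain ⟨n, hn1, hn2⟩ := hC ((N + 1) * L)
    have hdiv : N + 1 ≤ n / L := (Nat.le_div_iff_mul_le hLpos).mpr hn1
    refine ⟨n / L, by omega, fun S F hS hF => ?_⟩
    have hT : (S.biUnion fun s => (Finset.range L).image fun i => s + i).card ≤ n := by
      calc _ ≤ S.card * L := Finset.card_biUnion_le_card_mul _ _ _ (fun s _ =>
            Finset.card_image_le.trans (by simp))
        _ ≤ n / L * L := by gcongr
        _ ≤ n := Nat.div_mul_le_self _ _
    have := hn2 _ F hT ?_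
    · have h3 : n < L * (n / L + 1) := Nat.lt_mul_div_succ n hLpos
      calc F.card ≤ C * n := this
        _ ≤ C * (L * (n / L + 1)) := by gcongr
        _ ≤ C * (L * (2 * (n / L))) := by gcongr; omega
        _ = _ := by ring
    · intro m hm k hk hne hag
      refine hF m hm k hk hne (fun s hs => ?_)
      have h4 : ∀ i < L, x (m + s + i) = x (k + s + i) := by
        intro i hi
        rw [add_assoc, add_assoc]
        refine hag _ ?_
        simp only [Finset.mem_biUnion, Finset.mem_image, Finset.mem_range]
        exact ⟨s, hs, i, hi, rfl⟩
      have : (∀ i < L, x i = x (m + s + i)) ↔ (∀ i < L, x i = x (k + s + i)) :=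
        forall₂_congr (fun i hi => by rw [h4 i hi])
      simp only [b, this]
  obtain ⟨C, hext⟩ := ext_of_nsl b hbN
  refine no_gaps (b := b) ?_ ?_ ?_ hext
  · intro L'
    obtain ⟨M, h1, h2⟩ := hrec (L' + L)
    refine ⟨M, h1, fun i hi => ?_⟩
    have : (∀ j < L, x j = x (i + j)) ↔ (∀ j < L, x j = x (M + i + j)) :=
      forall₂_congr (fun j hj => by rw [h2 (i + j) (by omega), add_assoc])
    simp only [b, this]
  · rw [hb1]; intro i _; simp
  · intro g
    unfold Syndetic at hL
    push Not at hL
    obtain ⟨n, hn⟩ := hL (g + 1)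
    refine ⟨n + 1, fun m hm1 hm2 => fin2_ne_one (fun hb => ?_)⟩
    have := hn m ⟨by omega, (hb1 m).1 hb⟩ (by omega)
    omega

end filePB

section filePC
open Set Filter Topology

open Classical in
noncomputable def cnt (B : Set ℕ) (N : ℕ) : ℕ := ((Finset.range N).filter (· ∈ B)).card

noncomputable def avg (B : Set ℕ) (N : ℕ) : ℝ := (cnt B N : ℝ) / N

/-- an upper-density like finitely additive mean -/
noncomputable def dn (B : Set ℕ) : ℝ := limUnder (hyperfilter ℕ : Filter ℕ) (avg B)

theorem cnt_le (B : Set ℕ) (N : ℕ) : cnt B N ≤ N := by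
  classical
  unfold cnt
  exact (Finset.card_filter_le _ _).trans (by simp)

theorem avg_mem (B : Set ℕ) (N : ℕ) : avg B N ∈ Set.Icc (0 : ℝ) 1 := by
  refine ⟨by unfold avg; positivity, ?_⟩
  unfold avg
  exact div_le_one_of_le₀ (by exact_mod_cast cnt_le B N) (by positivity)

theorem dn_tendsto (B : Set ℕ) : Tendsto (avg B) (hyperfilter ℕ : Filter ℕ) (𝓝 (dn B)) := by
  apply tendsto_nhds_limUnder
  have hc : IsCompact (Set.Icc (0 : ℝ) 1) := isCompact_Icc
  obtain ⟨a, _, ha⟩ := hc.ultrafilter_le_nhds ((hyperfilter ℕ).map (avg B)) (by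
    rw [le_principal_iff]
    exact Filter.mem_map.mpr (Filter.Eventually.of_forall (fun N => avg_mem B N)))
  exact ⟨a, ha⟩

theorem dn_ineq {ι κ : Type*} (I : Finset ι) (J : Finset κ) (a : ι → ℝ) (b : κ → ℝ)
    (B : ι → Set ℕ) (U : κ → Set ℕ) (c c' : ℝ)
    (h : ∀ N : ℕ, c' * N + ∑ i ∈ I, a i * cnt (B i) N ≤ ∑ j ∈ J, b j * cnt (U j) N + c) :
    c' + ∑ i ∈ I, a i * dn (B i) ≤ ∑ j ∈ J, b j * dn (U j) := by
  have h1 : Tendsto (fun N => c' + ∑ i ∈ I, a i * avg (B i) N) (hyperfilter ℕ : Filter ℕ)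
      (𝓝 (c' + ∑ i ∈ I, a i * dn (B i))) :=
    tendsto_const_nhds.add (tendsto_finsetSum _ (fun i _ => (dn_tendsto _).const_mul _))
  have hc : Tendsto (fun N : ℕ => c / (N : ℝ)) (hyperfilter ℕ : Filter ℕ) (𝓝 0) :=
    (tendsto_const_div_atTop_nhds_zero_nat c).mono_left
      ((hyperfilter_le_cofinite).trans Nat.cofinite_eq_atTop.le)
  have h2 : Tendsto (fun N => ∑ j ∈ J, b j * avg (U j) N + c / N) (hyperfilter ℕ : Filter ℕ)
      (𝓝 (∑ j ∈ J, b j * dn (U j) + 0)) :=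
    (tendsto_finsetSum _ (fun i _ => (dn_tendsto _).const_mul _)).add hc
  rw [add_zero] at h2
  refine le_of_tendsto_of_tendsto h1 h2 ?_
  have hpos : ∀ᶠ N : ℕ in (hyperfilter ℕ : Filter ℕ), 0 < N :=
    ((hyperfilter_le_cofinite).trans Nat.cofinite_eq_atTop.le) (eventually_gt_atTop 0)
  filter_upwards [hpos] with N hN
  have hN' : (0 : ℝ) < N := by exact_mod_cast hN
  have := h N
  have e1 : ∀ (B : Set ℕ) , avg B N * N = cnt B N := fun B => by
    unfold avg; field_simp
  have e2 : (c' + ∑ i ∈ I, a i * avg (B i) N) * N = c' * N + ∑ i ∈ I, a i * cnt (B i) N := by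
    rw [add_mul, Finset.sum_mul]; congr 1
    exact Finset.sum_congr rfl (fun i _ => by rw [mul_assoc, e1])
  have e3 : (∑ j ∈ J, b j * avg (U j) N + c / N) * N = ∑ j ∈ J, b j * cnt (U j) N + c := by
    rw [add_mul, Finset.sum_mul, div_mul_cancel₀ _ hN'.ne']; congr 1
    exact Finset.sum_congr rfl (fun i _ => by rw [mul_assoc, e1])
  rw [← e2, ← e3] at this
  exact le_of_mul_le_mul_right this hN'

theorem dn_nonneg (B : Set ℕ) : 0 ≤ dn B :=
  ge_of_tendsto (dn_tendsto B) (Eventually.of_forall fun N => (avg_mem B N).1)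

/-- basic comparison -/
theorem dn_le_mul {B U : Set ℕ} (a b c : ℝ)
    (h : ∀ N : ℕ, a * cnt B N ≤ b * cnt U N + c) : a * dn B ≤ b * dn U := by
  have := dn_ineq (Finset.univ : Finset Unit) (Finset.univ : Finset Unit) (fun _ => a) (fun _ => b)
    (fun _ => B) (fun _ => U) c 0 (by simpa using h)
  simpa using this

theorem cnt_mono {B U : Set ℕ} (h : B ⊆ U) (N : ℕ) : cnt B N ≤ cnt U N := by
  classical
  unfold cnt
  exact Finset.card_le_card (Finset.monotone_filter_right _ (fun i _ hi => h hi))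

theorem dn_mono {B U : Set ℕ} (h : B ⊆ U) : dn B ≤ dn U := by
  have := dn_le_mul (B := B) (U := U) 1 1 0 (fun N => by simpa using cnt_mono h N)
  simpa using this

theorem cnt_union (A B : Set ℕ) (N : ℕ) : cnt (A ∪ B) N ≤ cnt A N + cnt B N := by
  classical
  unfold cnt
  refine le_trans (Finset.card_le_card ?_) (Finset.card_union_le _ _)
  intro i hi
  simp only [Finset.mem_filter, Finset.mem_union, Set.mem_union] at hi ⊢
  tauto

theorem dn_union (A B : Set ℕ) : dn (A ∪ B) ≤ dn A + dn B := by
  have := dn_ineq (Finset.univ : Finset Unit) (Finset.univ : Finset (Fin 2)) (fun _ => 1) (fun _ => 1)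
    (fun _ => A ∪ B) ![A, B] 0 0 (by
      intro N
      simpa using (by exact_mod_cast cnt_union A B N : (cnt (A ∪ B) N : ℝ) ≤ cnt A N + cnt B N))
  simpa using this

theorem cnt_shift_le (B : Set ℕ) (k N : ℕ) : cnt {u | u + k ∈ B} N ≤ cnt B N + k := by
  classical
  unfold cnt
  have : (((Finset.range N).filter (· ∈ {u | u + k ∈ B})).image (· + k)) ⊆
      ((Finset.range N).filter (· ∈ B)) ∪ (Finset.range k).image (· + N) := by
    intro i hi
    simp only [Finset.mem_image, Finset.mem_filter, Finset.mem_range, Set.mem_ofPred_eq,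
      Finset.mem_union] at hi ⊢
    obtain ⟨u, ⟨h1, h2⟩, rfl⟩ := hi
    by_cases h : u + k < N
    · exact Or.inl ⟨h, h2⟩
    · exact Or.inr ⟨u + k - N, by omega, by omega⟩
  have h2 := Finset.card_le_card this
  rw [Finset.card_image_of_injective _ (add_left_injective k)] at h2
  refine h2.trans ((Finset.card_union_le _ _).trans ?_)
  gcongr
  exact Finset.card_image_le.trans (by simp)

theorem cnt_le_shift (B : Set ℕ) (k N : ℕ) : cnt B N ≤ cnt {u | u + k ∈ B} N + k := by
  classical
  unfold cnt
  have : ((Finset.range N).filter (· ∈ B)) ⊆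
      ((Finset.range N).filter (· ∈ {u | u + k ∈ B})).image (· + k) ∪ (Finset.range k) := by
    intro i hi
    simp only [Finset.mem_image, Finset.mem_filter, Finset.mem_range, Set.mem_ofPred_eq,
      Finset.mem_union] at hi ⊢
    by_cases h : i < k
    · exact Or.inr h
    · refine Or.inl ⟨i - k, ⟨by omega, ?_⟩, by omega⟩
      rw [Nat.sub_add_cancel (by omega)]; exact hi.2
  refine (Finset.card_le_card this).trans ((Finset.card_union_le _ _).trans ?_)
  rw [Finset.card_range]
  exact Nat.add_le_add_right Finset.card_image_le _

theorem dn_shift (B : Set ℕ) (k : ℕ) : dn {u | u + k ∈ B} = dn B := by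
  apply le_antisymm
  · have := dn_le_mul (B := {u | u + k ∈ B}) (U := B) 1 1 k (fun N => by
      have := cnt_shift_le B k N
      rw [one_mul, one_mul]; exact_mod_cast this)
    simpa using this
  · have := dn_le_mul (U := {u | u + k ∈ B}) (B := B) 1 1 k (fun N => by
      have := cnt_le_shift B k N
      rw [one_mul, one_mul]; exact_mod_cast this)
    simpa using this

theorem cnt_sum {ι : Type*} (I : Finset ι) (U : ι → Set ℕ) (N : ℕ) [∀ u : ℕ, DecidablePred fun i => u ∈ U i] :
    ∑ i ∈ I, cnt (U i) N = ∑ u ∈ Finset.range N, (I.filter (fun i => u ∈ U i)).card := by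
  classical
  unfold cnt
  simp only [Finset.card_filter]
  rw [Finset.sum_comm]
  refine Finset.sum_congr rfl (fun u _ => Finset.sum_congr rfl (fun i _ => ?_))
  congr

open Classical in
theorem dn_sum_le {ι : Type*} (I : Finset ι) (U : ι → Set ℕ) (C : ℕ)
    (h : ∀ u, (I.filter (fun i => u ∈ U i)).card ≤ C) : ∑ i ∈ I, dn (U i) ≤ C := by
  have := dn_ineq I (∅ : Finset Unit) (fun _ => 1) (fun _ => 1) U (fun _ => ∅) 0 (-(C : ℝ)) (by
    intro N
    have h1 : ∑ i ∈ I, cnt (U i) N ≤ C * N := by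
      rw [cnt_sum]
      calc _ ≤ ∑ u ∈ Finset.range N, C := Finset.sum_le_sum (fun u _ => h u)
        _ = _ := by simp [mul_comm]
    have h2 : ∑ i ∈ I, (cnt (U i) N : ℝ) ≤ C * N := by exact_mod_cast h1
    simp only [one_mul, Finset.sum_empty]; linarith)
  simp only [one_mul, Finset.sum_empty] at this; linarith

open Classical in
theorem dn_sum_ge {ι : Type*} (I : Finset ι) (U : ι → Set ℕ)
    (h : ∀ u, ∃ i ∈ I, u ∈ U i) : 1 ≤ ∑ i ∈ I, dn (U i) := by
  have := dn_ineq (∅ : Finset Unit) I (fun _ => 1) (fun _ => 1) (fun _ => ∅) U 0 1 (by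
    intro N
    have h1 : N ≤ ∑ i ∈ I, cnt (U i) N := by
      rw [cnt_sum]
      calc N = ∑ u ∈ Finset.range N, 1 := by simp
        _ ≤ _ := Finset.sum_le_sum (fun u _ => by
          obtain ⟨i, hi, hu⟩ := h u
          exact Finset.card_pos.mpr ⟨i, by simp [hi, hu]⟩)
    have h2 : (N : ℝ) ≤ ∑ i ∈ I, (cnt (U i) N : ℝ) := by exact_mod_cast h1
    simp only [one_mul, Finset.sum_empty]; linarith)
  simpa only [one_mul, Finset.sum_empty, add_zero] using this

theorem dn_syndetic_pos {B : Set ℕ} (h : Syndetic B) : 0 < dn B := by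
  obtain ⟨g, hg⟩ := h
  have := dn_sum_ge (Finset.range g) (fun k => {u | u + k ∈ B}) (fun u => by
    obtain ⟨m, hm, h1, h2⟩ := hg u
    refine ⟨m - u, by simp; omega, ?_⟩
    simp only [Set.mem_ofPred_eq]
    rwa [Nat.add_sub_cancel' h1])
  simp only [dn_shift, Finset.sum_const, Finset.card_range, nsmul_eq_mul] at this
  by_contra hcon
  have h0 : dn B = 0 := le_antisymm (not_lt.mp hcon) (dn_nonneg B)
  rw [h0] at this; simp at this; linarith

theorem dn_empty : dn ∅ = 0 := by
  have := dn_sum_le ({()} : Finset Unit) (fun _ => (∅ : Set ℕ)) 0 (by simp)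
  simp at this
  exact le_antisymm this (dn_nonneg _)

/-- the Besicovitch-like distance between two shifts of `x`. -/
noncomputable def dd (x : Seq2) (m k : ℕ) : ℝ := dn {u | x (m + u) ≠ x (k + u)}

theorem dd_self (x : Seq2) (m : ℕ) : dd x m m = 0 := by simp [dd, dn_empty]

theorem dd_nonneg (x : Seq2) (m k : ℕ) : 0 ≤ dd x m k := dn_nonneg _

theorem dd_symm (x : Seq2) (m k : ℕ) : dd x m k = dd x k m := by
  unfold dd; congr 1; ext u; exact ne_comm

theorem dd_triangle (x : Seq2) (m k l : ℕ) : dd x m l ≤ dd x m k + dd x k l := by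
  refine le_trans (dn_mono ?_) (dn_union _ _)
  intro u hu
  by_contra h
  simp only [Set.mem_union, Set.mem_ofPred_eq, not_or, not_not] at h hu
  exact hu (h.1.trans h.2)

theorem dd_shift (x : Seq2) (m k a : ℕ) : dd x (m + a) (k + a) = dd x m k := by
  unfold dd
  rw [← dn_shift {u | x (m + u) ≠ x (k + u)} a]
  congr 1; ext u
  simp only [Set.mem_ofPred_eq]
  rw [add_assoc, add_assoc, add_comm a u]

theorem exists_reps (x : Seq2) (S : Finset ℕ) :
    ∃ R : Finset ℕ, SepW x S R ∧ ∀ m, ∃ r ∈ R, Ag x S m r := by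
  classical
  let f : ℕ → ((s : S) → Fin 2) := fun m s => x (m + (s : ℕ))
  have hf : ∀ m k, f m = f k ↔ Ag x S m k := by
    intro m k
    constructor
    · intro h s hs; exact congrFun h ⟨s, hs⟩
    · intro h; funext s; exact h s s.2
  refine ⟨(Finset.univ.filter (fun w => ∃ m, f m = w)).image (Function.invFun f), ?_, ?_⟩
  · intro m hm k hk hne hag
    simp only [Finset.mem_image, Finset.mem_filter, Finset.mem_univ, true_and] at hm hk
    obtain ⟨w, hw, rfl⟩ := hm
    obtain ⟨w', hw', rfl⟩ := hk
    have h1 := Function.invFun_eq hw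
    have h2 := Function.invFun_eq hw'
    rw [← hf, h1, h2] at hag
    exact hne (by rw [hag])
  · intro m
    refine ⟨Function.invFun f (f m), ?_, ?_⟩
    · simp only [Finset.mem_image, Finset.mem_filter, Finset.mem_univ, true_and]
      exact ⟨f m, ⟨m, rfl⟩, rfl⟩
    · rw [← hf]; exact (Function.invFun_eq (f := f) (b := f m) ⟨m, rfl⟩).symm

/-- `S` is an extremal window with constant `C`. -/
def Extr (C : ℕ) (x : Seq2) (S : Finset ℕ) : Prop := ∀ (u : ℕ) (F : Finset ℕ),
    (∀ m ∈ F, ∃ m', Ag x S m m' ∧ x (m + u) ≠ x (m' + u)) → SepW x S F → F.card ≤ C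

/-- positions at which the cell of `r` is not constant. -/
def UU (x : Seq2) (S : Finset ℕ) (r : ℕ) : Set ℕ :=
  {u | ∃ m m', Ag x S m r ∧ Ag x S m' r ∧ x (m + u) ≠ x (m' + u)}

theorem sum_UU_le {C : ℕ} {x : Seq2} {S : Finset ℕ} (h : Extr C x S) (R : Finset ℕ)
    (hR : SepW x S R) : ∑ r ∈ R, dn (UU x S r) ≤ C := by
  classical
  apply dn_sum_le
  intro u
  apply h u
  · intro r hr
    simp only [Finset.mem_filter] at hr
    obtain ⟨_, m, m', h1, h2, h3⟩ := hr
    by_cases hx : x (r + u) = x (m + u)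
    · exact ⟨m', h2.symm', by rw [hx]; exact h3⟩
    · exact ⟨m, h1.symm', hx⟩
  · intro m hm k hk
    exact hR m (Finset.mem_filter.mp hm).1 k (Finset.mem_filter.mp hk).1

theorem ur_find {x : Seq2} (hur : UniformlyRecurrent x) (L : ℕ) :
    ∃ g, ∀ v, ∃ M, v ≤ M ∧ M < v + g ∧ 1 ≤ M ∧ ∀ i < L, x i = x (M + i) := by
  obtain ⟨g, hg⟩ := hur L
  refine ⟨g, fun v => ?_⟩
  obtain ⟨M, ⟨h1, h2⟩, h3, h4⟩ := hg v
  exact ⟨M, h3, h4, h1, h2⟩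

theorem periodic_of_blocks {x : Seq2} (hur : UniformlyRecurrent x) (p : ℕ) (hp : 1 ≤ p)
    (h : ∀ N, ∃ v, ∀ i < N, x (v + i) = x (v + i + p)) : Periodic x := by
  refine ⟨p, hp, fun n => ?_⟩
  obtain ⟨g, hg⟩ := ur_find hur (n + p + 1)
  obtain ⟨v, hv⟩ := h (g + n)
  obtain ⟨M, h1, h2, h3, h4⟩ := hg v
  rw [h4 _ (show n + p < n + p + 1 by omega), h4 n (by omega)]
  have := hv (M - v + n) (by omega)
  have e1 : v + (M - v + n) = M + n := by omega
  rw [e1] at this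
  rw [this, add_assoc]

/-- (star): small windows control the distance. -/
theorem star {x : Seq2} {C : ℕ} (hur : UniformlyRecurrent x) (hper : ¬ Periodic x)
    (hext : ExtW C x) (ε : ℝ) (hε : 0 < ε) :
    ∃ S : Finset ℕ, ∀ m m', Ag x S m m' → dd x m m' < ε := by
  classical
  by_contra hcon
  push Not at hcon
  set Q := ⌊(C : ℝ) / ε⌋₊ with hQ
  refine hper (periodic_of_blocks hur (Q.factorial) (Nat.factorial_pos Q) (fun N => ?_))
  obtain ⟨S', hS's, hS'⟩ := hext (Finset.range (N + Q.factorial))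
  obtain ⟨R, hR1, hR2⟩ := exists_reps x S'
  have hsum := sum_UU_le (C := C) hS' R hR1
  obtain ⟨m', m'', hag, hdd⟩ := hcon ((S' ×ˢ Finset.range (Q + 1)).image (fun p => p.2 + p.1))
  have hag' : ∀ i ≤ Q, Ag x S' (m' + i) (m'' + i) := by
    intro i hi s hs
    rw [add_assoc, add_assoc]
    refine hag _ ?_
    rw [Finset.mem_image]
    exact ⟨(s, i), by simp [hs]; omega, rfl⟩
  choose rep hrep1 hrep2 using hR2
  have hbad : (R.filter (fun r => ε ≤ dn (UU x S' r))).card ≤ Q := by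
    rw [hQ, Nat.le_floor_iff (by positivity), le_div_iff₀ hε]
    calc _ = ∑ r ∈ R.filter (fun r => ε ≤ dn (UU x S' r)), ε := by simp
      _ ≤ ∑ r ∈ R.filter (fun r => ε ≤ dn (UU x S' r)), dn (UU x S' r) :=
        Finset.sum_le_sum (fun r hr => (Finset.mem_filter.mp hr).2)
      _ ≤ ∑ r ∈ R, dn (UU x S' r) :=
        Finset.sum_le_sum_of_subset_of_nonneg (Finset.filter_subset _ _) (fun _ _ _ => dn_nonneg _)
      _ ≤ C := hsum
  obtain ⟨a, ha, b, hb, hab, hrab⟩ := Finset.exists_ne_map_eq_of_card_lt_of_maps_to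
    (s := Finset.range (Q + 1)) (t := R.filter (fun r => ε ≤ dn (UU x S' r)))
    (f := fun i => rep (m' + i)) (by rw [Finset.card_range]; omega) (by
      intro i hi
      have hi' : i ≤ Q := by
        have := Finset.mem_coe.mp hi
        rw [Finset.mem_range] at this; omega
      simp only [Finset.coe_filter, Set.mem_ofPred_eq]
      refine ⟨hrep1 _, hdd.trans ?_⟩
      rw [← dd_shift x m' m'' i]
      apply dn_mono
      intro u hu
      exact ⟨m' + i, m'' + i, hrep2 _, (hag' i hi').symm'.trans' (hrep2 _), hu⟩)
  have hagab : Ag x S' (m' + a) (m' + b) := (hrep2 _).trans' (by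
    rw [hrab]; exact (hrep2 _).symm')
  simp only [Finset.mem_range] at ha hb
  have main : ∀ a b, a < b → b ≤ Q → Ag x S' (m' + a) (m' + b) →
      ∃ v, ∀ i < N, x (v + i) = x (v + i + Q.factorial) := by
    intro a b hab hb hag
    refine ⟨m' + a, ?_⟩
    obtain ⟨q, hq⟩ : (b - a) ∣ Q.factorial := Nat.dvd_factorial (by omega) (by omega)
    have hstep : ∀ i < N + Q.factorial, x (m' + a + i) = x (m' + a + i + (b - a)) := by
      intro i hi
      rw [hag i (hS's (by simpa using hi))]
      congr 1; omega
    intro i hi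
    have : ∀ k ≤ q, x (m' + a + i) = x (m' + a + i + (b - a) * k) := by
      intro k hk
      induction k with
      | zero => simp
      | succ k ih =>
        rw [ih (by omega)]
        have hle : (b - a) * k ≤ Q.factorial := by rw [hq]; gcongr; omega
        have h3 := hstep (i + (b - a) * k) (by omega)
        rw [← add_assoc] at h3
        rw [h3]; congr 1; ring
    rw [hq]; exact this q le_rfl
  rcases lt_or_gt_of_ne hab with h | h
  · exact main a b h (by omega) hagab
  · exact main b a h (by omega) hagab.symm'

end filePC

section filePE
open Set Filter Topology

/-- nonconstant residue classes modulo `t` -/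
def holes (x : Seq2) (t : ℕ) : Set ℕ :=
  {j : ℕ | j < t ∧ ∃ m₁ m₂ : ℕ, m₁ % t = j ∧ m₂ % t = j ∧ x m₁ ≠ x m₂}

theorem holes_finite (x : Seq2) (t : ℕ) : (holes x t).Finite :=
  (Set.finite_Iio t).subset (fun _ hj => hj.1)

def GoodT (C : ℕ) (x : Seq2) (t : ℕ) : Prop :=
  1 ≤ t ∧ (holes x t).ncard ≤ 2 * C ∧
    ∃ S1 : Finset ℕ, ∀ m m', Ag x S1 m m' → (t : ℤ) ∣ (m : ℤ) - m'

theorem cell_return {x : Seq2} {S : Finset ℕ} {r M : ℕ}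
    (h : ∀ i < r + S.sup id + 1, x i = x (M + i)) : Ag x S (r + M) r := by
  intro s hs
  have : s ≤ S.sup id := Finset.le_sup (f := id) hs
  rw [h (r + s) (by omega)]
  congr 1; omega

theorem cell_syndetic {x : Seq2} (hur : UniformlyRecurrent x) (S : Finset ℕ) (r : ℕ) :
    Syndetic {m | Ag x S m r} := by
  obtain ⟨g, hg⟩ := ur_find hur (r + S.sup id + 1)
  refine ⟨g + r, fun n => ?_⟩
  obtain ⟨M, h1, h2, -, h3⟩ := hg n
  exact ⟨r + M, cell_return h3, by omega, by omega⟩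

theorem cnt_add (V : Set ℕ) (N k : ℕ) : cnt V (N + k) ≤ cnt V N + k := by
  classical
  unfold cnt
  have : ((Finset.range (N + k)).filter (· ∈ V)) ⊆ ((Finset.range N).filter (· ∈ V)) ∪
      (Finset.range k).image (· + N) := by
    intro i hi
    simp only [Finset.mem_filter, Finset.mem_range, Finset.mem_union, Finset.mem_image] at hi ⊢
    by_cases hiN : i < N
    · exact Or.inl ⟨hiN, hi.2⟩
    · exact Or.inr ⟨i - N, by omega, by omega⟩
  refine (Finset.card_le_card this).trans ((Finset.card_union_le _ _).trans ?_)
  exact Nat.add_le_add_left (Finset.card_image_le.trans (by simp)) _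

theorem hole_count {x : Seq2} (hur : UniformlyRecurrent x) (S : Finset ℕ) (r t j : ℕ)
    (hj : j ∈ holes x t)
    (hdiff : ∀ m m', Ag x S m r → Ag x S m' r → (t : ℤ) ∣ (m : ℤ) - m')
    (hgen : ∀ P : AddSubgroup ℤ, (∀ m m', Ag x S m r → Ag x S m' r → (m : ℤ) - m' ∈ P) →
      (t : ℤ) ∈ P) :
    dn {m | Ag x S m r} ≤ 2 * dn (UU x S r ∩ {u | (u + r) % t = j}) := by
  classical
  obtain ⟨hjt, m₁, m₂, hm₁, hm₂, hm⟩ := hj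
  have hmod : ∀ a b : ℕ, (t : ℤ) ∣ (a : ℤ) - b → a % t = b % t := by
    intro a b h
    have := (Int.modEq_iff_dvd.mpr h)
    exact (Int.natCast_modEq_iff.mp this).symm
  -- a discrepancy
  have hex : ∃ y1 y2 z h : ℕ, Ag x S y1 r ∧ Ag x S y2 r ∧ y1 = y2 + h ∧ z % t = j ∧
      x z ≠ x (z + h) := by
    by_contra hcon
    push Not at hcon
    let P : AddSubgroup ℤ :=
      { carrier := {h | (t : ℤ) ∣ h ∧ ∀ z z' : ℕ, z % t = j → (z' : ℤ) = z + h → x z' = x z}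
        zero_mem' := ⟨by simp, fun z z' _ h => by
          have : z' = z := by omega
          rw [this]⟩
        add_mem' := by
          rintro a b ⟨ha, ha'⟩ ⟨hb, hb'⟩
          refine ⟨dvd_add ha hb, fun z z' hz hzz => ?_⟩
          by_cases h : 0 ≤ (z : ℤ) + a
          · obtain ⟨z1, hz1⟩ := Int.eq_ofNat_of_zero_le h
            have h1 := ha' z z1 hz hz1.symm
            have hz1j : z1 % t = j := by
              rw [← hz]; exact hmod _ _ (by rw [← hz1]; simpa using ha)
            rw [← h1]
            exact hb' z1 z' hz1j (by rw [← hz1]; linarith)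
          · obtain ⟨z1, hz1⟩ := Int.eq_ofNat_of_zero_le (show 0 ≤ (z : ℤ) + b by omega)
            have h1 := hb' z z1 hz hz1.symm
            have hz1j : z1 % t = j := by
              rw [← hz]; exact hmod _ _ (by rw [← hz1]; simpa using hb)
            rw [← h1]
            exact ha' z1 z' hz1j (by rw [← hz1]; linarith)
        neg_mem' := by
          rintro a ⟨ha, ha'⟩
          refine ⟨(dvd_neg).mpr ha, fun z z' hz hzz => ?_⟩
          refine (ha' z' z ?_ (by omega)).symm
          rw [← hz]; exact hmod _ _ (by rw [hzz]; simpa using ha) }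
    have hle : ∀ m m', Ag x S m r → Ag x S m' r → m' ≤ m → (m : ℤ) - m' ∈ P := by
      intro m m' h1 h2 hle
      refine ⟨hdiff m m' h1 h2, fun z z' hz hzz => ?_⟩
      have := hcon m m' z (m - m') h1 h2 (by omega) hz
      rw [this]; congr 1; omega
    have ht := hgen P (fun m m' h1 h2 => by
      rcases le_total m' m with h | h
      · exact hle m m' h1 h2 h
      · have := P.neg_mem (hle m' m h2 h1 h)
        simpa using this)
    have hconst : ∀ k z : ℕ, z % t = j → x (z + t * k) = x z := by
      intro k z hz
      have hk : ((k : ℤ) * (t : ℤ)) ∈ P := by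
        have := P.zsmul_mem ht k
        simpa using this
      exact hk.2 z _ hz (by push_cast; ring)
    have e : ∀ m, m % t = j → x m = x j := by
      intro m hm
      have := hconst (m / t) j (Nat.mod_eq_of_lt hjt)
      rw [← this]
      congr 1
      have := Nat.mod_add_div m t
      omega
    exact hm ((e _ hm₁).trans (e _ hm₂).symm)
  obtain ⟨y1, y2, z0, h, hy1, hy2, hyh, hz0, hxz⟩ := hex
  obtain ⟨g, hg⟩ := ur_find hur (max (z0 + h + 1) (r + S.sup id + 1))
  have hth : (t : ℤ) ∣ (h : ℤ) := by
    have := hdiff y1 y2 hy1 hy2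
    rw [hyh] at this; simpa using this
  set V := UU x S r ∩ {u | (u + r) % t = j} with hV
  have key : ∀ N : ℕ, cnt {m | Ag x S m r} N ≤ 2 * cnt V N + 2 * (g + z0 + h + 1) := by
    intro N
    obtain ⟨M, hM1, hM2, -, hM3⟩ := hg N
    set z := M + z0 with hz
    have hMY : Ag x S (r + M) r := cell_return (fun i hi => hM3 i (lt_of_lt_of_le hi (le_max_right _ _)))
    have htM : (t : ℤ) ∣ (M : ℤ) := by
      have := hdiff _ _ hMY (Ag.refl' x S r)
      push_cast at this; simpa using this
    have hzj : z % t = j := by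
      rw [← hz0]; exact hmod _ _ (by rw [hz]; push_cast; simpa using htM)
    have hxz' : x z ≠ x (z + h) := by
      have h1 := hM3 z0 (lt_of_lt_of_le (by omega) (le_max_left _ _))
      have h2 := hM3 (z0 + h) (lt_of_lt_of_le (by omega) (le_max_left _ _))
      rw [hz, add_assoc, ← h1, ← h2]; exact hxz
    have hcls : ∀ y u : ℕ, Ag x S y r → y + u = z → (u + r) % t = j := by
      intro y u hy hu
      rw [← hzj]; apply hmod
      have := hdiff r y (Ag.refl' x S r) hy
      rw [← hu]; push_cast
      convert this using 1; ring
    have hdich : ∀ y u, Ag x S y r → y + u = z → u ∈ V ∨ u + h ∈ V := by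
      intro y u hy hu
      have hc1 := hcls y u hy hu
      have hc2 : (u + h + r) % t = j := by
        rw [← hc1]; apply hmod; push_cast
        convert hth using 1; ring
      by_cases hu1 : u ∈ UU x S r
      · exact Or.inl ⟨hu1, hc1⟩
      · refine Or.inr ⟨?_, hc2⟩
        refine ⟨y2, y, hy2, hy, ?_⟩
        intro heq
        have h3 : x (y + u) = x (y1 + u) := by
          by_contra hne
          exact hu1 ⟨y, y1, hy, hy1, hne⟩
        apply hxz'
        rw [← hu, h3, hyh]
        rw [show y2 + h + u = y2 + (u + h) by ring, heq]
        congr 1; ring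
    -- counting
    have hsub : ((Finset.range N).filter (· ∈ {m | Ag x S m r})) ⊆
        (((Finset.range (N + (g + z0 + h + 1))).filter (· ∈ V)).image (fun u => z - u)) ∪
        (((Finset.range (N + (g + z0 + h + 1))).filter (· ∈ V)).image (fun u => z + h - u)) := by
      intro y hy
      simp only [Finset.mem_filter, Finset.mem_range, Set.mem_ofPred_eq] at hy
      obtain ⟨hy1', hy2'⟩ := hy
      rw [Finset.mem_union, Finset.mem_image, Finset.mem_image]
      rcases hdich y (z - y) hy2' (by omega) with hv | hv
      · exact Or.inl ⟨z - y, by simp only [Finset.mem_filter, Finset.mem_range]; exact ⟨by omega, hv⟩, by omega⟩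
      · exact Or.inr ⟨z - y + h, by simp only [Finset.mem_filter, Finset.mem_range]; exact ⟨by omega, hv⟩, by omega⟩
    have hcard := Finset.card_le_card hsub
    have h5 : ((Finset.range (N + (g + z0 + h + 1))).filter (· ∈ V)).card ≤ cnt V N + (g + z0 + h + 1) :=
      le_of_eq_of_le (by unfold cnt; congr) (cnt_add V N (g + z0 + h + 1))
    have h6 := Finset.card_union_le
      (((Finset.range (N + (g + z0 + h + 1))).filter (· ∈ V)).image (fun u => z - u))
      (((Finset.range (N + (g + z0 + h + 1))).filter (· ∈ V)).image (fun u => z + h - u))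
    have h7 := Finset.card_image_le (s := (Finset.range (N + (g + z0 + h + 1))).filter (· ∈ V))
      (f := fun u => z - u)
    have h8 := Finset.card_image_le (s := (Finset.range (N + (g + z0 + h + 1))).filter (· ∈ V))
      (f := fun u => z + h - u)
    have h9 : cnt {m | Ag x S m r} N = ((Finset.range N).filter (· ∈ {m | Ag x S m r})).card := by
      unfold cnt; congr
    rw [h9]
    omega
  have := dn_le_mul (B := {m | Ag x S m r}) (U := V) 1 2 (2 * (g + z0 + h + 1) : ℕ) (fun N => by
    rw [one_mul]; exact_mod_cast key N)
  simpa using this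

theorem good_step {x : Seq2} {C : ℕ} (hur : UniformlyRecurrent x) {S : Finset ℕ}
    (hS : Extr C x S) : ∃ t r : ℕ, GoodT C x t ∧
      (∀ m m', Ag x S m r → Ag x S m' r → (t : ℤ) ∣ (m : ℤ) - m') ∧
      (∀ P : AddSubgroup ℤ, (∀ m m', Ag x S m r → Ag x S m' r → (m : ℤ) - m' ∈ P) →
      (t : ℤ) ∈ P) := by
  classical
  obtain ⟨R, hR1, hR2⟩ := exists_reps x S
  have h1 := sum_UU_le hS R hR1
  have h2 := dn_sum_ge R (fun r => {m | Ag x S m r}) hR2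
  obtain ⟨r, hrR, hr⟩ : ∃ r ∈ R, dn (UU x S r) ≤ C * dn {m | Ag x S m r} := by
    apply Finset.exists_le_of_sum_le
    · obtain ⟨r, hr, -⟩ := hR2 0; exact ⟨r, hr⟩
    · rw [← Finset.mul_sum]
      have : (C : ℝ) * 1 ≤ C * ∑ r ∈ R, dn {m | Ag x S m r} := by gcongr
      linarith
  have hYpos := dn_syndetic_pos (cell_syndetic hur S r)
  set G : AddSubgroup ℤ := AddSubgroup.closure {d | ∃ m m' : ℕ, Ag x S m r ∧ Ag x S m' r ∧ d = (m : ℤ) - m'} with hG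
  obtain ⟨a, ha⟩ := Int.subgroup_cyclic G
  have hmemG : ∀ m m', Ag x S m r → Ag x S m' r → (m : ℤ) - m' ∈ G := fun m m' h h' =>
    AddSubgroup.subset_closure ⟨m, m', h, h', rfl⟩
  have hdvd : ∀ d, d ∈ G ↔ a ∣ d := by
    intro d
    rw [ha, ← AddSubgroup.zmultiples_eq_closure, Int.mem_zmultiples_iff]
  have hdiff : ∀ m m', Ag x S m r → Ag x S m' r → ((a.natAbs : ℕ) : ℤ) ∣ (m : ℤ) - m' := by
    intro m m' h h'
    rw [Int.natAbs_dvd, ← hdvd]; exact hmemG m m' h h'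
  have hgen : (∀ P : AddSubgroup ℤ, (∀ m m', Ag x S m r → Ag x S m' r → (m : ℤ) - m' ∈ P) →
      ((a.natAbs : ℕ) : ℤ) ∈ P) := by
    intro P hP
    have : G ≤ P := by
      rw [hG, AddSubgroup.closure_le]
      rintro _ ⟨m, m', h, h', rfl⟩
      exact hP m m' h h'
    apply this
    rw [hdvd]; exact Int.dvd_natAbs.mpr dvd_rfl
  refine ⟨a.natAbs, r, ⟨?_, ?_, ?_⟩, hdiff, hgen⟩
  · obtain ⟨g, hg⟩ := cell_syndetic hur S r
    obtain ⟨m, hm, hm', -⟩ := hg (r + 1)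
    have := hdiff m r hm (Ag.refl' _ _ _)
    rcases Nat.eq_zero_or_pos a.natAbs with h0 | h0
    · rw [h0] at this
      simp at this; omega
    · exact h0
  · have hsum : ∑ j ∈ (holes_finite x a.natAbs).toFinset,
        dn (UU x S r ∩ {u | (u + r) % a.natAbs = j}) ≤ dn (UU x S r) := by
      have := dn_ineq (holes_finite x a.natAbs).toFinset (Finset.univ : Finset Unit)
        (fun _ => 1) (fun _ => 1) (fun j => UU x S r ∩ {u | (u + r) % a.natAbs = j})
        (fun _ => UU x S r) 0 0 (by
          intro N
          have : ∑ j ∈ (holes_finite x a.natAbs).toFinset,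
              cnt (UU x S r ∩ {u | (u + r) % a.natAbs = j}) N ≤ cnt (UU x S r) N := by
            rw [cnt_sum]
            unfold cnt
            rw [Finset.card_filter]
            refine Finset.sum_le_sum (fun u _ => ?_)
            split_ifs with hu
            · rw [Finset.card_le_one]
              intro a ha b hb
              simp only [Finset.mem_filter, Set.mem_inter_iff, Set.mem_ofPred_eq] at ha hb
              rw [← ha.2.2, hb.2.2]
            · rw [Nat.le_zero, Finset.card_eq_zero, Finset.filter_eq_empty_iff]
              intro j _ hj
              exact hu hj.1
          have h' : ∑ j ∈ (holes_finite x a.natAbs).toFinset,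
              (cnt (UU x S r ∩ {u | (u + r) % a.natAbs = j}) N : ℝ) ≤ cnt (UU x S r) N := by
            exact_mod_cast this
          simpa using h')
      simpa using this
    have h3 : ∑ j ∈ (holes_finite x a.natAbs).toFinset, dn {m | Ag x S m r} ≤
        ∑ j ∈ (holes_finite x a.natAbs).toFinset,
        2 * dn (UU x S r ∩ {u | (u + r) % a.natAbs = j}) :=
      Finset.sum_le_sum (fun j hj => hole_count hur S r _ j
        ((holes_finite x a.natAbs).mem_toFinset.mp hj) hdiff hgen)
    rw [← Finset.mul_sum, Finset.sum_const, nsmul_eq_mul,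
      ← Set.ncard_eq_toFinset_card (holes x a.natAbs) (holes_finite x a.natAbs)] at h3
    have h4 : ((holes x a.natAbs).ncard : ℝ) * dn {m | Ag x S m r} ≤
        (2 * C) * dn {m | Ag x S m r} := by nlinarith
    have h5 := le_of_mul_le_mul_right h4 hYpos
    exact_mod_cast h5
  · obtain ⟨g, hg⟩ := ur_find hur (r + S.sup id + 1)
    refine ⟨Finset.range (g + (r + S.sup id + 1)), fun m m' hag => ?_⟩
    obtain ⟨M, h1, h2, -, h3⟩ := hg m
    have h4 : ∀ i < r + S.sup id + 1, x i = x (m' + (M - m) + i) := by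
      intro i hi
      rw [h3 i hi, add_assoc, ← hag (M - m + i) (by simp; omega)]
      congr 1; omega
    have := hdiff _ _ (cell_return h3) (cell_return h4)
    have e : ((r + M : ℕ) : ℤ) - ((r + (m' + (M - m)) : ℕ) : ℤ) = (m : ℤ) - m' := by omega
    rwa [e] at this

theorem case_T {x : Seq2} {C : ℕ} (hrec : Recurrent x) (hur : UniformlyRecurrent x)
    (hper : ¬ Periodic x) (t0 : ℕ) (ht0 : GoodT C x t0)
    (h : ∀ t, GoodT C x t → ∃ t', t < t' ∧ t ∣ t' ∧ GoodT C x t') :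
    ∃ m : ℕ, 1 ≤ m ∧ ∃ z : Seq2, MHoleToeplitz m z ∧ x ∈ orbitClosure z := by
  classical
  choose! nx hnx1 hnx2 hnx3 using h
  let n : ℕ → ℕ := fun k => nx^[k] t0
  have hnS : ∀ k, n (k + 1) = nx (n k) := fun k => Function.iterate_succ_apply' _ _ _
  have hgood : ∀ k, GoodT C x (n k) := by
    intro k
    induction k with
    | zero => exact ht0
    | succ k ih => rw [hnS]; exact hnx3 _ ih
  have hmono : StrictMono n := strictMono_nat_of_lt_succ (fun k => by rw [hnS]; exact hnx1 _ (hgood k))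
  have hdvd : ∀ k l, k ≤ l → n k ∣ n l := by
    intro k l hkl
    induction l, hkl using Nat.le_induction with
    | base => exact dvd_rfl
    | succ l _ ih => exact ih.trans (by rw [hnS]; exact hnx2 _ (hgood l))
  have hnge : ∀ k, k ≤ n k := fun k => hmono.le_apply
  -- always holes
  let AH : Set ℕ := {a | ∀ k, a % n k ∈ holes x (n k)}
  have hAH : AH.Finite := by
    by_contra hinf
    obtain ⟨F, hF, hFc⟩ := Set.Infinite.exists_subset_card_eq hinf (2 * C + 1)
    have h1 := (hgood (F.sup id + 1)).2.1
    have h2 : F.card ≤ (holes x (n (F.sup id + 1))).ncard := by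
      rw [← Set.ncard_coe_finset]
      apply Set.ncard_le_ncard _ (holes_finite _ _)
      intro a ha
      have h3 := hF ha (F.sup id + 1)
      have h4 : a ≤ F.sup id := Finset.le_sup (f := id) ha
      have h5 := hnge (F.sup id + 1)
      rwa [Nat.mod_eq_of_lt (by omega)] at h3
    omega
  obtain ⟨M, hM⟩ : ∃ M, ∀ a ∈ AH, a < M := by
    obtain ⟨M, hM⟩ := hAH.bddAbove
    exact ⟨M + 1, fun a ha => Nat.lt_succ_of_le (hM ha)⟩
  let z : Seq2 := fun i => x (M + i)
  have hconst : ∀ i, ∃ k, ∀ m, m % n k = i % n k → z m = z i := by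
    intro i
    have : M + i ∉ AH := fun h => by have := hM _ h; omega
    simp only [AH, Set.mem_ofPred_eq, not_forall] at this
    obtain ⟨k, hk⟩ := this
    refine ⟨k, fun m hm => ?_⟩
    by_contra hne
    refine hk ⟨Nat.mod_lt _ (hgood k).1, M + m, M + i, ?_, rfl, hne⟩
    exact Nat.ModEq.add_left M hm
  have hle : ∀ k, (holes z (n k)).ncard ≤ 2 * C := by
    intro k
    refine le_trans ?_ (hgood k).2.1
    apply Set.ncard_le_ncard_of_injOn (fun j => (M + j) % n k) _ _ (holes_finite _ _)
    · rintro j ⟨hj, m1, m2, h1, h2, h3⟩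
      refine ⟨Nat.mod_lt _ (hgood k).1, M + m1, M + m2, ?_, ?_, h3⟩
      · conv_rhs => rw [← h1]
        simp
      · conv_rhs => rw [← h2]
        simp
    · intro a ha b hb hab
      have : a ≡ b [MOD n k] := Nat.ModEq.add_left_cancel' M hab
      exact Nat.ModEq.eq_of_lt_of_lt this ha.1 hb.1
  have hge : ∀ k, 1 ≤ (holes z (n k)).ncard := by
    intro k
    by_contra hcon
    have h0 : (holes z (n k)) = ∅ := by
      rw [← Set.ncard_eq_zero (holes_finite _ _)]; omega
    refine hper (periodic_of_blocks hur (n k) (hgood k).1 (fun N => ⟨M, fun i _ => ?_⟩))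
    by_contra hne
    have : i % n k ∈ holes z (n k) :=
      ⟨Nat.mod_lt _ (hgood k).1, i, i + n k, rfl, by simp, by simpa [z, add_assoc] using hne⟩
    rw [h0] at this; exact this
  obtain ⟨c, hc⟩ := Finite.exists_infinite_fiber
    (fun k => (⟨(holes z (n k)).ncard, Nat.lt_succ_of_le (hle k)⟩ : Fin (2 * C + 1)))
  have hc' := Set.infinite_coe_iff.mp hc
  obtain ⟨φ, hφ1, hφ2⟩ := Nat.exists_strictMono_subsequence
    (P := fun k => (holes z (n k)).ncard = (c : ℕ)) (fun N => by
      obtain ⟨k, hk1, hk2⟩ := hc'.exists_gt N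
      refine ⟨k, hk2, ?_⟩
      have : (⟨(holes z (n k)).ncard, Nat.lt_succ_of_le (hle k)⟩ : Fin (2 * C + 1)) = c := hk1
      rw [← this])
  refine ⟨c, by rw [← hφ2 0]; exact hge _, z, ⟨fun k => n (φ k), ⟨fun k => ⟨(hgood _).1, ?_, ?_⟩, ?_⟩,
    fun k => hφ2 k⟩, ?_⟩
  · exact hdvd _ _ (hφ1.monotone (Nat.le_succ k))
  · exact hmono (hφ1 (Nat.lt_succ_self k))
  · intro i
    obtain ⟨k, hk⟩ := hconst i
    refine ⟨k, fun m hm => hk m ?_⟩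
    exact Nat.ModEq.of_dvd (hdvd k (φ k) hφ1.le_apply) hm
  · choose R hR1 hR2 using fun L => rec_far hrec L M
    refine mem_closure_of_tendsto (f := fun L i => z (R L - M + i)) (b := atTop) ?_
      (Eventually.of_forall fun L => ⟨R L - M, rfl⟩)
    rw [tendsto_pi_nhds]
    intro i
    apply tendsto_const_nhds.congr'
    filter_upwards [eventually_gt_atTop i] with L hL
    have h1 := hR1 L
    rw [hR2 L i hL]
    simp only [z]
    congr 1; omega

theorem dichotomy {x : Seq2} {C : ℕ} (hrec : Recurrent x) (hur : UniformlyRecurrent x)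
    (hper : ¬ Periodic x) (hext : ExtW C x) :
    (∃ m : ℕ, 1 ≤ m ∧ ∃ z : Seq2, MHoleToeplitz m z ∧ x ∈ orbitClosure z) ∨
    ∃ K : ℕ, 1 ≤ K ∧ (∃ S1 : Finset ℕ, ∀ m m', Ag x S1 m m' → (K : ℤ) ∣ (m : ℤ) - m') ∧
      ∀ S0 : Finset ℕ, ∃ S, S0 ⊆ S ∧ ∃ r, ∀ P : AddSubgroup ℤ,
        (∀ m m', Ag x S m r → Ag x S m' r → (m : ℤ) - m' ∈ P) → (K : ℤ) ∈ P := by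
  by_cases h : ∀ t, GoodT C x t → ∃ t', t < t' ∧ t ∣ t' ∧ GoodT C x t'
  · left
    obtain ⟨S, _, hS⟩ := hext ∅
    obtain ⟨t, r, ht, -⟩ := good_step hur hS
    exact case_T hrec hur hper t ht h
  · right
    push Not at h
    obtain ⟨K, hK, hmax⟩ := h
    obtain ⟨S1, hS1⟩ := hK.2.2
    refine ⟨K, hK.1, ⟨S1, hS1⟩, fun S0 => ?_⟩
    obtain ⟨S, hSs, hS⟩ := hext (S0 ∪ S1)
    obtain ⟨t, r, ht, hd, hg⟩ := good_step hur hS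
    refine ⟨S, Finset.union_subset_left hSs, r, ?_⟩
    have hKt : K ∣ t := by
      have := hg (AddSubgroup.zmultiples (K : ℤ)) (fun m m' h h' => by
        rw [Int.mem_zmultiples_iff]
        exact hS1 m m' ((h.trans' h'.symm').mono' (Finset.union_subset_right hSs)))
      rw [Int.mem_zmultiples_iff] at this
      exact_mod_cast this
    have htK : t = K := by
      by_contra hne
      have := Nat.le_of_dvd ht.1 hKt
      exact hmax t (by omega) hKt ht
    rw [← htK]; exact hg

end filePE

section filePF
open Set Filter Topology

/-- a copy of the integers without its norm -/
structure ZCopy where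
  down : ℤ

def zcopyEquiv : ZCopy ≃ ℤ := ⟨ZCopy.down, ZCopy.mk, fun _ => rfl, fun _ => rfl⟩

noncomputable instance : AddCommGroup ZCopy := zcopyEquiv.addCommGroup

/-- completing a totally bounded seminorm on the integers. -/
theorem completion_exists (nrm : ℤ → ℝ) (h0 : nrm 0 = 0) (hneg : ∀ k, nrm (-k) = nrm k)
    (hadd : ∀ k l, nrm (k + l) ≤ nrm k + nrm l)
    (htb : ∀ ε > 0, ∃ F : Finset ℤ, ∀ k, ∃ f ∈ F, nrm (k - f) < ε) :
    ∃ (H : Type) (_ : NormedAddCommGroup H) (_ : CompactSpace H) (ι : ℤ →+ H),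
      DenseRange ι ∧ ∀ k, ‖ι k‖ = nrm k := by
  let p : AddGroupSeminorm ℤ := ⟨nrm, h0, hadd, hneg⟩
  let inst : SeminormedAddCommGroup (ZCopy) :=
    (p.comp zcopyEquiv.addEquiv.toAddMonoidHom).toSeminormedAddCommGroup
  have hn : ∀ k : ZCopy, ‖k‖ = nrm k.down := fun k => rfl
  have htb' : TotallyBounded (Set.univ : Set (ZCopy)) := by
    rw [Metric.totallyBounded_iff]
    intro ε hε
    obtain ⟨F, hF⟩ := htb ε hε
    refine ⟨ZCopy.mk '' (F : Set ℤ), (F.finite_toSet).image _, ?_⟩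
    rintro ⟨k⟩ -
    obtain ⟨f, hf, hkf⟩ := hF k
    simp only [Set.mem_iUnion, Metric.mem_ball, exists_prop]
    refine ⟨⟨f⟩, ⟨f, hf, rfl⟩, ?_⟩
    rw [dist_eq_norm, hn]
    exact hkf
  let ι : ℤ →+ UniformSpace.Completion (ZCopy) :=
    (UniformSpace.Completion.toCompl : AddMonoidHom ZCopy (UniformSpace.Completion ZCopy)).comp
      zcopyEquiv.addEquiv.symm.toAddMonoidHom
  have hι : ∀ k, ι k = ((⟨k⟩ : ZCopy) : UniformSpace.Completion (ZCopy)) := fun k => rfl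
  refine ⟨UniformSpace.Completion (ZCopy), inferInstance, ?_, ι, ?_, ?_⟩
  · have h1 := htb'.image (UniformSpace.Completion.uniformContinuous_coe (ZCopy))
    rw [Set.image_univ] at h1
    have h2 := h1.closure
    rw [(UniformSpace.Completion.denseRange_coe (α := ZCopy)).closure_eq] at h2
    exact ⟨isCompact_iff_totallyBounded_isComplete.mpr ⟨h2, isClosed_univ.isComplete⟩⟩
  · have := UniformSpace.Completion.denseRange_coe (α := ZCopy)
    refine this.mono ?_
    rintro _ ⟨⟨k⟩, rfl⟩
    exact ⟨k, hι k⟩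
  · intro k
    rw [hι, UniformSpace.Completion.norm_coe]
    exact hn _

end filePF

section filePG
open Set Filter Topology

theorem dd_pos {x : Seq2} (hur : UniformlyRecurrent x) (hper : ¬ Periodic x) (p : ℕ) (hp : 1 ≤ p) :
    0 < dd x 0 p := by
  have : ∃ u, x u ≠ x (p + u) := by
    by_contra hcon
    push Not at hcon
    exact hper ⟨p, hp, fun n => by rw [add_comm, ← hcon n]⟩
  obtain ⟨u, hu⟩ := this
  apply dn_syndetic_pos
  obtain ⟨g, hg⟩ := ur_find hur (p + u + 1)
  refine ⟨g + u, fun n => ?_⟩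
  obtain ⟨M, h1, h2, -, h3⟩ := hg n
  refine ⟨M + u, ?_, by omega, by omega⟩
  simp only [Set.mem_ofPred_eq, zero_add]
  rw [← h3 u (by omega), show p + (M + u) = M + (p + u) by omega, ← h3 (p + u) (by omega)]
  exact hu

theorem group_exists {x : Seq2} {C : ℕ} (hur : UniformlyRecurrent x) (hper : ¬ Periodic x)
    (hext : ExtW C x) (K : ℕ) (hK : 1 ≤ K) :
    ∃ (H : Type) (_ : NormedAddCommGroup H) (_ : CompactSpace H) (ι : ℤ →+ H),
      DenseRange ι ∧ Function.Injective ι ∧ ∀ n n' : ℕ, ‖ι ((n : ℤ) - n')‖ = dd x (K * n) (K * n') := by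
  classical
  let nrm : ℤ → ℝ := fun k => dd x 0 (K * k.natAbs)
  have hle : ∀ n n' : ℕ, n' ≤ n → nrm ((n : ℤ) - n') = dd x (K * n) (K * n') := by
    intro n n' h
    simp only [nrm]
    rw [← dd_shift x 0 _ (K * n'), dd_symm]
    congr 1
    · rw [← Nat.mul_add]; congr 1; omega
    · omega
  have hnat : ∀ n n' : ℕ, nrm ((n : ℤ) - n') = dd x (K * n) (K * n') := by
    intro n n'
    rcases le_total n' n with h | h
    · exact hle n n' h
    · rw [dd_symm, ← hle n' n h]
      simp only [nrm]
      congr 2; omega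
  have hrep : ∀ k : ℤ, ∃ n n' : ℕ, k = (n : ℤ) - n' := fun k => ⟨k.toNat, (-k).toNat, by omega⟩
  have h0 : nrm 0 = 0 := by simp [nrm, dd_self]
  have hneg : ∀ k, nrm (-k) = nrm k := fun k => by simp [nrm]
  have hadd : ∀ k l, nrm (k + l) ≤ nrm k + nrm l := by
    intro k l
    obtain ⟨a, b, rfl⟩ := hrep k
    obtain ⟨c, d, rfl⟩ := hrep l
    rw [show (a : ℤ) - b + (c - d) = ((a + c : ℕ) : ℤ) - ((b + d : ℕ) : ℤ) by push_cast; ring,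
      hnat, hnat, hnat]
    refine (dd_triangle x _ (K * (b + c)) _).trans ?_
    rw [Nat.mul_add, Nat.mul_add, Nat.mul_add, dd_shift, add_comm (K * b) (K * c),
      add_comm (K * b) (K * d), dd_shift]
  have htb : ∀ ε > 0, ∃ F : Finset ℤ, ∀ k, ∃ f ∈ F, nrm (k - f) < ε := by
    intro ε hε
    obtain ⟨S, hS⟩ := star hur hper hext ε hε
    obtain ⟨R, -, hR⟩ := exists_reps x S
    have hc : ∀ r, ∃ n : ℕ, (∃ n', Ag x S (K * n') r) → Ag x S (K * n) r := by
      intro r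
      by_cases h : ∃ n', Ag x S (K * n') r
      · obtain ⟨n, hn⟩ := h; exact ⟨n, fun _ => hn⟩
      · exact ⟨0, fun h' => absurd h' h⟩
    choose c hc using hc
    have hpos : ∀ n : ℕ, ∃ r ∈ R, nrm ((n : ℤ) - c r) < ε := by
      intro n
      obtain ⟨r, hr, hag⟩ := hR (K * n)
      refine ⟨r, hr, ?_⟩
      rw [hnat]
      exact hS _ _ (hag.trans' (hc r ⟨n, hag⟩).symm')
    refine ⟨R.image (fun r => (c r : ℤ)) ∪ R.image (fun r => -(c r : ℤ)), fun k => ?_⟩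
    rcases Int.natAbs_eq k with h | h
    · obtain ⟨r, hr, h1⟩ := hpos k.natAbs
      refine ⟨c r, by simp only [Finset.mem_union, Finset.mem_image]; exact Or.inl ⟨r, hr, rfl⟩, ?_⟩
      rw [h]; exact h1
    · obtain ⟨r, hr, h1⟩ := hpos k.natAbs
      refine ⟨-(c r), by simp only [Finset.mem_union, Finset.mem_image]; exact Or.inr ⟨r, hr, rfl⟩, ?_⟩
      rw [h, ← hneg]
      convert h1 using 2; ring
  obtain ⟨H, i1, i2, ι, hd, hn⟩ := completion_exists nrm h0 hneg hadd htb
  refine ⟨H, i1, i2, ι, hd, ?_, fun n n' => by rw [hn, hnat]⟩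
  rw [injective_iff_map_eq_zero]
  intro k hk
  by_contra hk0
  have h1 : nrm k = 0 := by rw [← hn, hk, norm_zero]
  have h2 : 0 < nrm k := dd_pos hur hper _ (by
    have : 1 ≤ k.natAbs := Int.natAbs_pos.mpr hk0
    nlinarith)
  linarith

section data
variable {H : Type} [NormedAddCommGroup H] [CompactSpace H] {x : Seq2} {C K : ℕ} (ι : ℤ →+ H)

theorem conn_H (hur : UniformlyRecurrent x) (hper : ¬ Periodic x) (hext : ExtW C x)
    (hK : 1 ≤ K) (S1 : Finset ℕ) (hS1 : ∀ m m', Ag x S1 m m' → (K : ℤ) ∣ (m : ℤ) - m')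
    (hgen : ∀ S0 : Finset ℕ, ∃ S, S0 ⊆ S ∧ ∃ r, ∀ P : AddSubgroup ℤ,
        (∀ m m', Ag x S m r → Ag x S m' r → (m : ℤ) - m' ∈ P) → (K : ℤ) ∈ P)
    (hd : DenseRange ι) (hn : ∀ n n' : ℕ, ‖ι ((n : ℤ) - n')‖ = dd x (K * n) (K * n')) :
    PreconnectedSpace H := by
  classical
  rw [preconnectedSpace_iff_clopen]
  intro W hW
  by_contra hcon
  push Not at hcon
  obtain ⟨⟨w, hw⟩, hne⟩ := hcon
  obtain ⟨v, hv⟩ := (Set.ne_univ_iff_exists_notMem W).mp hne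
  obtain ⟨δ1, hδ1, hth1⟩ := hW.isClosed.isCompact.exists_thickening_subset_open hW.isOpen subset_rfl
  obtain ⟨δ2, hδ2, hth2⟩ := hW.compl.isClosed.isCompact.exists_thickening_subset_open
    hW.compl.isOpen subset_rfl
  have hinv : ∀ h : H, ‖h‖ < min δ1 δ2 → ∀ z, z ∈ W ↔ z + h ∈ W := by
    intro h hh z
    constructor
    · intro hz
      apply hth1
      rw [Metric.mem_thickening_iff]
      exact ⟨z, hz, by rw [dist_eq_norm, add_sub_cancel_left]; exact hh.trans_le (min_le_left _ _)⟩
    · intro hz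
      by_contra hzn
      refine (hth2 ?_) hz
      rw [Metric.mem_thickening_iff]
      exact ⟨z, hzn, by rw [dist_eq_norm, add_sub_cancel_left]; exact hh.trans_le (min_le_right _ _)⟩
  let Q : AddSubgroup ℤ :=
    { carrier := {k | ∀ z, z ∈ W ↔ z + ι k ∈ W}
      zero_mem' := by intro z; simp
      add_mem' := by
        intro a b ha hb z
        rw [ha z, hb (z + ι a), map_add, add_assoc]
      neg_mem' := by
        intro a ha z
        have := ha (z + ι (-a))
        rw [this, map_neg]; simp }
  obtain ⟨S0, hS0⟩ := star hur hper hext (min δ1 δ2) (lt_min hδ1 hδ2)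
  obtain ⟨S, hSs, r, hr⟩ := hgen (S0 ∪ S1)
  have := hr (Q.map (AddMonoidHom.mulLeft (K : ℤ))) (by
    have hle : ∀ m m', Ag x S m r → Ag x S m' r → m' ≤ m →
        (m : ℤ) - m' ∈ Q.map (AddMonoidHom.mulLeft (K : ℤ)) := by
      intro m m' h h' hmm
      have hag := h.trans' h'.symm'
      obtain ⟨k, hk⟩ := hS1 m m' (hag.mono' (Finset.union_subset_right hSs))
      have hk0 : 0 ≤ k := by
        by_contra hk0
        have : (K : ℤ) * k < 0 := mul_neg_of_pos_of_neg (by omega) (by omega)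
        omega
      obtain ⟨n, rfl⟩ := Int.eq_ofNat_of_zero_le hk0
      rw [AddSubgroup.mem_map]
      refine ⟨n, hinv _ ?_, hk.symm⟩
      have h1 := hn n 0
      rw [Nat.cast_zero, sub_zero] at h1
      rw [h1, Nat.mul_zero, ← dd_shift x _ _ m', zero_add]
      have e : K * n + m' = m := by
        have : ((K * n + m' : ℕ) : ℤ) = m := by push_cast; linarith
        exact_mod_cast this
      rw [e]
      exact hS0 _ _ (hag.mono' (Finset.union_subset_left hSs))
    intro m m' h h'
    rcases le_total m' m with hh | hh
    · exact hle m m' h h' hh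
    · have := AddSubgroup.neg_mem _ (hle m' m h' h hh)
      rwa [neg_sub] at this)
  rw [AddSubgroup.mem_map] at this
  obtain ⟨k, hk, hk1⟩ := this
  have hk1' : k = 1 := by
    have h2 : (K : ℤ) * k = K := hk1
    have h3 : (K : ℤ) ≠ 0 := by omega
    exact mul_left_cancel₀ h3 (by rw [h2, mul_one])
  subst hk1'
  have hall : ∀ k : ℤ, k ∈ Q := fun k => by
    have := Q.zsmul_mem hk k
    simpa using this
  obtain ⟨k, hk⟩ := hd.exists_mem_open (hW.compl.isOpen.preimage (continuous_const_add w))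
    ⟨v - w, by simpa using hv⟩
  exact hk ((hall k w).mp hw)

theorem small_return (hrec : Recurrent x) (hur : UniformlyRecurrent x) (hper : ¬ Periodic x)
    (hext : ExtW C x)
    (hK : 1 ≤ K) (S1 : Finset ℕ) (hS1 : ∀ m m', Ag x S1 m m' → (K : ℤ) ∣ (m : ℤ) - m')
    (hn : ∀ n n' : ℕ, ‖ι ((n : ℤ) - n')‖ = dd x (K * n) (K * n')) (η : ℝ) (hη : 0 < η) (L N : ℕ) :
    ∃ R : ℕ, N ≤ R ∧ ‖ι R‖ < η ∧ ∀ i < L, x i = x (K * R + i) := by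
  classical
  obtain ⟨S0, hS0⟩ := star hur hper hext η hη
  obtain ⟨M, hM1, hM2⟩ := rec_far hrec (L + (S0 ∪ S1).sup id + 1) (K * N)
  have hag : Ag x (S0 ∪ S1) M 0 := by
    intro s hs
    have : s ≤ (S0 ∪ S1).sup id := Finset.le_sup (f := id) hs
    rw [zero_add, hM2 s (by omega)]
  have hdv := hS1 M 0 (hag.mono' Finset.subset_union_right)
  rw [Nat.cast_zero, sub_zero] at hdv
  obtain ⟨R, rfl⟩ : K ∣ M := by exact_mod_cast hdv
  refine ⟨R, Nat.le_of_mul_le_mul_left hM1 hK, ?_, fun i hi => hM2 i (by omega)⟩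
  have h1 := hn R 0
  rw [Nat.cast_zero, sub_zero] at h1
  rw [h1, Nat.mul_zero]
  exact hS0 _ _ (hag.mono' Finset.subset_union_left)

/-- closure of the set of times with letter `a` in the class `j`. -/
def FF (x : Seq2) (K j : ℕ) (a : Fin 2) : Set H := closure {h | ∃ n : ℕ, x (j + K * n) = a ∧ h = ι n}

theorem FF_far (hrec : Recurrent x) (hur : UniformlyRecurrent x) (hper : ¬ Periodic x)
    (hext : ExtW C x)
    (hK : 1 ≤ K) (S1 : Finset ℕ) (hS1 : ∀ m m', Ag x S1 m m' → (K : ℤ) ∣ (m : ℤ) - m')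
    (hn : ∀ n n' : ℕ, ‖ι ((n : ℤ) - n')‖ = dd x (K * n) (K * n')) {j : ℕ} {a : Fin 2} {g : H}
    (hg : g ∈ FF ι x K j a) (η : ℝ) (hη : 0 < η) (N : ℕ) :
    ∃ n : ℕ, N ≤ j + K * n ∧ dist (ι n) g < η ∧ x (j + K * n) = a := by
  unfold FF at hg
  rw [Metric.mem_closure_iff] at hg
  obtain ⟨_, ⟨n, h1, rfl⟩, h2⟩ := hg (η / 2) (by linarith)
  obtain ⟨R, h3, h4, h5⟩ := small_return ι hrec hur hper hext hK S1 hS1 hn (η / 2) (by linarith)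
    (j + K * n + 1) N
  refine ⟨n + R, by nlinarith, ?_, ?_⟩
  · have : dist (ι ((n + R : ℕ) : ℤ)) (ι n) < η / 2 := by
      rw [dist_eq_norm, Nat.cast_add, map_add, add_sub_cancel_left]; exact h4
    calc dist (ι ((n + R : ℕ) : ℤ)) g ≤ dist (ι ((n + R : ℕ) : ℤ)) (ι n) + dist (ι n) g := dist_triangle _ _ _
      _ < η := by rw [dist_comm g] at h2; linarith
  · rw [← h1, h5 (j + K * n) (by omega)]; congr 1; ring

theorem FF_union (hrec : Recurrent x) (hur : UniformlyRecurrent x) (hper : ¬ Periodic x)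
    (hext : ExtW C x)
    (hK : 1 ≤ K) (S1 : Finset ℕ) (hS1 : ∀ m m', Ag x S1 m m' → (K : ℤ) ∣ (m : ℤ) - m')
    (hd : DenseRange ι)
    (hn : ∀ n n' : ℕ, ‖ι ((n : ℤ) - n')‖ = dd x (K * n) (K * n')) (j : ℕ) (h : H) :
    h ∈ FF ι x K j 0 ∨ h ∈ FF ι x K j 1 := by
  have hcl : IsClosed (FF ι x K j 0 ∪ FF ι x K j 1) := isClosed_closure.union isClosed_closure
  have : h ∈ closure (FF ι x K j 0 ∪ FF ι x K j 1) := by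
    rw [Metric.mem_closure_iff]
    intro ε hε
    obtain ⟨k, hk⟩ := hd.exists_dist_lt h (show 0 < ε / 2 by linarith)
    obtain ⟨R, h3, h4, -⟩ := small_return ι hrec hur hper hext hK S1 hS1 hn (ε / 2) (by linarith)
      0 k.natAbs
    obtain ⟨n, hn'⟩ := Int.eq_ofNat_of_zero_le (show 0 ≤ k + R by omega)
    refine ⟨ι n, ?_, ?_⟩
    · by_cases hx : x (j + K * n) = 1
      · exact Or.inr (subset_closure ⟨n, hx, rfl⟩)
      · exact Or.inl (subset_closure ⟨n, fin2_ne_one hx, rfl⟩)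
    · have h6 : dist (ι k) (ι n) < ε / 2 := by
        rw [← hn', dist_comm, dist_eq_norm, map_add, add_sub_cancel_left]; exact h4
      calc dist h (ι n) ≤ dist h (ι k) + dist (ι k) (ι n) := dist_triangle _ _ _
        _ < ε := by linarith
  rwa [hcl.closure_eq] at this

theorem D_finite (hrec : Recurrent x) (hur : UniformlyRecurrent x) (hper : ¬ Periodic x)
    (hext : ExtW C x)
    (hK : 1 ≤ K) (S1 : Finset ℕ) (hS1 : ∀ m m', Ag x S1 m m' → (K : ℤ) ∣ (m : ℤ) - m')
    (hn : ∀ n n' : ℕ, ‖ι ((n : ℤ) - n')‖ = dd x (K * n) (K * n')) (j : ℕ) :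
    (FF ι x K j 0 ∩ FF ι x K j 1).Finite := by
  classical
  by_contra hinf
  obtain ⟨T, hT, hTc⟩ := Set.Infinite.exists_subset_card_eq hinf (C + 1)
  -- separation
  obtain ⟨ε, hε, hsep⟩ : ∃ ε > 0, ∀ g ∈ T, ∀ g' ∈ T, g ≠ g' → 3 * ε ≤ dist g g' := by
    obtain ⟨δ, hδ, h⟩ : ∃ δ > 0, ∀ p ∈ T.offDiag, δ ≤ dist p.1 p.2 := by
      rcases T.offDiag.eq_empty_or_nonempty with h | h
      · exact ⟨1, one_pos, by simp [h]⟩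
      · obtain ⟨p, hp, hmin⟩ := T.offDiag.exists_min_image (fun p => dist p.1 p.2) h
        refine ⟨dist p.1 p.2, ?_, hmin⟩
        rw [Finset.mem_offDiag] at hp
        exact dist_pos.mpr hp.2.2
    refine ⟨δ / 3, by linarith, fun g hg g' hg' hne => ?_⟩
    have := h (g, g') (by simp [hg, hg', hne])
    linarith
  obtain ⟨S0, hS0⟩ := star hur hper hext ε hε
  obtain ⟨S, hSs, hS⟩ := hext (S0 ∪ S1)
  have hddι : ∀ n n' u m m' : ℕ, m + u = j + K * n → m' + u = j + K * n' →
      dist (ι n) (ι n') = dd x m m' := by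
    intro n n' u m m' h h'
    rw [dist_eq_norm, ← map_sub, hn, ← dd_shift x m m' u, h, h', add_comm j, add_comm j, dd_shift]
  have hgood : ∀ u, ∃ g ∈ T, ∀ m m' n, Ag x S m m' → m + u = j + K * n → dist (ι n) g < ε →
      x (m + u) = x (m' + u) := by
    intro u
    by_contra hcon
    push Not at hcon
    choose! m m' n h1 h2 h3 h4 using hcon
    have hsepm : ∀ g ∈ T, ∀ g' ∈ T, g ≠ g' → ¬ Ag x S (m g) (m g') := by
      intro g hg g' hg' hne hag
      have h5 := hS0 _ _ (hag.mono' (Finset.union_subset_left hSs))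
      rw [← hddι (n g) (n g') u _ _ (h2 g hg) (h2 g' hg')] at h5
      have h6 := hsep g hg g' hg' hne
      have h7 := h3 g hg
      have h8 := h3 g' hg'
      have h9 := dist_triangle g (ι (n g)) g'
      have h10 := dist_triangle (ι (n g)) (ι (n g')) g'
      rw [dist_comm g (ι (n g))] at h9
      linarith
    have hinj : Set.InjOn m (T : Set H) := by
      intro g hg g' hg' hgg
      by_contra hne
      exact hsepm g hg g' hg' hne (by rw [hgg]; exact Ag.refl' _ _ _)
    have h6 := hS u (T.image m) (by
      intro a ha
      rw [Finset.mem_image] at ha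
      obtain ⟨g, hg, rfl⟩ := ha
      exact ⟨m' g, h1 g hg, h4 g hg⟩) (by
      intro a ha b hb hne
      rw [Finset.mem_image] at ha hb
      obtain ⟨g, hg, rfl⟩ := ha
      obtain ⟨g', hg', rfl⟩ := hb
      exact hsepm g hg g' hg' (fun h => hne (by rw [h])))
    rw [Finset.card_image_of_injOn hinj, hTc] at h6
    omega
  obtain ⟨R, hR1, hR2⟩ := exists_reps x S
  choose rep hrep1 hrep2 using hR2
  let touch : ℕ × ℕ → Prop := fun p => ∀ η > 0, ∃ m m', Ag x S m p.1 ∧ Ag x S m' p.2 ∧ dd x m m' < η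
  let V : ℕ × ℕ → Set ℕ := fun p =>
    {u | (∀ m, Ag x S m p.1 → x (m + u) = 1) ∧ (∀ m, Ag x S m p.2 → x (m + u) = 0)}
  have hcover : ∀ u, ∃ p ∈ (R ×ˢ R).filter touch, u ∈ V p := by
    intro u
    obtain ⟨g, hg, hgu⟩ := hgood u
    have hg' := hT hg
    have hk : ∀ k : ℕ, ∃ m m', dd x m m' < 2 / ((k : ℝ) + 1) ∧
        (∀ y, Ag x S y m → x (y + u) = 1) ∧ (∀ y, Ag x S y m' → x (y + u) = 0) := by
      intro k
      have hη : 0 < min ε (1 / ((k : ℝ) + 1)) := lt_min hε (by positivity)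
      obtain ⟨n, h1, h2, h3⟩ := FF_far ι hrec hur hper hext hK S1 hS1 hn hg'.2 _ hη u
      obtain ⟨n', h1', h2', h3'⟩ := FF_far ι hrec hur hper hext hK S1 hS1 hn hg'.1 _ hη u
      have e : j + K * n - u + u = j + K * n := by omega
      have e' : j + K * n' - u + u = j + K * n' := by omega
      refine ⟨j + K * n - u, j + K * n' - u, ?_, ?_, ?_⟩
      · rw [← hddι n n' u _ _ e e']
        have h4 := dist_triangle (ι n) g (ι n')
        rw [dist_comm g] at h4
        have h5 := min_le_right ε (1 / ((k : ℝ) + 1))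
        have : 2 / ((k : ℝ) + 1) = 1 / ((k : ℝ) + 1) + 1 / ((k : ℝ) + 1) := by ring
        linarith
      · intro y hy
        rw [← hgu _ y n hy.symm' e (h2.trans_le (min_le_left _ _)), e, h3]
      · intro y hy
        rw [← hgu _ y n' hy.symm' e' (h2'.trans_le (min_le_left _ _)), e', h3']
    choose m m' hk1 hk2 hk3 using hk
    obtain ⟨⟨p, hp⟩, hinfp⟩ := Finite.exists_infinite_fiber
      (fun k => (⟨(rep (m k), rep (m' k)), by simp [hrep1]⟩ : {p // p ∈ R ×ˢ R}))
    have hinfp' := Set.infinite_coe_iff.mp hinfp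
    have hpk : ∀ N, ∃ k, N < k ∧ rep (m k) = p.1 ∧ rep (m' k) = p.2 := by
      intro N
      obtain ⟨k, hk, hkN⟩ := hinfp'.exists_gt N
      have : (⟨(rep (m k), rep (m' k)), by simp [hrep1]⟩ : {p // p ∈ R ×ˢ R}) = ⟨p, hp⟩ := hk
      rw [Subtype.mk.injEq] at this
      exact ⟨k, hkN, by rw [← this], by rw [← this]⟩
    refine ⟨p, ?_, ?_, ?_⟩
    · rw [Finset.mem_filter]
      refine ⟨hp, fun η hη => ?_⟩
      obtain ⟨N, hN⟩ := exists_nat_gt (2 / η)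
      obtain ⟨k, hkN, h1, h2⟩ := hpk N
      refine ⟨m k, m' k, by rw [← h1]; exact hrep2 _, by rw [← h2]; exact hrep2 _, (hk1 k).trans ?_⟩
      rw [div_lt_iff₀ (by positivity)]
      rw [div_lt_iff₀ hη] at hN
      have : (N : ℝ) < k := by exact_mod_cast hkN
      nlinarith
    · obtain ⟨k, -, h1, h2⟩ := hpk 0
      intro y hy
      refine hk2 k y (hy.trans' ?_)
      rw [← h1]; exact (hrep2 _).symm'
    · obtain ⟨k, -, h1, h2⟩ := hpk 0
      intro y hy
      refine hk3 k y (hy.trans' ?_)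
      rw [← h2]; exact (hrep2 _).symm'
  have h1 := dn_sum_ge _ V hcover
  have h2 : ∑ p ∈ (R ×ˢ R).filter touch, dn (V p) = 0 := by
    apply Finset.sum_eq_zero
    intro p hp
    rw [Finset.mem_filter] at hp
    apply le_antisymm _ (dn_nonneg _)
    apply le_of_forall_pos_le_add
    intro η hη
    obtain ⟨m, m', h3, h4, h5⟩ := hp.2 η hη
    rw [zero_add]
    refine le_trans (dn_mono ?_) h5.le
    intro u hu
    simp only [Set.mem_ofPred_eq]
    rw [hu.1 m h3, hu.2 m' h4]; decide
  linarith

theorem exists_j0 (hrec : Recurrent x) (hur : UniformlyRecurrent x) (hper : ¬ Periodic x)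
    (hext : ExtW C x)
    (hK : 1 ≤ K) (S1 : Finset ℕ) (hS1 : ∀ m m', Ag x S1 m m' → (K : ℤ) ∣ (m : ℤ) - m')
    (hinj : Function.Injective ι)
    (hn : ∀ n n' : ℕ, ‖ι ((n : ℤ) - n')‖ = dd x (K * n) (K * n')) :
    ∃ j < K, (FF ι x K j 0)ᶜ.Nonempty ∧ (FF ι x K j 1)ᶜ.Nonempty := by
  classical
  by_contra hcon
  push Not at hcon
  have hfin : ∀ j < K, ∃ N : ℕ, ∃ c : Fin 2, ∀ n, N ≤ n → x (j + K * n) = c := by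
    intro j hj
    have key : ∀ c c' : Fin 2, c ≠ c' → (FF ι x K j c)ᶜ = ∅ → ∃ N : ℕ, ∃ c : Fin 2, ∀ n, N ≤ n → x (j + K * n) = c := by
      intro c c' hcc he
      have he' : FF ι x K j c = Set.univ := by rwa [Set.compl_empty_iff] at he
      have hD := D_finite ι hrec hur hper hext hK S1 hS1 hn j
      have hF : (FF ι x K j c').Finite := by
        refine hD.subset (fun g hg => ?_)
        have hgc : g ∈ FF ι x K j c := by rw [he']; trivial
        have : (c = 0 ∧ c' = 1) ∨ (c = 1 ∧ c' = 0) := by omega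
        rcases this with ⟨rfl, rfl⟩ | ⟨rfl, rfl⟩
        · exact ⟨hgc, hg⟩
        · exact ⟨hg, hgc⟩
      have hfs : {n : ℕ | x (j + K * n) = c'}.Finite := by
        refine Set.Finite.of_finite_image (f := fun n : ℕ => ι n) (hF.subset ?_) ?_
        · rintro _ ⟨n, hn, rfl⟩
          exact subset_closure ⟨n, hn, rfl⟩
        · intro a _ b _ hab
          exact_mod_cast hinj hab
      obtain ⟨N, hN⟩ := hfs.bddAbove
      refine ⟨N + 1, c, fun n hn => ?_⟩
      have : x (j + K * n) ≠ c' := fun h => by have := hN h; omega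
      omega
    by_cases h0 : (FF ι x K j 0)ᶜ.Nonempty
    · exact key 1 0 (by decide) (hcon j hj h0)
    · exact key 0 1 (by decide) (Set.not_nonempty_iff_eq_empty.mp h0)
  choose! N c hNc using hfin
  refine hper (periodic_of_blocks hur K hK (fun _ => ⟨K * ((Finset.range K).sup N + 1), fun i _ => ?_⟩))
  set v := K * ((Finset.range K).sup N + 1) + i with hv
  have hj : v % K < K := Nat.mod_lt _ hK
  have hdec : v = v % K + K * (v / K) := (Nat.mod_add_div v K).symm
  have hge : N (v % K) ≤ v / K := by
    have h1 : N (v % K) ≤ (Finset.range K).sup N := Finset.le_sup (f := N) (by simpa using hj)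
    have h2 : (Finset.range K).sup N + 1 ≤ v / K := by
      rw [Nat.le_div_iff_mul_le hK, hv, mul_comm]; omega
    omega
  have e1 := hNc _ hj (v / K) hge
  have e2 := hNc _ hj (v / K + 1) (by omega)
  rw [← hdec] at e1
  rw [show v % K + K * (v / K + 1) = v + K by rw [Nat.mul_add, ← add_assoc, ← hdec, mul_one]] at e2
  rw [e1, e2]

end data

end filePG

section filePT1
open Set Filter Topology MeasureTheory

section pieces
variable {H : Type} [NormedAddCommGroup H] [CompactSpace H] [ConnectedSpace H]

theorem pieces_false [MeasurableSpace H] [BorelSpace H] (μ : Measure H) [μ.IsAddHaarMeasure]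
    {ι : Type} [Fintype ι] (M : ι → Set H) (E : Finset H) (h0 : 0 ∈ E)
    (hcard : E.card < Fintype.card ι) (hopen : ∀ i, IsOpen (M i))
    (hdisj : ∀ i j, i ≠ j → Disjoint (M i) (M j)) (hun : ⋃ i, M i = (E : Set H)ᶜ)
    (hcl : ∀ i, (0 : H) ∈ closure (M i)) (hpre : ∀ i, IsPreconnected (insert 0 (M i))) : False := by
  classical
  have hc0 : 0 < E.card := Finset.card_pos.mpr ⟨0, h0⟩
  have hne : Nonempty ι := Fintype.card_pos_iff.mp (by omega)
  obtain ⟨i0, hi0⟩ := Finite.exists_min (fun i => μ (M i))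
  have hMne : (M i0).Nonempty := by
    rw [← closure_nonempty_iff]; exact ⟨0, hcl i0⟩
  obtain ⟨r, hr⟩ := hMne
  have hME : ∀ i, ∀ y ∈ M i, y ∉ E := by
    intro i y hy hyE
    have : y ∈ (E : Set H)ᶜ := by rw [← hun]; exact Set.mem_iUnion.mpr ⟨i, hy⟩
    exact this hyE
  obtain ⟨i, hi⟩ : ∃ i, ∀ e ∈ E, e - r ∉ M i := by
    by_contra hcon
    push Not at hcon
    choose e he1 he2 using hcon
    have hinj : Function.Injective (fun i => (⟨e i, he1 i⟩ : {y // y ∈ E})) := by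
      intro i j hij
      by_contra hne
      have : e i = e j := congrArg Subtype.val hij
      exact Set.disjoint_left.mp (hdisj i j hne) (he2 i) (by rw [this]; exact he2 j)
    have := Fintype.card_le_of_injective _ hinj
    rw [Fintype.card_coe] at this
    omega
  have hT : (fun y => r + y) '' (insert 0 (M i)) ⊆ M i0 := by
    have hp : IsPreconnected ((fun y => r + y) '' (insert 0 (M i))) :=
      (hpre i).image _ (by fun_prop)
    have hTE : (fun y => r + y) '' (insert 0 (M i)) ⊆ M i0 ∪ ⋃ k ∈ {k | k ≠ i0}, M k := by
      rintro _ ⟨y, hy, rfl⟩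
      have : r + y ∈ (E : Set H)ᶜ := by
        intro hE
        rcases hy with rfl | hy
        · rw [add_zero] at hE; exact hME i0 r hr hE
        · exact hi _ hE (by simpa using hy)
      rw [← hun] at this
      obtain ⟨k, hk⟩ := Set.mem_iUnion.mp this
      by_cases hki : k = i0
      · subst hki; exact Or.inl hk
      · exact Or.inr (Set.mem_biUnion hki hk)
    refine hp.subset_left_of_subset_union (hopen i0) (isOpen_biUnion fun k _ => hopen k) ?_ hTE ?_
    · rw [Set.disjoint_iUnion₂_right]
      intro k hk
      exact hdisj _ _ (fun h => hk h.symm)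
    · exact ⟨r, ⟨0, Set.mem_insert _ _, by simp⟩, hr⟩
  obtain ⟨j, hj⟩ : ∃ j, j ≠ i := by
    have : Nontrivial ι := Fintype.one_lt_card_iff_nontrivial.mp (by omega)
    exact exists_ne i
  have hopj : IsOpen ((fun y => r + y) '' (M j)) := (Homeomorph.addLeft r).isOpenMap _ (hopen j)
  have hVne : (((fun y => r + y) '' (M j)) ∩ M i0).Nonempty := by
    have h1 : IsOpen ((fun y => r + y) ⁻¹' (M i0)) := (hopen i0).preimage (by fun_prop)
    obtain ⟨y, hy1, hy2⟩ := mem_closure_iff.mp (hcl j) _ h1 (by simpa using hr)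
    exact ⟨r + y, ⟨y, hy2, rfl⟩, hy1⟩
  have hVpos : 0 < μ (((fun y => r + y) '' (M j)) ∩ M i0) := (hopj.inter (hopen i0)).measure_pos μ hVne
  have himg : ∀ s : Set H, μ ((fun y => r + y) '' s) = μ s := by
    intro s
    rw [Set.image_add_left, measure_preimage_add]
  have hle : μ ((fun y => r + y) '' (M i)) + μ (((fun y => r + y) '' (M j)) ∩ M i0) ≤ μ (M i0) := by
    rw [← measure_union _ (hopj.inter (hopen i0)).measurableSet]
    · apply measure_mono
      apply Set.union_subset
      · exact (Set.image_mono (Set.subset_insert _ _)).trans hT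
      · exact Set.inter_subset_right
    · rw [Set.disjoint_left]
      rintro _ ⟨y, hy, rfl⟩ ⟨⟨y', hy', hyy⟩, _⟩
      simp only [add_right_inj] at hyy
      subst hyy
      exact Set.disjoint_left.mp (hdisj _ _ hj) hy' hy
  rw [himg] at hle
  have hfin : μ (M i) ≠ ⊤ := measure_ne_top _ _
  have h5 : μ (M i) + 0 < μ (M i) + μ (((fun y => r + y) '' (M j)) ∩ M i0) :=
    ENNReal.add_lt_add_left hfin hVpos
  rw [add_zero] at h5
  exact absurd (h5.trans_le (hle.trans (hi0 i))) (lt_irrefl _)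

theorem single_aux {P Q : Set H} (hP : IsOpen P) (hQ : IsOpen Q) (hd : Disjoint P Q)
    (hPne : P.Nonempty) (hu : P ∪ Q = {0}ᶜ) : (0 : H) ∈ closure P ∧ IsPreconnected (insert 0 P) := by
  have h0P : (0 : H) ∉ P := fun h => by
    have : (0 : H) ∈ ({0} : Set H)ᶜ := by rw [← hu]; exact Or.inl h
    exact this rfl
  have hcase : ∀ y : H, y = 0 ∨ y ∈ P ∨ y ∈ Q := by
    intro y
    by_cases h : y = 0
    · exact Or.inl h
    · have : y ∈ P ∪ Q := by rw [hu]; exact h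
      exact Or.inr this
  constructor
  · by_contra h
    have hc : IsClosed P := by
      rw [← closure_subset_iff_isClosed]
      intro y hy
      rcases hcase y with rfl | hy' | hy'
      · exact absurd hy h
      · exact hy'
      · obtain ⟨z, hz1, hz2⟩ := mem_closure_iff.mp hy Q hQ hy'
        exact absurd hz1 (Set.disjoint_left.mp hd hz2)
    have := IsClopen.eq_univ ⟨hc, hP⟩ hPne
    rw [this] at h0P; exact h0P trivial
  · rw [isPreconnected_iff_subset_of_disjoint]
    have key : ∀ u v : Set H, IsOpen u → IsOpen v → insert 0 P ⊆ u ∪ v →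
        insert 0 P ∩ (u ∩ v) = ∅ → (0 : H) ∈ u → insert 0 P ⊆ u := by
      intro u v hu' hv hs hdis h0
      have hY : P ∩ v = ∅ := by
        by_contra hne
        have hcl : IsClosed (P ∩ v) := by
          have : (P ∩ v) = (Q ∪ u)ᶜ := by
            ext y
            constructor
            · rintro ⟨h1, h2⟩ (h3 | h3)
              · exact Set.disjoint_left.mp hd h1 h3
              · have : y ∈ insert 0 P ∩ (u ∩ v) := ⟨Or.inr h1, h3, h2⟩
                rw [hdis] at this; exact this
            · intro h
              rcases hcase y with rfl | hy' | hy'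
              · exact absurd (Or.inr h0) h
              · refine ⟨hy', ?_⟩
                rcases hs (Or.inr hy') with h1 | h1
                · exact absurd (Or.inr h1) h
                · exact h1
              · exact absurd (Or.inl hy') h
          rw [this]; exact (hQ.union hu').isClosed_compl
        have := IsClopen.eq_univ ⟨hcl, hP.inter hv⟩ (Set.nonempty_iff_ne_empty.mpr hne)
        exact h0P (this.symm ▸ (Set.mem_univ (0:H)) : (0:H) ∈ P ∩ v).1
      intro y hy
      rcases hs hy with h1 | h1
      · exact h1
      · rcases hy with rfl | hy
        · exact h0
        · have : y ∈ P ∩ v := ⟨hy, h1⟩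
          rw [hY] at this; exact absurd this (Set.notMem_empty _)
    intro u v hu' hv hs hdis
    rcases hs (Set.mem_insert _ _) with h0 | h0
    · exact Or.inl (key u v hu' hv hs hdis h0)
    · exact Or.inr (key v u hv hu' (by rwa [Set.union_comm]) (by rwa [Set.inter_comm v]) h0)

theorem single_zero [MeasurableSpace H] [BorelSpace H] (μ : Measure H) [μ.IsAddHaarMeasure]
    {P Q : Set H} (hP : IsOpen P) (hQ : IsOpen Q) (hd : Disjoint P Q)
    (hPne : P.Nonempty) (hQne : Q.Nonempty) (hu : P ∪ Q = {0}ᶜ) : False := by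
  have h1 := single_aux hP hQ hd hPne hu
  have h2 := single_aux hQ hP hd.symm hQne (by rw [Set.union_comm]; exact hu)
  refine pieces_false μ (ι := Bool) (fun b => if b then P else Q) {0} (by simp) (by simp) ?_ ?_ ?_ ?_ ?_
  · intro b; cases b <;> simp [hP, hQ]
  · intro b c hbc; cases b <;> cases c <;> simp_all [hd.symm]
  · rw [Finset.coe_singleton, ← hu]
    ext y; simp [or_comm]
  · intro b; cases b <;> simp [h1.1, h2.1]
  · intro b; cases b
    · simpa using h2.2
    · simpa using h1.2

theorem single_pt [MeasurableSpace H] [BorelSpace H] (μ : Measure H) [μ.IsAddHaarMeasure] (e : H)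
    {P Q : Set H} (hP : IsOpen P) (hQ : IsOpen Q) (hd : Disjoint P Q)
    (hPne : P.Nonempty) (hQne : Q.Nonempty) (hu : P ∪ Q = {e}ᶜ) : False := by
  refine single_zero μ (P := (fun y => y + e) ⁻¹' P) (Q := (fun y => y + e) ⁻¹' Q)
    (hP.preimage (by fun_prop)) (hQ.preimage (by fun_prop)) (hd.preimage _) ?_ ?_ ?_
  · obtain ⟨y, hy⟩ := hPne; exact ⟨y - e, by simpa using hy⟩
  · obtain ⟨y, hy⟩ := hQne; exact ⟨y - e, by simpa using hy⟩
  · rw [← Set.preimage_union, hu]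
    ext y; simp

theorem three_zero [MeasurableSpace H] [BorelSpace H] (μ : Measure H) [μ.IsAddHaarMeasure] (e : H)
    (he : e ≠ 0) (M : Fin 3 → Set H) (hopen : ∀ i, IsOpen (M i)) (hne : ∀ i, (M i).Nonempty)
    (hdisj : ∀ i j, i ≠ j → Disjoint (M i) (M j)) (hun : ⋃ i, M i = {0, e}ᶜ) : False := by
  classical
  have hclM : ∀ i, ∀ y ∈ closure (M i), y = 0 ∨ y = e ∨ y ∈ M i := by
    intro i y hy
    by_contra hcon
    push Not at hcon
    have : y ∈ ⋃ i, M i := by rw [hun]; simp [hcon.1, hcon.2.1]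
    obtain ⟨k, hk⟩ := Set.mem_iUnion.mp this
    obtain ⟨z, hz1, hz2⟩ := mem_closure_iff.mp hy _ (hopen k) hk
    have hki : k ≠ i := fun h => hcon.2.2 (h ▸ hk)
    exact Set.disjoint_left.mp (hdisj k i hki) hz1 hz2
  have hnot : ∀ i, (0 : H) ∉ M i ∧ e ∉ M i := by
    intro i
    constructor <;> intro h
    · have : (0 : H) ∈ ({0, e} : Set H)ᶜ := by rw [← hun]; exact Set.mem_iUnion.mpr ⟨i, h⟩
      exact this (by simp)
    · have : e ∈ ({0, e} : Set H)ᶜ := by rw [← hun]; exact Set.mem_iUnion.mpr ⟨i, h⟩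
      exact this (by simp)
  -- no clopen-modulo-e subset of a piece
  have hmod : ∀ Y : Set H, IsOpen Y → Y.Nonempty → (0 : H) ∉ Y → e ∉ Y →
      (∀ y ∈ closure Y, y = e ∨ y ∈ Y) → False := by
    intro Y hY hYne h0 heY hcl
    have hc : IsClosed (insert e Y) := by
      rw [← closure_subset_iff_isClosed]
      intro y hy
      rw [Set.insert_eq, closure_union, closure_singleton] at hy
      rcases hy with hy | hy
      · exact Or.inl hy
      · exact hcl y hy
    refine single_pt μ e (P := Y) (Q := (insert e Y)ᶜ) hY hc.isOpen_compl ?_ hYne ⟨0, ?_⟩ ?_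
    · rw [Set.disjoint_left]; intro y hy hy'; exact hy' (Or.inr hy)
    · rintro (h | h)
      · exact he h.symm
      · exact h0 h
    · ext y
      simp only [Set.mem_union, Set.mem_compl_iff, Set.mem_insert_iff, Set.mem_singleton_iff, not_or]
      constructor
      · rintro (h | h)
        · rintro rfl; exact heY h
        · exact h.1
      · intro h
        by_cases hy : y ∈ Y
        · exact Or.inl hy
        · exact Or.inr ⟨h, hy⟩
  refine pieces_false μ M {0, e} (by simp) ?_ hopen hdisj ?_ ?_ ?_
  · rw [Finset.card_pair he.symm]; simp
  · rw [hun]; simp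
  · intro i
    by_contra h0
    refine hmod (M i) (hopen i) (hne i) (hnot i).1 (hnot i).2 (fun y hy => ?_)
    rcases hclM i y hy with rfl | h | h
    · exact absurd hy h0
    · exact Or.inl h
    · exact Or.inr h
  · intro i
    rw [isPreconnected_iff_subset_of_disjoint]
    have key : ∀ u v : Set H, IsOpen u → IsOpen v → insert 0 (M i) ⊆ u ∪ v →
        insert 0 (M i) ∩ (u ∩ v) = ∅ → (0 : H) ∈ u → insert 0 (M i) ⊆ u := by
      intro u v hu' hv hs hdis h0
      have hY : M i ∩ v = ∅ := by
        by_contra hne'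
        refine hmod (M i ∩ v) ((hopen i).inter hv) (Set.nonempty_iff_ne_empty.mpr hne')
          (fun h => (hnot i).1 h.1) (fun h => (hnot i).2 h.1) (fun y hy => ?_)
        have hyu : y ∉ u := by
          intro hyu
          obtain ⟨z, hz1, hz2⟩ := mem_closure_iff.mp hy u hu' hyu
          have : z ∈ insert 0 (M i) ∩ (u ∩ v) := ⟨Or.inr hz2.1, hz1, hz2.2⟩
          rw [hdis] at this; exact this
        rcases hclM i y (closure_mono Set.inter_subset_left hy) with rfl | h | h
        · exact absurd h0 hyu
        · exact Or.inl h
        · refine Or.inr ⟨h, ?_⟩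
          rcases hs (Or.inr h) with h1 | h1
          · exact absurd h1 hyu
          · exact h1
      intro y hy
      rcases hs hy with h1 | h1
      · exact h1
      · rcases hy with rfl | hy
        · exact h0
        · have : y ∈ M i ∩ v := ⟨hy, h1⟩
          rw [hY] at this; exact absurd this (Set.notMem_empty _)
    intro u v hu' hv hs hdis
    rcases hs (Set.mem_insert _ _) with h0 | h0
    · exact Or.inl (key u v hu' hv hs hdis h0)
    · exact Or.inr (key v u hv hu' (by rwa [Set.union_comm]) (by rwa [Set.inter_comm v]) h0)

theorem three_pt [MeasurableSpace H] [BorelSpace H] (μ : Measure H) [μ.IsAddHaarMeasure] (d e : H)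
    (he : e ≠ d) (P Q R : Set H) (hP : IsOpen P) (hQ : IsOpen Q) (hR : IsOpen R)
    (hPn : P.Nonempty) (hQn : Q.Nonempty) (hRn : R.Nonempty)
    (hPQ : Disjoint P Q) (hPR : Disjoint P R) (hQR : Disjoint Q R)
    (hun : P ∪ Q ∪ R = {d, e}ᶜ) : False := by
  refine three_zero μ (e - d) (sub_ne_zero.mpr he)
    (fun i => (fun y => y + d) ⁻¹' (![P, Q, R] i)) ?_ ?_ ?_ ?_
  · intro i
    refine IsOpen.preimage (by fun_prop) ?_
    fin_cases i <;> simpa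
  · intro i
    have : (![P, Q, R] i).Nonempty := by fin_cases i <;> simpa
    obtain ⟨y, hy⟩ := this
    exact ⟨y - d, by simpa using hy⟩
  · intro i j hij
    apply Disjoint.preimage
    fin_cases i <;> fin_cases j <;> simp_all [hPQ.symm, hPR.symm, hQR.symm]
  · rw [← Set.preimage_iUnion]
    have : (⋃ i, (![P, Q, R] : Fin 3 → Set H) i) = {d, e}ᶜ := by
      rw [← hun]
      ext y
      simp [Fin.exists_fin_succ, or_assoc]
    rw [this]
    ext y
    simp [eq_sub_iff_add_eq]

end pieces

end filePT1

section filePT2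
open Set Filter Topology MeasureTheory

section lam
variable {H : Type} [NormedAddCommGroup H] [CompactSpace H] [ConnectedSpace H]

theorem lam_zero [Nontrivial H] [MeasurableSpace H] [BorelSpace H] (μ : Measure H)
    [μ.IsAddHaarMeasure]
    (A B : Set H) (hA : IsOpen A) (hB : IsOpen B) (hAB : Disjoint A B) (w : ℝ) (hw : 0 < w)
    (hcov : ∀ z : H, ‖z‖ ≤ 2 * w → z ≠ 0 → z ∈ A ∪ B) (h0A : (0 : H) ∉ A) (h0B : (0 : H) ∉ B)
    (hcA : (0 : H) ∈ closure A) (hcB : (0 : H) ∈ closure B) (p : H) (hp : 2 * w < ‖p‖) :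
    ∃ ρ > 0, ∃ lam : H → ℝ, ContinuousOn lam (Metric.ball 0 ρ) ∧
      (∀ h h' : H, ‖h‖ < ρ → ‖h'‖ < ρ → lam (h + h') = lam h + lam h') ∧
      (∀ h : H, h ≠ 0 → ‖h‖ < ρ → lam h ≠ 0) := by
  classical
  have hdl := Set.disjoint_left.mp hAB
  haveI : (𝓝[≠] (0 : H)).NeBot := inferInstance
  set Q : Set H := {z | w / 2 ≤ ‖z‖ ∧ ‖z‖ ≤ 2 * w} with hQ
  have hQc : IsClosed Q := (isClosed_le continuous_const continuous_norm).inter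
    (isClosed_le continuous_norm continuous_const)
  have hQAB : ∀ z ∈ Q, z ∈ A ∪ B := by
    intro z hz
    refine hcov z hz.2 ?_
    rintro rfl
    have := hz.1
    rw [norm_zero] at this; linarith
  have key : ∀ U V : Set H, IsOpen U → IsOpen V → Disjoint U V → (∀ z ∈ Q, z ∈ U ∪ V) →
      ∃ δ > 0, ∀ z ∈ Q, z ∈ U → ∀ h : H, ‖h‖ < δ → z + h ∈ U := by
    intro U V hU hV hUV hc
    have hcl : IsClosed (Q ∩ U) := by
      have : Q ∩ U = Q ∩ Vᶜ := by
        ext z; constructor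
        · rintro ⟨h1, h2⟩; exact ⟨h1, fun h3 => Set.disjoint_left.mp hUV h2 h3⟩
        · rintro ⟨h1, h2⟩; exact ⟨h1, (hc z h1).resolve_right h2⟩
      rw [this]; exact hQc.inter hV.isClosed_compl
    obtain ⟨δ, hδ, hs⟩ := hcl.isCompact.exists_thickening_subset_open hU Set.inter_subset_right
    refine ⟨δ, hδ, fun z hz hzU h hh => hs ?_⟩
    rw [Metric.mem_thickening_iff]
    exact ⟨z, ⟨hz, hzU⟩, by simpa [dist_eq_norm] using hh⟩
  obtain ⟨δ1, hδ1, hk1⟩ := key A B hA hB hAB hQAB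
  obtain ⟨δ2, hδ2, hk2⟩ := key B A hB hA hAB.symm (fun z hz => (hQAB z hz).symm)
  set ρ := min (w / 2) (min δ1 δ2) with hρ
  have hρ0 : 0 < ρ := by positivity
  have hρw : ρ ≤ w / 2 := min_le_left _ _
  have hρ1 : ρ ≤ δ1 := (min_le_right _ _).trans (min_le_left _ _)
  have hρ2 : ρ ≤ δ2 := (min_le_right _ _).trans (min_le_right _ _)
  set f : H → ℝ := A.indicator (fun _ => (1 : ℝ)) with hf
  have hfm : Measurable f := measurable_const.indicator hA.measurableSet
  have hfb : ∀ z, |f z| ≤ 1 := by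
    intro z; simp only [hf, Set.indicator]; split_ifs <;> simp
  have hfc : ∀ z ∈ A ∪ B, ContinuousAt f z := by
    rintro z (hz | hz)
    · refine (continuousAt_const (y := (1 : ℝ))).congr ?_
      filter_upwards [hA.mem_nhds hz] with y hy
      simp [hf, hy]
    · refine (continuousAt_const (y := (0 : ℝ))).congr ?_
      filter_upwards [hB.mem_nhds hz] with y hy
      have : y ∉ A := fun h => hdl h hy
      simp [hf, this]
  have hfQ : ∀ z ∈ Q, ∀ h : H, ‖h‖ < ρ → f z - f (z + h) = 0 := by
    intro z hz h hh
    rcases hQAB z hz with h1 | h1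
    · have := hk1 z hz h1 h (by linarith)
      simp [hf, h1, this]
    · have := hk2 z hz h1 h (by linarith)
      have n1 : z ∉ A := fun h => hdl h h1
      have n2 : z + h ∉ A := fun h => hdl h this
      simp [hf, n1, n2]
  set W : Set H := Metric.ball 0 w with hW
  have hWm : MeasurableSet W := Metric.isOpen_ball.measurableSet
  have memW : ∀ z, z ∈ W ↔ ‖z‖ < w := by intro z; simp [hW]
  set G : H → H → ℝ := fun h => W.indicator (fun z => f z - f (z + h)) with hG
  have hGm : ∀ h, Measurable (G h) := fun h =>
    (hfm.sub (hfm.comp (measurable_add_const h))).indicator hWm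
  have hGb : ∀ h z, ‖G h z‖ ≤ 2 := by
    intro h z
    simp only [hG, Set.indicator]
    split_ifs
    · have := hfb z; have := hfb (z + h)
      rw [Real.norm_eq_abs]
      exact (abs_sub _ _).trans (by linarith)
    · simp
  have hGi : ∀ h, Integrable (G h) μ := fun h =>
    Integrable.of_bound (hGm h).aestronglyMeasurable 2 (Eventually.of_forall (hGb h))
  refine ⟨ρ, hρ0, fun h => ∫ z, G h z ∂μ, ?_, ?_, ?_⟩
  · intro h0 hh0
    have hh0' : ‖h0‖ < ρ := by simpa using hh0
    refine ContinuousAt.continuousWithinAt ?_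
    refine continuousAt_of_dominated (bound := fun _ => 2)
      (Eventually.of_forall fun h => (hGm h).aestronglyMeasurable)
      (Eventually.of_forall fun h => Eventually.of_forall (hGb h)) (integrable_const _) ?_
    have : ∀ᵐ z ∂μ, z ≠ -h0 := by simp [ae_iff]
    filter_upwards [this] with z hz
    by_cases hzW : z ∈ W
    · simp only [hG, Set.indicator_of_mem hzW]
      refine continuousAt_const.sub ?_
      have hc : ContinuousAt f (z + h0) := by
        refine hfc _ (hcov _ ?_ ?_)
        · have := norm_add_le z h0; have := (memW z).mp hzW; linarith
        · intro h; exact hz (eq_neg_of_add_eq_zero_left h)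
      exact ContinuousAt.comp (f := fun h => z + h) hc (by fun_prop)
    · simp only [hG, Set.indicator_of_notMem hzW]; exact continuousAt_const
  · intro h h' hh hh'
    have e1 : ∫ z, G h' z ∂μ = ∫ z, W.indicator (fun z => f (z + h) - f (z + h + h')) z ∂μ := by
      rw [← integral_add_right_eq_self (G h') h]
      refine integral_congr_ae (Eventually.of_forall fun z => ?_)
      simp only [hG]
      by_cases h1 : z + h ∈ W <;> by_cases h2 : z ∈ W
      · rw [Set.indicator_of_mem h1, Set.indicator_of_mem h2]
      · rw [Set.indicator_of_mem h1, Set.indicator_of_notMem h2]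
        refine hfQ _ ⟨?_, ?_⟩ _ hh'
        · rw [memW] at h2; have := norm_sub_norm_le z (-h); rw [norm_neg, sub_neg_eq_add] at this
          linarith
        · rw [memW] at h1; linarith
      · rw [Set.indicator_of_notMem h1, Set.indicator_of_mem h2]
        refine (hfQ _ ⟨?_, ?_⟩ _ hh').symm
        · rw [memW] at h1; linarith
        · rw [memW] at h2; have := norm_add_le z h; linarith
      · rw [Set.indicator_of_notMem h1, Set.indicator_of_notMem h2]
    have e2 : Integrable (W.indicator (fun z => f (z + h) - f (z + h + h'))) μ := by
      refine Integrable.of_bound (C := 2) ?_ (Eventually.of_forall fun z => ?_)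
      · exact (((hfm.comp (measurable_add_const h)).sub (hfm.comp
          ((measurable_add_const h').comp (measurable_add_const h)))).indicator
            hWm).aestronglyMeasurable
      · simp only [Set.indicator]
        split_ifs
        · have := hfb (z + h); have := hfb (z + h + h')
          rw [Real.norm_eq_abs]
          exact (abs_sub _ _).trans (by linarith)
        · simp
    show ∫ z, G (h + h') z ∂μ = ∫ z, G h z ∂μ + ∫ z, G h' z ∂μ
    rw [e1, ← integral_add (hGi h) e2]
    refine integral_congr_ae (Eventually.of_forall fun z => ?_)
    simp only [hG]
    by_cases h2 : z ∈ W
    · simp only [Set.indicator_of_mem h2, add_assoc]; ring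
    · simp only [Set.indicator_of_notMem h2, add_zero]
  · intro h hne hh
    set R : Set H := {z | z ∈ W ∧ z ∈ A ∧ z + h ∈ B} with hR
    set L : Set H := {z | z ∈ W ∧ z ∈ B ∧ z + h ∈ A} with hL
    have hRo : IsOpen R := Metric.isOpen_ball.inter (hA.inter (hB.preimage (by fun_prop)))
    have hLo : IsOpen L := Metric.isOpen_ball.inter (hB.inter (hA.preimage (by fun_prop)))
    set S : Set H := (A ∩ (fun z => z + h) ⁻¹' A) ∪ (B ∩ (fun z => z + h) ⁻¹' B) ∪ {z | w < ‖z‖}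
      with hS
    have hSo : IsOpen S := ((hA.inter (hA.preimage (by fun_prop))).union
      (hB.inter (hB.preimage (by fun_prop)))).union (isOpen_lt (by fun_prop) (by fun_prop))
    have hRL : Disjoint R L := Set.disjoint_left.mpr fun z h1 h2 => hdl h1.2.1 h2.2.1
    have hRS : Disjoint R S := by
      refine Set.disjoint_left.mpr fun z h1 h2 => ?_
      rcases h2 with (h2 | h2) | h2
      · exact hdl h2.2 h1.2.2
      · exact hdl h1.2.1 h2.1
      · exact absurd ((memW z).mp h1.1) (not_lt.mpr (le_of_lt h2))
    have hLS : Disjoint L S := by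
      refine Set.disjoint_left.mpr fun z h1 h2 => ?_
      rcases h2 with (h2 | h2) | h2
      · exact hdl h2.1 h1.2.1
      · exact hdl h1.2.2 h2.2
      · exact absurd ((memW z).mp h1.1) (not_lt.mpr (le_of_lt h2))
    have hun : R ∪ L ∪ S = {0, -h}ᶜ := by
      ext z
      simp only [Set.mem_compl_iff, Set.mem_insert_iff, Set.mem_singleton_iff, not_or]
      constructor
      · intro hz
        constructor
        · rintro rfl
          rcases hz with (hz | hz) | (hz | hz) | hz
          · exact h0A hz.2.1
          · exact h0B hz.2.1
          · exact h0A hz.1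
          · exact h0B hz.1
          · rw [Set.mem_ofPred_eq, norm_zero] at hz; linarith
        · rintro rfl
          rcases hz with (hz | hz) | (hz | hz) | hz
          · exact h0B (by simpa using hz.2.2)
          · exact h0A (by simpa using hz.2.2)
          · exact h0A (by simpa using hz.2)
          · exact h0B (by simpa using hz.2)
          · rw [Set.mem_ofPred_eq, norm_neg] at hz; linarith
      · rintro ⟨hz0, hzh⟩
        by_cases hzw : w < ‖z‖
        · exact Or.inr (Or.inr hzw)
        push Not at hzw
        have a1 := hcov z (by linarith) hz0
        have a2 := hcov (z + h) (by have := norm_add_le z h; linarith)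
          (fun h => hzh (eq_neg_of_add_eq_zero_left h))
        by_cases hzQ : z ∈ Q
        · rcases a1 with a1 | a1
          · exact Or.inr (Or.inl (Or.inl ⟨a1, hk1 z hzQ a1 h (by linarith)⟩))
          · exact Or.inr (Or.inl (Or.inr ⟨a1, hk2 z hzQ a1 h (by linarith)⟩))
        have hzW : z ∈ W := by
          rw [memW]
          by_contra hc
          exact hzQ ⟨by linarith, by linarith⟩
        rcases a1 with a1 | a1 <;> rcases a2 with a2 | a2
        · exact Or.inr (Or.inl (Or.inl ⟨a1, a2⟩))
        · exact Or.inl (Or.inl ⟨hzW, a1, a2⟩)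
        · exact Or.inl (Or.inr ⟨hzW, a1, a2⟩)
        · exact Or.inr (Or.inl (Or.inr ⟨a1, a2⟩))
    have hintg : ∫ z, G h z ∂μ = μ.real R - μ.real L := by
      rw [← integral_indicator_one hRo.measurableSet, ← integral_indicator_one hLo.measurableSet,
        ← integral_sub]
      · have t1 : ∀ᵐ z ∂μ, z ≠ -h := by simp [ae_iff]
        have t2 : ∀ᵐ z ∂μ, z ≠ 0 := by simp [ae_iff]
        refine integral_congr_ae ?_
        filter_upwards [t1, t2] with z hz1 hz2
        simp only [hG]
        by_cases hzW : z ∈ W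
        · have a1 := hcov z (by have := (memW z).mp hzW; linarith) hz2
          have a2 := hcov (z + h) (by
            have := (memW z).mp hzW
            have := norm_add_le z h; linarith)
            (fun h => hz1 (eq_neg_of_add_eq_zero_left h))
          have b1 : z ∈ A → z ∉ B := fun h => hdl h
          have b2 : z + h ∈ A → z + h ∉ B := fun h => hdl h
          have c1 : z ∈ R ↔ (z ∈ A ∧ z + h ∈ B) := ⟨fun h => h.2, fun h => ⟨hzW, h⟩⟩
          have c2 : z ∈ L ↔ (z ∈ B ∧ z + h ∈ A) := ⟨fun h => h.2, fun h => ⟨hzW, h⟩⟩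
          have c3 : z ∈ B ↔ z ∉ A := ⟨fun h h' => b1 h' h, fun h => a1.resolve_left h⟩
          have c4 : z + h ∈ B ↔ z + h ∉ A := ⟨fun h h' => b2 h' h, fun h => a2.resolve_left h⟩
          simp only [Set.indicator, hf, c1, c2, c3, c4, hzW, if_true]
          by_cases d1 : z ∈ A <;> by_cases d2 : z + h ∈ A <;> simp [d1, d2]
        · have c1 : z ∉ R := fun h => hzW h.1
          have c2 : z ∉ L := fun h => hzW h.1
          simp [hzW, c1, c2]
      · exact (integrable_const (1 : ℝ)).indicator hRo.measurableSet
      · exact (integrable_const (1 : ℝ)).indicator hLo.measurableSet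
    have hnear : ∀ U V : Set H, IsOpen U → (0 : H) ∈ closure V → h ∈ U →
        ∃ z, z ∈ W ∧ z ∈ V ∧ z + h ∈ U := by
      intro U V hU hV hhU
      have : W ∩ (fun z => z + h) ⁻¹' U ∈ 𝓝 (0 : H) :=
        (Metric.isOpen_ball.inter (hU.preimage (by fun_prop))).mem_nhds
          ⟨by simpa [hW] using hw, by simpa using hhU⟩
      obtain ⟨z, hz, hzV⟩ := mem_closure_iff_nhds.mp hV _ this
      exact ⟨z, hz.1, hzV, hz.2⟩
    have hne' : R.Nonempty ∨ L.Nonempty := by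
      rcases hcov h (by linarith) hne with hhA | hhB
      · exact Or.inr (hnear A B hA hcB hhA)
      · exact Or.inl (hnear B A hB hcA hhB)
    have hpos : ∀ U : Set H, IsOpen U → U.Nonempty → 0 < μ.real U := by
      intro U hU hUn
      exact ENNReal.toReal_pos (hU.measure_pos μ hUn).ne' (measure_ne_top μ U)
    show ∫ z, G h z ∂μ ≠ 0
    rw [hintg]
    by_cases hRn : R.Nonempty <;> by_cases hLn : L.Nonempty
    · exact (three_pt μ 0 (-h) (neg_ne_zero.mpr hne) R L S hRo hLo hSo hRn hLn
        ⟨p, Or.inr (by rw [Set.mem_ofPred_eq]; linarith)⟩ hRL hRS hLS hun).elim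
    · rw [Set.not_nonempty_iff_eq_empty.mp hLn]; have := hpos R hRo hRn
      simp; linarith
    · rw [Set.not_nonempty_iff_eq_empty.mp hRn]; have := hpos L hLo hLn
      simp; linarith
    · tauto

theorem lam_exists (A B : Set H) (hA : IsOpen A) (hB : IsOpen B) (hAB : Disjoint A B)
    (hAn : A.Nonempty) (hBn : B.Nonempty) (hD : (A ∪ B)ᶜ.Finite) :
    ∃ ρ > 0, ∃ lam : H → ℝ, ContinuousOn lam (Metric.ball 0 ρ) ∧
      (∀ h h' : H, ‖h‖ < ρ → ‖h'‖ < ρ → lam (h + h') = lam h + lam h') ∧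
      (∀ h : H, h ≠ 0 → ‖h‖ < ρ → lam h ≠ 0) := by
  classical
  have hdl := Set.disjoint_left.mp hAB
  obtain ⟨a, ha⟩ := hAn
  obtain ⟨b, hb⟩ := hBn
  have hab : a ≠ b := by rintro rfl; exact hdl ha hb
  haveI : Nontrivial H := ⟨a, b, hab⟩
  letI : MeasurableSpace H := borel H
  haveI : BorelSpace H := ⟨rfl⟩
  have hdense : Dense (A ∪ B) := by
    have : Dense (((A ∪ B)ᶜ)ᶜ) := by
      simpa [Set.compl_eq_univ_sdiff] using dense_univ.sdiff_finite hD
    rwa [compl_compl] at this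
  obtain ⟨δ, hδA, hδB⟩ : ∃ δ, δ ∈ closure A ∧ δ ∈ closure B := by
    have hcl : closure A ∪ closure B = Set.univ := by
      rw [← closure_union]; exact hdense.closure_eq
    have := isPreconnected_closed_iff.mp (isPreconnected_univ (α := H)) (closure A) (closure B)
      isClosed_closure isClosed_closure hcl.ge ⟨a, trivial, subset_closure ha⟩
      ⟨b, trivial, subset_closure hb⟩
    obtain ⟨δ, -, h⟩ := this
    exact ⟨δ, h⟩
  have hδnA : δ ∉ A := fun h => by
    obtain ⟨z, hz1, hz2⟩ := mem_closure_iff.mp hδB A hA h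
    exact hdl hz1 hz2
  have hδnB : δ ∉ B := fun h => by
    obtain ⟨z, hz1, hz2⟩ := mem_closure_iff.mp hδA B hB h
    exact hdl hz2 hz1
  obtain ⟨q, hq⟩ := exists_ne δ
  have hfin : (((A ∪ B)ᶜ \ {δ}) ∪ {q}).Finite := (hD.subset Set.sdiff_subset).union (Set.finite_singleton _)
  have hnh : (((A ∪ B)ᶜ \ {δ}) ∪ {q})ᶜ ∈ 𝓝 δ := by
    refine hfin.isClosed.isOpen_compl.mem_nhds ?_
    rintro (h | h)
    · exact h.2 rfl
    · exact hq h.symm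
  obtain ⟨ε, hε, hball⟩ := Metric.mem_nhds_iff.mp hnh
  have hba : ∀ z : H, ‖z‖ < ε → z + δ ∉ (((A ∪ B)ᶜ \ {δ}) ∪ {q}) := by
    intro z hz
    exact hball (by simpa [dist_eq_norm] using hz)
  have hclo : ∀ U : Set H, δ ∈ closure U → (0 : H) ∈ closure ((fun z => z + δ) ⁻¹' U) := by
    intro U hU
    have := (Homeomorph.addRight δ).preimage_closure U
    have h2 : (0 : H) ∈ (Homeomorph.addRight δ) ⁻¹' closure U := by simpa using hU
    rw [this] at h2
    exact h2
  refine lam_zero (Measure.addHaar) ((fun z => z + δ) ⁻¹' A) ((fun z => z + δ) ⁻¹' B)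
    (hA.preimage (by fun_prop)) (hB.preimage (by fun_prop)) (hAB.preimage _) (ε / 4) (by positivity)
    ?_ (by simpa using hδnA) (by simpa using hδnB) (hclo A hδA) (hclo B hδB) (q - δ) ?_
  · intro z hz hz0
    have := hba z (by linarith)
    by_contra hc
    exact this (Or.inl ⟨hc, by simpa using hz0⟩)
  · by_contra hc
    push Not at hc
    exact hba (q - δ) (by linarith) (Or.inr (by simp))

end lam

end filePT2

section filePT3
open Set Filter Topology

section psi
variable {H : Type} [NormedAddCommGroup H] [CompactSpace H] [ConnectedSpace H]

theorem psi_exists [Nontrivial H] (ρ : ℝ) (hρ : 0 < ρ) (lam : H → ℝ)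
    (hcont : ContinuousOn lam (Metric.ball 0 ρ))
    (hadd : ∀ h h' : H, ‖h‖ < ρ → ‖h'‖ < ρ → lam (h + h') = lam h + lam h')
    (hnz : ∀ h : H, h ≠ 0 → ‖h‖ < ρ → lam h ≠ 0) :
    ∃ ψ : ℝ →+ H, Continuous ψ ∧ Function.Surjective ψ ∧ ∀ t, ψ t = 0 ↔ ∃ k : ℤ, t = k := by
  classical
  have l0 : lam 0 = 0 := by
    have := hadd 0 0 (by simpa) (by simpa)
    rw [add_zero] at this; linarith
  have lneg : ∀ h : H, ‖h‖ < ρ → lam (-h) = - lam h := by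
    intro h hh
    have := hadd h (-h) hh (by simpa)
    rw [add_neg_cancel, l0] at this; linarith
  have linj : ∀ h h' : H, ‖h‖ < ρ → ‖h'‖ < ρ → ‖h‖ + ‖h'‖ < ρ → lam h = lam h' → h = h' := by
    intro h h' hh hh' hs he
    by_contra hne
    refine hnz (h - h') (sub_ne_zero.mpr hne) ((norm_sub_le h h').trans_lt hs) ?_
    rw [sub_eq_add_neg, hadd h (-h') hh (by simpa), lneg h' hh', he]; ring
  obtain ⟨q, hq⟩ := exists_ne (0 : H)
  have hq0 : 0 < ‖q‖ := norm_pos_iff.mpr hq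
  -- values attained
  have hatt : ∀ s : ℝ, 0 < s → s < ρ → s < ‖q‖ → ∃ c > 0, ∀ τ, |τ| < c →
      ∃ h : H, ‖h‖ < s ∧ lam h = τ := by
    intro s hs hsρ hsq
    have hsub : Metric.closedBall (0 : H) s ⊆ Metric.ball 0 ρ := Metric.closedBall_subset_ball hsρ
    have hcs : ContinuousOn (fun h => |lam h|) (Metric.closedBall 0 s) :=
      (hcont.mono hsub).abs
    obtain ⟨c, hc, hcl⟩ : ∃ c > 0, ∀ h : H, ‖h‖ = s → c ≤ |lam h| := by
      have hcomp : IsCompact (Metric.sphere (0 : H) s) := isCompact_sphere _ _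
      by_cases hne : (Metric.sphere (0 : H) s).Nonempty
      · obtain ⟨z, hz, hmin⟩ := hcomp.exists_isMinOn hne (hcs.mono Metric.sphere_subset_closedBall)
        have hzs : ‖z‖ = s := by simpa using hz
        refine ⟨|lam z|, abs_pos.mpr (hnz z ?_ (by linarith)), fun h hh => ?_⟩
        · rintro rfl; rw [norm_zero] at hzs; linarith
        · exact hmin (by simpa using hh)
      · refine ⟨1, one_pos, fun h hh => ?_⟩
        exact (hne ⟨h, by simpa using hh⟩).elim
    have hpos : ∀ τ, 0 < τ → τ < c → ∃ h : H, ‖h‖ < s ∧ lam h = τ := by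
      intro τ hτ hτc
      by_contra hno
      push Not at hno
      have hno' : ∀ h : H, ‖h‖ < s → |lam h| ≠ τ := by
        intro h hh he
        rcases abs_choice (lam h) with h1 | h1
        · exact hno h hh (by linarith)
        · exact hno (-h) (by simpa) (by rw [lneg h (by linarith)]; linarith)
      set V : Set H := {h | ‖h‖ ≤ s ∧ |lam h| ≤ τ} with hV
      have hVcl : IsClosed V := by
        have : V = Metric.closedBall 0 s ∩ (fun h => |lam h|) ⁻¹' Set.Iic τ := by
          ext h; simp [hV]
        rw [this]
        exact hcs.preimage_isClosed_of_isClosed Metric.isClosed_closedBall isClosed_Iic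
      have hVop : IsOpen V := by
        have : V = Metric.ball 0 s ∩ (fun h => |lam h|) ⁻¹' Set.Iio τ := by
          ext h
          simp only [hV, Set.mem_ofPred_eq, Set.mem_inter_iff, mem_ball_zero_iff, Set.mem_preimage,
            Set.mem_Iio]
          constructor
          · rintro ⟨h1, h2⟩
            have h3 : ‖h‖ < s := by
              refine lt_of_le_of_ne h1 fun h4 => ?_
              have := hcl h h4; linarith
            exact ⟨h3, lt_of_le_of_ne h2 (hno' h h3)⟩
          · rintro ⟨h1, h2⟩; exact ⟨h1.le, h2.le⟩
        rw [this]
        exact (hcs.mono Metric.ball_subset_closedBall).isOpen_inter_preimage Metric.isOpen_ball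
          isOpen_Iio
      have huniv : V = Set.univ := IsClopen.eq_univ ⟨hVcl, hVop⟩ ⟨0, by simp [hV, l0, hs.le, hτ.le]⟩
      have : q ∈ V := by rw [huniv]; trivial
      exact absurd this.1 (not_le.mpr hsq)
    refine ⟨c, hc, fun τ hτ => ?_⟩
    rcases lt_trichotomy τ 0 with h | h | h
    · rw [abs_of_neg h] at hτ
      obtain ⟨z, hz1, hz2⟩ := hpos (-τ) (by linarith) hτ
      exact ⟨-z, by simpa, by rw [lneg z (by linarith), hz2]; ring⟩
    · exact ⟨0, by simpa, by rw [l0, h]⟩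
    · rw [abs_of_pos h] at hτ
      exact hpos τ h hτ
  set s := min ρ ‖q‖ / 4 with hs
  have hm0 : 0 < min ρ ‖q‖ := lt_min hρ hq0
  have hm1 := min_le_left ρ ‖q‖
  have hm2 := min_le_right ρ ‖q‖
  obtain ⟨c, hc, hcg⟩ := hatt s (by linarith) (by linarith) (by linarith)
  have hg' : ∀ τ : ℝ, ∃ h : H, |τ| < c → ‖h‖ < s ∧ lam h = τ := by
    intro τ
    by_cases h : |τ| < c
    · obtain ⟨z, hz⟩ := hcg τ h; exact ⟨z, fun _ => hz⟩
    · exact ⟨0, fun h' => (h h').elim⟩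
  choose g hg using hg'
  have guniq : ∀ τ h, |τ| < c → ‖h‖ ≤ 2 * s → lam h = τ → h = g τ := by
    intro τ h hτ hh he
    have := hg τ hτ
    refine linj h (g τ) (by linarith) (by linarith) (by linarith) (by rw [he, this.2])
  have gadd : ∀ τ τ', |τ| < c → |τ'| < c → |τ + τ'| < c → g (τ + τ') = g τ + g τ' := by
    intro τ τ' h1 h2 h3
    have a1 := hg τ h1
    have a2 := hg τ' h2
    refine (guniq _ _ h3 ?_ ?_).symm
    · have := norm_add_le (g τ) (g τ'); linarith
    · rw [hadd _ _ (by linarith) (by linarith), a1.2, a2.2]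
  have g0 : g 0 = 0 := (guniq 0 0 (by simpa) (by simp; linarith) l0).symm
  have gsmul : ∀ (u : ℝ) (k : ℕ), |(k : ℝ) * u| < c → g (k * u) = k • g u := by
    intro u k
    induction k with
    | zero => intro _; simp [g0]
    | succ k ih =>
      intro hk
      have hk' : ((k + 1 : ℕ) : ℝ) * |u| < c := by rwa [abs_mul, Nat.abs_cast] at hk
      push_cast at hk'
      have hu := abs_nonneg u
      have hkn : (0 : ℝ) ≤ k := Nat.cast_nonneg k
      have hku : (0 : ℝ) ≤ k * |u| := mul_nonneg hkn hu
      have h1 : |(k : ℝ) * u| < c := by rw [abs_mul, Nat.abs_cast]; nlinarith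
      have h2 : |u| < c := by nlinarith
      have e : ((k + 1 : ℕ) : ℝ) * u = k * u + u := by push_cast; ring
      rw [e] at hk ⊢
      rw [gadd _ _ h1 h2 hk, ih h1, succ_nsmul]
  have absdiv : ∀ (t : ℝ) (n : ℕ), 0 < n → |t| < c * n → |t / n| < c := by
    intro t n hn ht
    have : (0 : ℝ) < n := by exact_mod_cast hn
    rw [abs_div, Nat.abs_cast, div_lt_iff₀ this]; exact ht
  have gwd1 : ∀ (t : ℝ) (n m : ℕ), 0 < n → 0 < m → |t| < c * n →
      n • g (t / n) = (n * m) • g (t / (n * m)) := by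
    intro t n m hn hm ht
    have hn' : (n : ℝ) ≠ 0 := by positivity
    have hm' : (m : ℝ) ≠ 0 := by positivity
    have e : t / n = m * (t / (n * m)) := by field_simp
    have := gsmul (t / (n * m)) m (by rw [← e]; exact absdiv t n hn ht)
    rw [← e] at this
    rw [this, mul_nsmul']
  have gwd : ∀ (t : ℝ) (n m : ℕ), 0 < n → 0 < m → |t| < c * n → |t| < c * m →
      n • g (t / n) = m • g (t / m) := by
    intro t n m hn hm h1 h2
    rw [gwd1 t n m hn hm h1, gwd1 t m n hm hn h2, mul_comm n m, mul_comm (n : ℝ) m]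
  have hN : ∀ t : ℝ, ∃ n : ℕ, 0 < n ∧ |t| < c * n := by
    intro t
    obtain ⟨n, hn⟩ := exists_nat_gt (|t| / c)
    have hn0 : (0 : ℝ) < n := lt_of_le_of_lt (by positivity) hn
    refine ⟨n, by exact_mod_cast hn0, ?_⟩
    rw [div_lt_iff₀ hc] at hn; linarith
  choose N hN0 hN1 using hN
  set ps : ℝ → H := fun t => N t • g (t / N t) with hps
  have pseq : ∀ (t : ℝ) (n : ℕ), 0 < n → |t| < c * n → ps t = n • g (t / n) := fun t n hn ht =>
    gwd t _ n (hN0 t) hn (hN1 t) ht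
  have psadd : ∀ t u, ps (t + u) = ps t + ps u := by
    intro t u
    set n := N t + N u + N (t + u) with hn
    have hn0 : 0 < n := by have := hN0 t; omega
    have hle : ∀ v, N v ≤ n → |v| < c * n := by
      intro v hv
      refine (hN1 v).trans_le ?_
      have : (N v : ℝ) ≤ n := by exact_mod_cast hv
      nlinarith
    have h1 := hle t (by omega)
    have h2 := hle u (by omega)
    have h3 := hle (t + u) (by omega)
    rw [pseq t n hn0 h1, pseq u n hn0 h2, pseq (t + u) n hn0 h3, ← nsmul_add, add_div, gadd]
    · exact absdiv t n hn0 h1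
    · exact absdiv u n hn0 h2
    · rw [← add_div]; exact absdiv _ n hn0 h3
  set ψ : ℝ →+ H := AddMonoidHom.mk' ps psadd with hψ
  have ψg : ∀ t, |t| < c → ψ t = g t := by
    intro t ht
    have := pseq t 1 one_pos (by simpa using ht)
    rw [Nat.cast_one, div_one, one_smul] at this
    exact this
  have hψc : Continuous ψ := by
    refine continuous_of_continuousAt_zero ψ ?_
    rw [Metric.continuousAt_iff]
    intro ε hε
    obtain ⟨c', hc', hat⟩ := hatt (min ε s) (lt_min hε (by linarith))
      ((min_le_right _ _).trans_lt (by linarith)) ((min_le_right _ _).trans_lt (by linarith))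
    refine ⟨min c c', lt_min hc hc', fun {t} ht => ?_⟩
    rw [Real.dist_eq, sub_zero] at ht
    have ht1 := ht.trans_le (min_le_left _ _)
    have ht2 := ht.trans_le (min_le_right _ _)
    obtain ⟨h, hh, he⟩ := hat t ht2
    have h1 := hh.trans_le (min_le_left _ _)
    have h2 := hh.trans_le (min_le_right _ _)
    have := guniq t h ht1 (by linarith) he
    rw [map_zero, dist_zero_right, ψg t ht1, ← this]
    exact h1
  -- small elements lie in the image of small reals
  have hsmall : ∀ c1 > 0, ∃ ε > 0, ∀ h : H, ‖h‖ < ε → ∃ t, |t| < c1 ∧ ψ t = h := by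
    intro c1 hc1
    have hca : ContinuousAt lam 0 := hcont.continuousAt (Metric.ball_mem_nhds _ hρ)
    obtain ⟨ε, hε, hb⟩ := Metric.continuousAt_iff.mp hca (min c c1) (lt_min hc hc1)
    refine ⟨min ε s, lt_min hε (by linarith), fun h hh => ?_⟩
    have h1 := hh.trans_le (min_le_left _ _)
    have h2 := hh.trans_le (min_le_right _ _)
    have := hb (x := h) (by simpa using h1)
    rw [l0, Real.dist_eq, sub_zero] at this
    have h3 := this.trans_le (min_le_left _ _)
    refine ⟨lam h, this.trans_le (min_le_right _ _), ?_⟩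
    rw [ψg _ h3]
    exact (guniq _ h h3 (by linarith) rfl).symm
  have hsurj : Function.Surjective ψ := by
    obtain ⟨ε, hε, hb⟩ := hsmall 1 one_pos
    have hmem : (ψ.range : Set H) ∈ 𝓝 (0 : H) := by
      refine Filter.mem_of_superset (Metric.ball_mem_nhds 0 hε) fun h hh => ?_
      obtain ⟨t, -, ht⟩ := hb h (by simpa using hh)
      exact ⟨t, ht⟩
    have hop : IsOpen (ψ.range : Set H) := AddSubgroup.isOpen_of_mem_nhds _ hmem
    have hcl : IsClosed (ψ.range : Set H) := AddSubgroup.isClosed_of_isOpen _ hop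
    have := IsClopen.eq_univ ⟨hcl, hop⟩ ⟨0, ψ.range.zero_mem⟩
    intro h
    have : h ∈ (ψ.range : Set H) := by rw [this]; trivial
    exact this
  have hker : ∀ t, |t| < c → ψ t = 0 → t = 0 := by
    intro t ht h0
    rw [ψg t ht] at h0
    have := (hg t ht).2
    rw [h0, l0] at this; exact this.symm
  obtain ⟨t0, ht0, ht0'⟩ : ∃ t, t ≠ 0 ∧ ψ t = 0 := by
    obtain ⟨ε, hε, hb⟩ := hsmall (c / 2) (by positivity)
    obtain ⟨y, φ, hφ, hlim⟩ := CompactSpace.tendsto_subseq (fun n : ℕ => ψ (n * c))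
    obtain ⟨M, hM⟩ := Metric.cauchySeq_iff.mp hlim.cauchySeq ε hε
    have h1 := hM (M + 1) (by omega) M le_rfl
    simp only [Function.comp, dist_eq_norm] at h1
    rw [← map_sub] at h1
    obtain ⟨t, ht, hte⟩ := hb _ h1
    refine ⟨(φ (M + 1) : ℝ) * c - φ M * c - t, ?_, by rw [map_sub, hte, sub_self]⟩
    have h2 : φ M + 1 ≤ φ (M + 1) := hφ (Nat.lt_succ_self M)
    have h3 : (φ M : ℝ) + 1 ≤ φ (M + 1) := by exact_mod_cast h2
    have h4 := (abs_lt.mp ht).2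
    have : 0 < (φ (M + 1) : ℝ) * c - φ M * c - t := by nlinarith
    exact this.ne'
  have hdis : Disjoint (ψ.ker : Set ℝ) (Set.Ioo 0 c) := by
    rw [Set.disjoint_left]
    intro t ht1 ht2
    have := hker t (by rw [abs_of_pos ht2.1]; exact ht2.2) ht1
    linarith [ht2.1]
  obtain ⟨b, hb⟩ := AddSubgroup.cyclic_of_isolated_zero hc hdis
  have hbk : ∀ t, ψ t = 0 ↔ ∃ k : ℤ, k • b = t := by
    intro t
    rw [← AddMonoidHom.mem_ker, hb, AddSubgroup.mem_closure_singleton]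
  have hb0 : b ≠ 0 := by
    rintro rfl
    obtain ⟨k, hk⟩ := (hbk t0).mp ht0'
    rw [smul_zero] at hk; exact ht0 hk.symm
  refine ⟨ψ.comp (AddMonoidHom.mulLeft b), ?_, ?_, ?_⟩
  · exact hψc.comp (continuous_const.mul continuous_id)
  · intro h
    obtain ⟨t, ht⟩ := hsurj h
    refine ⟨t / b, ?_⟩
    simp only [AddMonoidHom.comp_apply, AddMonoidHom.coe_mulLeft]
    rw [mul_div_cancel₀ _ hb0, ht]
  · intro t
    simp only [AddMonoidHom.comp_apply, AddMonoidHom.coe_mulLeft]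
    rw [hbk]
    refine exists_congr fun k => ?_
    rw [zsmul_eq_mul, mul_comm]
    constructor
    · intro h; exact (mul_left_cancel₀ hb0 h).symm
    · rintro rfl; rfl

end psi

end filePT3

section filePH
open Set Filter Topology

section coding
variable {H : Type} [NormedAddCommGroup H]

theorem coe_T1_eq (s t : ℝ) : (s : T1) = (t : T1) ↔ ∃ k : ℤ, s - t = k := by
  rw [QuotientAddGroup.eq_iff_sub_mem, AddSubgroup.mem_zmultiples_iff]
  constructor
  · rintro ⟨k, hk⟩; exact ⟨k, by rw [← hk]; simp⟩
  · rintro ⟨k, hk⟩; exact ⟨k, by rw [hk]; simp⟩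

theorem coding_lemma (ψ : ℝ →+ H) (hψ : Continuous ψ)
    (hker : ∀ t, ψ t = 0 ↔ ∃ k : ℤ, t = k) (β : ℝ) (hβ : Irrational β)
    (A B : Set H) (hA : IsOpen A) (hB : IsOpen B) (hAB : Disjoint A B) (hD : (A ∪ B)ᶜ.Finite)
    (y : Seq2) (hyA : ∀ n : ℕ, ψ (n * β) ∈ A → y n = 1) (hyB : ∀ n : ℕ, ψ (n * β) ∈ B → y n = 0) :
    (∃ c : Fin 2, ∀ n : ℕ, y n = c) ∨ CircleRotationCoding β y := by
  classical
  have hψeq : ∀ s t : ℝ, (s : T1) = (t : T1) → ψ s = ψ t := by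
    intro s t h
    rw [coe_T1_eq] at h
    rw [← sub_eq_zero, ← map_sub, hker]; exact h
  have hIco : ∀ s t : ℝ, s ∈ Set.Ico (0 : ℝ) 1 → t ∈ Set.Ico (0 : ℝ) 1 → (∃ k : ℤ, s - t = k) →
      s = t := by
    rintro s t ⟨hs0, hs1⟩ ⟨ht0, ht1⟩ ⟨k, hk⟩
    have h1 : (k : ℝ) < 1 := by linarith
    have h2 : (-1 : ℝ) < k := by linarith
    have h3 : k < 1 := by exact_mod_cast h1
    have h4 : -1 < k := by exact_mod_cast h2
    have : k = 0 := by omega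
    rw [this] at hk; simp at hk; linarith
  have hPfin : {t : ℝ | t ∈ Set.Ico (0 : ℝ) 1 ∧ ψ t ∈ (A ∪ B)ᶜ}.Finite := by
    refine Set.Finite.of_finite_image (f := ψ) (hD.subset ?_) ?_
    · rintro _ ⟨t, ht, rfl⟩; exact ht.2
    · intro s hs t ht he
      refine hIco s t hs.1 ht.1 ?_
      rw [← hker, map_sub, he, sub_self]
  set F : Finset ℝ := insert 0 hPfin.toFinset with hF
  have hF01 : ∀ p ∈ F, p ∈ Set.Ico (0 : ℝ) 1 := by
    intro p hp
    rw [hF, Finset.mem_insert] at hp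
    rcases hp with rfl | hp
    · simp
    · exact ((Set.Finite.mem_toFinset _).mp hp).1
  have h0F : (0 : ℝ) ∈ F := Finset.mem_insert_self _ _
  have hnF : ∀ t ∈ Set.Ico (0 : ℝ) 1, t ∉ F → ψ t ∈ A ∪ B := by
    intro t ht htF
    by_contra hc
    exact htF (Finset.mem_insert_of_mem ((Set.Finite.mem_toFinset _).mpr ⟨ht, hc⟩))
  set nx : ℝ → ℝ := fun p => (insert 1 (F.filter (fun q => p < q))).min'
    (Finset.insert_nonempty _ _) with hnx
  have nx_le1 : ∀ p, nx p ≤ 1 := fun p => Finset.min'_le _ _ (Finset.mem_insert_self _ _)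
  have nx_le : ∀ p, ∀ q ∈ F, p < q → nx p ≤ q := fun p q hq hpq =>
    Finset.min'_le _ _ (Finset.mem_insert_of_mem (Finset.mem_filter.mpr ⟨hq, hpq⟩))
  have lt_nx : ∀ p t, t < 1 → (∀ q ∈ F, p < q → t < q) → t < nx p := by
    intro p t ht h
    rw [hnx, Finset.lt_min'_iff]
    intro q hq
    rcases Finset.mem_insert.mp hq with rfl | hq
    · exact ht
    · exact h q (Finset.mem_filter.mp hq).1 (Finset.mem_filter.mp hq).2
  have gapF : ∀ p t, t ∈ Set.Ioo p (nx p) → t ∉ F := by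
    intro p t ht htF
    have := nx_le p t htF ht.1
    exact absurd ht.2 (not_lt.mpr this)
  have gap01 : ∀ p ∈ F, ∀ t, t ∈ Set.Ioo p (nx p) → t ∈ Set.Ico (0 : ℝ) 1 := by
    intro p hp t ht
    exact ⟨(hF01 p hp).1.trans ht.1.le, ht.2.trans_le (nx_le1 p)⟩
  let J : F ⊕ F → Set ℝ := Sum.elim (fun p => {(p : ℝ)}) (fun p => Set.Ioo (p : ℝ) (nx p))
  have hJ01 : ∀ i, ∀ t ∈ J i, t ∈ Set.Ico (0 : ℝ) 1 := by
    rintro (p | p) t ht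
    · rw [show t = p from ht]; exact hF01 p p.2
    · exact gap01 p p.2 t ht
  have hJdis : ∀ i j, ∀ t, t ∈ J i → t ∈ J j → i = j := by
    rintro (p | p) (q | q) t h1 h2
    · have e1 : t = p := h1
      have e2 : t = q := h2
      congr 1; exact Subtype.ext (e1.symm.trans e2)
    · have e1 : t = p := h1
      exact (gapF q t h2 (by rw [e1]; exact p.2)).elim
    · have e1 : t = q := h2
      exact (gapF p t h1 (by rw [e1]; exact q.2)).elim
    · have g1 : t ∈ Set.Ioo (p : ℝ) (nx p) := h1
      have g2 : t ∈ Set.Ioo (q : ℝ) (nx q) := h2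
      rcases lt_trichotomy (p : ℝ) q with h | h | h
      · have := nx_le p q q.2 h; linarith [g1.2, g2.1]
      · congr 1; exact Subtype.ext h
      · have := nx_le q p p.2 h; linarith [g2.2, g1.1]
  have hJcov : ∀ t ∈ Set.Ico (0 : ℝ) 1, ∃ i, t ∈ J i := by
    intro t ht
    by_cases htF : t ∈ F
    · exact ⟨Sum.inl ⟨t, htF⟩, rfl⟩
    · have hne : (F.filter (fun q => q < t)).Nonempty := by
        refine ⟨0, Finset.mem_filter.mpr ⟨h0F, lt_of_le_of_ne ht.1 ?_⟩⟩
        rintro rfl; exact htF h0F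
      have hmem := Finset.max'_mem _ hne
      set p := (F.filter (fun q => q < t)).max' hne with hp
      obtain ⟨hp1, hp2⟩ := Finset.mem_filter.mp hmem
      refine ⟨Sum.inr ⟨p, hp1⟩, hp2, lt_nx p t ht.2 fun q hq hpq => ?_⟩
      by_contra hc
      push Not at hc
      have hqt : q < t := lt_of_le_of_ne hc (by rintro rfl; exact htF hq)
      have := Finset.le_max' (F.filter (fun q => q < t)) q (Finset.mem_filter.mpr ⟨hq, hqt⟩)
      linarith
  have hgapAB : ∀ p ∈ F, ψ '' Set.Ioo p (nx p) ⊆ A ∨ ψ '' Set.Ioo p (nx p) ⊆ B := by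
    intro p hp
    refine (isPreconnected_Ioo.image ψ hψ.continuousOn).subset_or_subset hA hB hAB ?_
    rintro _ ⟨t, ht, rfl⟩
    exact hnF t (gap01 p hp t ht) (gapF p t ht)
  let I : F ⊕ F → Set T1 := fun i => (fun r : ℝ => (r : T1)) '' J i
  let a : F ⊕ F → Fin 2 := Sum.elim
    (fun p => if h : ∃ n : ℕ, (((n : ℝ) * β : ℝ) : T1) = ((p : ℝ) : T1) then y h.choose else 0)
    (fun p => if ψ '' Set.Ioo (p : ℝ) (nx p) ⊆ A then 1 else 0)
  have hnβ : ∀ n m : ℕ, (((n : ℝ) * β : ℝ) : T1) = (((m : ℝ) * β : ℝ) : T1) → n = m := by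
    intro n m h
    rw [coe_T1_eq] at h
    obtain ⟨k, hk⟩ := h
    by_contra hne
    have hz : ((n : ℤ) - m) ≠ 0 := by omega
    have hirr : Irrational ((((n : ℤ) - m : ℤ) : ℝ) * β) := hβ.intCast_mul hz
    apply hirr.ne_int k
    rw [← hk]; push_cast; ring
  have hcode : ∀ (n : ℕ) (i : F ⊕ F), (((n : ℝ) * β : ℝ) : T1) ∈ I i → y n = a i := by
    rintro n (p | p) ⟨t, ht, hte⟩
    · have e1 : t = p := ht
      have hex : ∃ n : ℕ, (((n : ℝ) * β : ℝ) : T1) = ((p : ℝ) : T1) := ⟨n, by rw [← e1]; exact hte.symm⟩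
      have h2 : a (Sum.inl p) = y hex.choose := by
        simp only [a, Sum.elim_inl]; rw [dif_pos hex]
      rw [h2]
      congr 1
      refine hnβ _ _ ?_
      rw [hex.choose_spec, ← e1]; exact hte.symm
    · have hte' : ψ t = ψ (n * β) := hψeq _ _ hte
      have ht' : ψ t ∈ ψ '' Set.Ioo (p : ℝ) (nx p) := ⟨t, ht, rfl⟩
      simp only [a, Sum.elim_inr]
      split_ifs with h
      · exact hyA n (by rw [← hte']; exact h ht')
      · have h3 := (hgapAB p p.2).resolve_left h
        exact hyB n (by rw [← hte']; exact h3 ht')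
  have hIcov : ∀ q : T1, ∃ i, q ∈ I i := by
    intro q
    obtain ⟨t, rfl⟩ := QuotientAddGroup.mk_surjective q
    obtain ⟨i, hi⟩ := hJcov (Int.fract t) ⟨Int.fract_nonneg t, Int.fract_lt_one t⟩
    refine ⟨i, Int.fract t, hi, ?_⟩
    show ((Int.fract t : ℝ) : T1) = (t : T1)
    rw [coe_T1_eq]
    exact ⟨-⌊t⌋, by rw [Int.fract]; push_cast; ring⟩
  by_cases hall : ∀ i j, a i = a j
  · left
    refine ⟨a (Sum.inl ⟨0, h0F⟩), fun n => ?_⟩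
    obtain ⟨i, hi⟩ := hIcov (((n : ℝ) * β : ℝ) : T1)
    rw [hcode n i hi]; exact hall _ _
  · right
    let e := Fintype.equivFin (F ⊕ F)
    refine ⟨Fintype.card (F ⊕ F), Fintype.card_pos_iff.mpr ⟨Sum.inl ⟨0, h0F⟩⟩,
      fun i => I (e.symm i), fun i => a (e.symm i), ?_, ?_, ?_, ?_, ?_⟩
    · intro i
      show IsArc (I (e.symm i))
      rcases e.symm i with p | p
      · refine ⟨p, p, by simp, Or.inl ?_⟩
        rw [Set.Icc_self]; rfl
      · refine ⟨p, nx p, ?_, Or.inr (Or.inr (Or.inr rfl))⟩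
        have := nx_le1 p; have := (hF01 p p.2).1; linarith
    · intro i j hij
      rw [Set.disjoint_left]
      rintro _ ⟨s, hs, rfl⟩ ⟨t, ht, hst⟩
      have hts : t = s := hIco t s (hJ01 _ t ht) (hJ01 _ s hs) ((coe_T1_eq t s).mp hst)
      subst hts
      exact hij (e.symm.injective (hJdis _ _ t hs ht))
    · rw [Set.eq_univ_iff_forall]
      intro q
      obtain ⟨i, hi⟩ := hIcov q
      exact Set.mem_iUnion.mpr ⟨e i, by simpa using hi⟩
    · intro h
      apply hall
      intro i j
      have := h (e i) (e j)
      simpa using this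
    · intro n i hi
      exact hcode n _ hi

end coding

end filePH

/-- structure of recurrent, nonperiodic sequences with non-superlinear
maximal pattern complexity. -/
theorem stmt3 (x : Seq2) (hrec : Recurrent x) (hper : ¬ Periodic x)
    (hnsl : ∃ C : ℝ, ∀ N : ℕ, ∃ n : ℕ, N ≤ n ∧ (pstar x n : ℝ) ≤ C * n) :
    UniformlyRecurrent x ∧
      ((∃ K : ℕ, 1 ≤ K ∧ ∃ β : ℝ, Irrational β ∧
          ∀ j < K, (∃ c : Fin 2, ∀ n : ℕ, x (j + K * n) = c) ∨
            CircleRotationCoding β (fun n => x (j + K * n))) ∨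
       (∃ m : ℕ, 1 ≤ m ∧ ∃ z : Seq2, MHoleToeplitz m z ∧ x ∈ orbitClosure z)) := by
  have hN := nsl_of_pstar x hnsl
  have hur := unif_rec hrec hN
  obtain ⟨C, hext⟩ := ext_of_nsl x hN
  refine ⟨hur, ?_⟩
  rcases dichotomy hrec hur hper hext with h | ⟨K, hK, ⟨S1, hS1⟩, hgen⟩
  · exact Or.inr h
  left
  obtain ⟨H, _, _, ι, hd, hinj, hn⟩ := group_exists hur hper hext K hK
  haveI hpre : PreconnectedSpace H := conn_H ι hur hper hext hK S1 hS1 hgen hd hn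
  haveI : ConnectedSpace H := { toNonempty := ⟨0⟩ }
  have hopen : ∀ j a, IsOpen (FF ι x K j a)ᶜ := fun j a => isClosed_closure.isOpen_compl
  have hdisj : ∀ j, Disjoint (FF ι x K j 0)ᶜ (FF ι x K j 1)ᶜ := by
    intro j
    rw [Set.disjoint_left]
    intro h h1 h2
    rcases FF_union ι hrec hur hper hext hK S1 hS1 hd hn j h with h3 | h3
    · exact h1 h3
    · exact h2 h3
  have hfin : ∀ j, ((FF ι x K j 0)ᶜ ∪ (FF ι x K j 1)ᶜ)ᶜ.Finite := by
    intro j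
    rw [Set.compl_union, compl_compl, compl_compl]
    exact D_finite ι hrec hur hper hext hK S1 hS1 hn j
  obtain ⟨j0, -, hne0, hne1⟩ := exists_j0 ι hrec hur hper hext hK S1 hS1 hinj hn
  haveI : Nontrivial H := by
    obtain ⟨a, ha⟩ := hne0
    obtain ⟨b, hb⟩ := hne1
    exact ⟨a, b, by rintro rfl; exact Set.disjoint_left.mp (hdisj j0) ha hb⟩
  obtain ⟨ρ, hρ, lam, h1, h2, h3⟩ := lam_exists _ _ (hopen j0 0) (hopen j0 1) (hdisj j0) hne0 hne1
    (hfin j0)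
  obtain ⟨ψ, hψc, hψs, hψk⟩ := psi_exists ρ hρ lam h1 h2 h3
  obtain ⟨β, hβ⟩ := hψs (ι 1)
  have hι : ∀ n : ℤ, ψ (n * β) = ι n := by
    intro n
    have e1 : (n : ℝ) * β = n • β := by simp
    have e2 : n = n • (1 : ℤ) := by simp
    rw [e1, map_zsmul, hβ, ← map_zsmul, ← e2]
  have hirr : Irrational β := by
    rintro ⟨q, hq⟩
    have h4 : ι q.den = 0 := by
      rw [← hι, hψk]
      refine ⟨q.num, ?_⟩
      rw [← hq]
      have := Rat.den_mul_eq_num q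
      have h5 : ((q.den : ℚ) * q : ℚ) = q.num := this
      exact_mod_cast h5
    rw [← map_zero ι] at h4
    have := hinj h4
    have h6 := q.den_pos
    omega
  refine ⟨K, hK, β, hirr, fun j hj => ?_⟩
  refine coding_lemma ψ hψc hψk β hirr (FF ι x K j 0)ᶜ (FF ι x K j 1)ᶜ (hopen j 0) (hopen j 1)
    (hdisj j) (hfin j) _ ?_ ?_
  · intro n hn1
    by_contra hc
    have hz : x (j + K * n) = 0 := fin2_ne_one hc
    refine hn1 (subset_closure ⟨n, hz, ?_⟩)
    have := hι n
    rw [← this]; push_cast; rfl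
  · intro n hn1
    by_contra hc
    have hz : x (j + K * n) = 1 := by
      have hc' : x (j + K * n) ≠ 0 := hc
      generalize x (j + K * n) = v at hc'
      revert hc'; revert v; decide
    refine hn1 (subset_closure ⟨n, hz, ?_⟩)
    have := hι n
    rw [← this]; push_cast; rfl
end
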